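/- arXiv:2001.00654 — 3 statements merged into one kernel-verified Lean document; each statement's English description precedes it below -/
import Mathlib

section
/- Let n ≥ 1. Then the following identity of polynomials in ℚ[t] holds: n! · Σ_{π ∈ 𝔦_n} 4^{pk(π)+1} t^{pk(π)+1} (1+t)^{n−1−2·pk(π)} = 2 Σ_{k=1}^{n} c_{n,k} · 2^k · A_k(t) (1−t)^{n−k}, where c_{n,k} is the number of permutations π of [n] such that no cycle of π has length divisible by 4 and π² has exactly k cycles (counting fixed points as cycles of length 1). (This is the formula (1/2)((1+t)/(1−t))^{n+1} I_n^{pk}(4t/(1+t)²) = Σ_{k=1}^n (c_{n,k}/n!) 2^k A_k(t)/(1−t)^{k+1}, where I_n^{pk}(t) = Σ_{π ∈ 𝔦_n} t^{pk(π)+1}, with denominators cleared; note 2·pk(π) ≤ n−1 for every π ∈ S_n.) -/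
open scoped Classical

noncomputable section

def oneLine (n : ℕ) (π : Equiv.Perm (Fin n)) (i : ℕ) : ℕ :=
  if h : 1 ≤ i ∧ i ≤ n then (π ⟨i - 1, by omega⟩).val + 1 else 0

def des (n : ℕ) (π : Equiv.Perm (Fin n)) : ℕ :=
  ((Finset.Icc 1 (n - 1)).filter fun i => oneLine n π (i + 1) < oneLine n π i).card

def pk (n : ℕ) (π : Equiv.Perm (Fin n)) : ℕ :=
  ((Finset.Icc 2 (n - 1)).filter fun i =>
    oneLine n π (i - 1) < oneLine n π i ∧ oneLine n π (i + 1) < oneLine n π i).card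

def lpk (n : ℕ) (π : Equiv.Perm (Fin n)) : ℕ :=
  ((Finset.Icc 1 (n - 1)).filter fun i =>
    oneLine n π (i - 1) < oneLine n π i ∧ oneLine n π (i + 1) < oneLine n π i).card

def pval (n : ℕ) (π : Equiv.Perm (Fin n)) : ℕ :=
  ((Finset.Icc 2 (n - 1)).filter fun i =>
    oneLine n π i < oneLine n π (i - 1) ∧ oneLine n π i < oneLine n π (i + 1)).card

def udr (n : ℕ) (π : Equiv.Perm (Fin n)) : ℕ := lpk n π + pval n π + 1

def fullCycleType (n : ℕ) (π : Equiv.Perm (Fin n)) : Multiset ℕ :=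
  π.cycleType + Multiset.replicate (n - π.support.card) 1

def numCycles (n : ℕ) (π : Equiv.Perm (Fin n)) : ℕ := Multiset.card (fullCycleType n π)

def numOddCycles (n : ℕ) (π : Equiv.Perm (Fin n)) : ℕ :=
  Multiset.card ((fullCycleType n π).filter fun p => p % 2 = 1)

def IsCyclicPerm (n : ℕ) (π : Equiv.Perm (Fin n)) : Prop :=
  fullCycleType n π = {n}

def cyclicSet (n : ℕ) : Finset (Equiv.Perm (Fin n)) :=
  Finset.univ.filter fun π => IsCyclicPerm n π

def invSet (n : ℕ) : Finset (Equiv.Perm (Fin n)) :=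
  Finset.univ.filter fun π => π ^ 2 = 1

def eulerianA (m : ℕ) : Polynomial ℚ :=
  ∑ π : Equiv.Perm (Fin m), Polynomial.X ^ (des m π + 1)

def peakP (m : ℕ) : Polynomial ℚ :=
  ∑ π : Equiv.Perm (Fin m), Polynomial.X ^ (pk m π + 1)

def leftPeakP (m : ℕ) : Polynomial ℚ :=
  ∑ π : Equiv.Perm (Fin m), Polynomial.X ^ (lpk m π)

def cnk (n k : ℕ) : ℕ :=
  (Finset.univ.filter fun π : Equiv.Perm (Fin n) =>
    (∀ p ∈ fullCycleType n π, ¬ (4 ∣ p)) ∧ numCycles n (π ^ 2) = k).card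

def bnk (n k : ℕ) : ℕ :=
  (Finset.univ.filter fun π : Equiv.Perm (Fin n) => numCycles n (π ^ 2) = k).card

def dnk (n k : ℕ) : ℕ :=
  (Finset.univ.filter fun π : Equiv.Perm (Fin n) => numOddCycles n (π ^ 2) = k).card

namespace PfA

theorem cyc_sq_cycle {α : Type*} [Fintype α] [DecidableEq α] (σ : Equiv.Perm α) (hσ : σ.IsCycle) :
    Multiset.card (σ ^ 2).cycleType + σ.support.card
      = (σ.cycleType.map fun i => if i % 2 = 1 then 1 else 2).sum + (σ ^ 2).support.card := by
  have ho := hσ.orderOf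
  rw [hσ.cycleType]
  simp only [Multiset.map_singleton, Multiset.sum_singleton]
  by_cases hodd : σ.support.card % 2 = 1
  · have hc : (2 : ℕ).Coprime (orderOf σ) := by
      rw [ho, Nat.coprime_two_left]; exact Nat.odd_iff.mpr hodd
    have h2 : (σ ^ 2).IsCycle := (hσ.pow_iff).2 hc
    rw [h2.cycleType, Equiv.Perm.support_pow_coprime hc]
    simp [hodd]
  · obtain ⟨h, hh⟩ : ∃ h, σ.support.card = 2 * h := ⟨σ.support.card / 2, by omega⟩
    have hge := hσ.two_le_card_support
    rw [if_neg hodd]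
    by_cases h1 : h = 1
    · have : σ ^ 2 = 1 := by rw [← orderOf_dvd_iff_pow_eq_one, ho, hh, h1]
      rw [this]; simp [hh, h1]
    have hsupp : (σ ^ 2).support = σ.support := by
      ext x
      rw [Equiv.Perm.mem_support, Equiv.Perm.mem_support]
      constructor
      · intro hx hx'
        apply hx
        rw [pow_two, Equiv.Perm.mul_apply, hx', hx']
      · intro hx hx'
        have := (hσ.pow_eq_one_iff' hx).2 hx'
        rw [← orderOf_dvd_iff_pow_eq_one, ho, hh] at this
        have := Nat.le_of_dvd (by norm_num) this
        omega
    have hall : ∀ p ∈ (σ ^ 2).cycleType, p = h := by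
      intro p hp
      rw [Equiv.Perm.cycleType_def, Multiset.mem_map] at hp
      obtain ⟨c, hc, rfl⟩ := hp
      have hc' : c ∈ (σ ^ 2).cycleFactorsFinset := hc
      rw [Equiv.Perm.mem_cycleFactorsFinset_iff] at hc'
      obtain ⟨hcyc, hceq⟩ := hc'
      have hco := hcyc.orderOf
      simp only [Function.comp]
      apply Nat.dvd_antisymm
      · have : c.support.card ∈ (σ ^ 2).cycleType := by
          rw [Equiv.Perm.cycleType_def, Multiset.mem_map]; exact ⟨c, hc, rfl⟩
        refine (Equiv.Perm.dvd_of_mem_cycleType this).trans ?_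
        rw [orderOf_dvd_iff_pow_eq_one, ← pow_mul, ← hh, ← ho, pow_orderOf_eq_one]
      · obtain ⟨x, hx, -⟩ := id hcyc
        have hx' : x ∈ c.support := Equiv.Perm.mem_support.2 hx
        have hxs : σ x ≠ x := by
          have : x ∈ (σ ^ 2).support := by
            rw [Equiv.Perm.mem_support, ← hceq x hx']; exact hx
          rw [hsupp, Equiv.Perm.mem_support] at this; exact this
        have hpw : ∀ j : ℕ, ((σ ^ 2) ^ j) x = (c ^ j) x ∧ (c ^ j) x ∈ c.support := by
          intro j
          induction j with
          | zero => simp [hx]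
          | succ j ih =>
            rw [pow_succ' (σ ^ 2) j, pow_succ' c j, Equiv.Perm.mul_apply, Equiv.Perm.mul_apply, ih.1]
            exact ⟨(hceq _ ih.2).symm, Equiv.Perm.apply_mem_support.2 ih.2⟩
        have h3 := (hpw c.support.card).1
        rw [← hco, pow_orderOf_eq_one, Equiv.Perm.one_apply, ← pow_mul] at h3
        have h4 := (hσ.pow_eq_one_iff' hxs).2 h3
        rw [← orderOf_dvd_iff_pow_eq_one, ho, hh, hco] at h4
        exact Nat.dvd_of_mul_dvd_mul_left (by norm_num) h4
    have hrep := Multiset.eq_replicate_card.2 hall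
    have hs := Equiv.Perm.sum_cycleType (σ ^ 2)
    rw [hrep, Multiset.sum_replicate, hsupp, hh, smul_eq_mul] at hs
    have : Multiset.card (σ ^ 2).cycleType = 2 := Nat.eq_of_mul_eq_mul_right (by omega) hs
    rw [this, hsupp]

theorem cyc_sq {α : Type*} [Fintype α] [DecidableEq α] (σ : Equiv.Perm α) :
    Multiset.card (σ ^ 2).cycleType + σ.support.card
      = (σ.cycleType.map fun i => if i % 2 = 1 then 1 else 2).sum + (σ ^ 2).support.card := by
  induction σ using Equiv.Perm.cycle_induction_on with
  | base_one => simp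
  | base_cycles σ hσ => exact cyc_sq_cycle σ hσ
  | induction_disjoint σ τ hd hc ih1 ih2 =>
    have h2 : (σ ^ 2).Disjoint (τ ^ 2) := hd.pow_disjoint_pow 2 2
    rw [hd.commute.mul_pow, h2.cycleType_mul, hd.cycleType_mul, hd.card_support_mul,
      h2.card_support_mul]
    simp only [Multiset.card_add, Multiset.map_add, Multiset.sum_add]
    omega

theorem numCycles_sq (n : ℕ) (σ : Equiv.Perm (Fin n)) :
    numCycles n (σ ^ 2) = ((fullCycleType n σ).map fun i => if i % 2 = 1 then 1 else 2).sum := by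
  have h := cyc_sq σ
  have h1 := σ.support.card_le_univ
  have h2 := (σ ^ 2).support.card_le_univ
  rw [Fintype.card_fin] at h1 h2
  simp only [numCycles, fullCycleType, Multiset.card_add, Multiset.map_add, Multiset.sum_add,
    Multiset.card_replicate, Multiset.map_replicate, Multiset.sum_replicate]
  norm_num
  omega

/-- cycle weight -/
def wt (x : ℚ) (i : ℕ) : ℚ := if 4 ∣ i then 0 else if i % 2 = 1 then x else x ^ 2

theorem wt_prod (x : ℚ) (s : Multiset ℕ) :
    (s.map (wt x)).prod = if (∀ p ∈ s, ¬ 4 ∣ p) then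
      x ^ (s.map fun i => if i % 2 = 1 then 1 else 2).sum else 0 := by
  induction s using Multiset.induction_on with
  | empty => simp
  | cons a s ih =>
    simp only [Multiset.map_cons, Multiset.prod_cons, ih, Multiset.sum_cons, Multiset.mem_cons,
      forall_eq_or_imp, wt]
    by_cases h4 : 4 ∣ a
    · simp [h4]
    · by_cases ho : a % 2 = 1 <;> simp [h4, ho, pow_add]

theorem sum_good (n : ℕ) (x : ℚ) :
    ∑ k ∈ Finset.Icc 1 n, (cnk n k : ℚ) * x ^ k =
      if n = 0 then 0 else ∑ σ : Equiv.Perm (Fin n), ((fullCycleType n σ).map (wt x)).prod := by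
  split_ifs with h0
  · subst h0; simp
  simp only [wt_prod, ← numCycles_sq]
  rw [← Finset.sum_filter]
  rw [← Finset.sum_fiberwise_of_maps_to (t := Finset.Icc 1 n) (g := fun σ => numCycles n (σ ^ 2))]
  · apply Finset.sum_congr rfl
    intro k hk
    rw [Finset.sum_congr rfl (g := fun _ => x ^ k)]
    · rw [Finset.sum_const, Finset.filter_filter, nsmul_eq_mul, cnk]
    · intro σ hσ
      rw [(Finset.mem_filter.1 hσ).2]
  · intro σ _
    rw [Finset.mem_Icc]
    have hs : (fullCycleType n (σ ^ 2)).sum = n := by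
      have := (σ ^ 2).partition.parts_sum
      simpa [fullCycleType, Equiv.Perm.partition] using this
    have hpos : ∀ i ∈ fullCycleType n (σ ^ 2), 1 ≤ i := by
      intro i hi
      apply (σ ^ 2).partition.parts_pos
      simpa [fullCycleType, Equiv.Perm.partition] using hi
    constructor
    · rw [numCycles, Nat.one_le_iff_ne_zero, Ne, Multiset.card_eq_zero]
      intro h
      rw [h] at hs
      simp at hs; omega
    · have := Multiset.card_nsmul_le_sum hpos
      rw [hs] at this
      simpa [numCycles] using this

/-- partition weight -/
def Z (w : ℕ → ℚ) (s : Multiset ℕ) : ℚ :=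
  ∏ i ∈ s.toFinset, (w i / i) ^ s.count i / (s.count i).factorial

theorem ins_er (a : ℕ) (s : Finset ℕ) : insert a (s.erase a) = insert a s := by
  ext x; by_cases h : x = a <;> simp [h]

theorem Z_cons (w : ℕ → ℚ) (s : Multiset ℕ) (a : ℕ) (ha : 1 ≤ a) :
    (a : ℚ) * ((a ::ₘ s).count a) * Z w (a ::ₘ s) = w a * Z w s := by
  have hsup : ∀ s : Multiset ℕ, s.toFinset ⊆ insert a s.toFinset := fun s => Finset.subset_insert _ _
  have e1 : Z w (a ::ₘ s) = ∏ i ∈ insert a (s.toFinset.erase a),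
      (w i / i) ^ (a ::ₘ s).count i / ((a ::ₘ s).count i).factorial := by
    unfold Z
    rw [ins_er, Multiset.toFinset_cons]
  have e2 : Z w s = ∏ i ∈ insert a (s.toFinset.erase a),
      (w i / i) ^ s.count i / (s.count i).factorial := by
    unfold Z
    rw [ins_er]
    apply Finset.prod_subset (hsup s)
    intro x _ hx
    rw [Multiset.mem_toFinset] at hx
    simp [Multiset.count_eq_zero_of_notMem hx]
  rw [e1, e2, Finset.prod_insert (by simp), Finset.prod_insert (by simp)]
  rw [Finset.prod_congr rfl (g := fun i => (w i / i) ^ s.count i / (s.count i).factorial)]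
  · rw [Multiset.count_cons_self, Nat.factorial_succ, pow_succ]
    have : (a : ℚ) ≠ 0 := by positivity
    push_cast
    field_simp
  · intro i hi
    rw [Multiset.count_cons_of_ne (Finset.ne_of_mem_erase hi)]

def bb (w : ℕ → ℚ) (n : ℕ) : ℚ := ∑ p : n.Partition, Z w p.parts

theorem bb_rec (w : ℕ → ℚ) (n : ℕ) :
    (n : ℚ) * bb w n = ∑ a ∈ Finset.Icc 1 n, w a * bb w (n - a) := by
  have h1 : ∀ p : n.Partition, (n : ℚ) = ∑ a ∈ Finset.Icc 1 n, (a : ℚ) * p.parts.count a := by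
    intro p
    have := p.parts_sum
    conv_lhs => rw [← this]
    rw [Finset.sum_multiset_count]
    push_cast
    rw [← Finset.sum_subset (s₁ := p.parts.toFinset) (s₂ := Finset.Icc 1 n)]
    · apply Finset.sum_congr rfl; intro i _; simp [mul_comm]
    · intro a ha
      rw [Multiset.mem_toFinset] at ha
      rw [Finset.mem_Icc]
      exact ⟨p.parts_pos ha, p.le_of_mem_parts ha⟩
    · intro a _ ha
      rw [Multiset.mem_toFinset] at ha
      simp [Multiset.count_eq_zero_of_notMem ha]
  unfold bb
  rw [Finset.mul_sum]
  rw [Finset.sum_congr rfl (g := fun p : n.Partition =>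
    ∑ a ∈ Finset.Icc 1 n, (a : ℚ) * p.parts.count a * Z w p.parts)]
  · rw [Finset.sum_comm]
    apply Finset.sum_congr rfl
    intro a ha
    rw [Finset.mem_Icc] at ha
    rw [Finset.mul_sum]
    rw [← Equiv.sum_comp (Nat.Partition.partitionWithPartEquiv ha.1 ha.2)]
    rw [← Finset.sum_filter_add_sum_filter_not Finset.univ (fun p : n.Partition => a ∈ p.parts)]
    rw [Finset.sum_eq_zero (s := Finset.filter (fun p : n.Partition => ¬ a ∈ p.parts) _), add_zero]
    · rw [Finset.sum_subtype (p := fun p : n.Partition => a ∈ p.parts) _ (by simp)]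
      apply Finset.sum_congr rfl
      intro p _
      have := Z_cons w (p.1.parts.erase a) a ha.1
      rw [Multiset.cons_erase p.2] at this
      rw [this]; rfl
    · intro p hp
      simp [Multiset.count_eq_zero_of_notMem (Finset.mem_filter.1 hp).2]
  · intro p _
    rw [h1 p, Finset.sum_mul]

theorem card_type (n : ℕ) (p : n.Partition) :
    ((Finset.univ.filter fun σ : Equiv.Perm (Fin n) => fullCycleType n σ = p.parts).card : ℚ)
      * (p.parts.prod * ∏ i ∈ p.parts.toFinset, ((p.parts.count i).factorial : ℚ)) = n.factorial := by
  set m := p.parts.filter (fun i => 2 ≤ i) with hm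
  have hp1 : p.parts = m + Multiset.replicate (p.parts.count 1) 1 := by
    rw [← Multiset.filter_eq', hm]
    conv_lhs => rw [← Multiset.filter_add_not (fun i => 2 ≤ i) p.parts]
    congr 1
    apply Multiset.filter_congr
    intro i hi
    have := p.parts_pos hi
    omega
  have hsum : m.sum + p.parts.count 1 = n := by
    have := p.parts_sum
    conv_lhs at this => rw [hp1]
    simpa using this
  have hset : (Finset.univ.filter fun σ : Equiv.Perm (Fin n) => fullCycleType n σ = p.parts)
      = (Finset.univ.filter fun σ : Equiv.Perm (Fin n) => σ.cycleType = m) := by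
    apply Finset.filter_congr
    intro σ _
    constructor
    · intro h
      rw [hm, ← h, fullCycleType, Multiset.filter_add]
      rw [Multiset.filter_eq_self.2 (fun i hi => Equiv.Perm.two_le_of_mem_cycleType hi)]
      rw [Multiset.filter_eq_nil.2, add_zero]
      intro i hi
      rw [Multiset.eq_of_mem_replicate hi]; norm_num
    · intro h
      rw [hp1, fullCycleType, h]
      congr 2
      rw [← Equiv.Perm.sum_cycleType, h]
      omega
  have key := Equiv.Perm.card_of_cycleType_mul_eq (Fin n) m
  rw [if_pos ⟨by rw [Fintype.card_fin]; omega, fun a ha => (Multiset.mem_filter.1 ha).2⟩,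
    Fintype.card_fin] at key
  have hprod : p.parts.prod = m.prod := by
    conv_lhs => rw [hp1]
    simp
  have hfac : ∏ i ∈ p.parts.toFinset, (p.parts.count i).factorial =
      (n - m.sum).factorial * ∏ i ∈ m.toFinset, (m.count i).factorial := by
    have h1m : (1 : ℕ) ∉ m.toFinset := by
      rw [Multiset.mem_toFinset, hm, Multiset.mem_filter]; omega
    have e : ∏ i ∈ p.parts.toFinset, (p.parts.count i).factorial =
        ∏ i ∈ insert 1 m.toFinset, (p.parts.count i).factorial := by
      apply Finset.prod_subset
      · intro i hi
        rw [Multiset.mem_toFinset] at hi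
        rw [Finset.mem_insert, Multiset.mem_toFinset, hm, Multiset.mem_filter]
        have := p.parts_pos hi
        by_cases h : i = 1
        · exact Or.inl h
        · exact Or.inr ⟨hi, by omega⟩
      · intro i _ hi
        rw [Multiset.mem_toFinset] at hi
        simp [Multiset.count_eq_zero_of_notMem hi]
    rw [e, Finset.prod_insert h1m]
    congr 1
    · congr 1; omega
    · apply Finset.prod_congr rfl
      intro i hi
      rw [Multiset.mem_toFinset, hm, Multiset.mem_filter] at hi
      rw [hm, Multiset.count_filter_of_pos hi.2]
  rw [hset, hprod, ← key]
  have := congrArg (Nat.cast : ℕ → ℚ) hfac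
  push_cast at this ⊢
  rw [this]
  rw [mul_left_comm (Multiset.prod _), ← mul_assoc (Nat.cast (n - m.sum).factorial)]

theorem sum_perm (w : ℕ → ℚ) (n : ℕ) :
    ∑ σ : Equiv.Perm (Fin n), ((fullCycleType n σ).map w).prod = n.factorial * bb w n := by
  have hfull : ∀ σ : Equiv.Perm (Fin n), ∃ p : n.Partition, fullCycleType n σ = p.parts := by
    intro σ
    refine ⟨⟨fullCycleType n σ, ?_, ?_⟩, rfl⟩
    · intro i hi
      apply σ.partition.parts_pos
      simpa [fullCycleType, Equiv.Perm.partition] using hi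
    · have := σ.partition.parts_sum
      simpa [fullCycleType, Equiv.Perm.partition] using this
  choose P hP using hfull
  rw [← Finset.sum_fiberwise_of_maps_to (t := Finset.univ) (g := P) (by simp)]
  rw [bb, Finset.mul_sum]
  apply Finset.sum_congr rfl
  intro p _
  have hset : (Finset.univ.filter fun σ : Equiv.Perm (Fin n) => P σ = p) =
     (Finset.univ.filter fun σ : Equiv.Perm (Fin n) => fullCycleType n σ = p.parts) := by
    apply Finset.filter_congr
    intro σ _
    rw [hP, Nat.Partition.ext_iff]
  rw [hset, Finset.sum_congr rfl (g := fun _ => (p.parts.map w).prod)]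
  · rw [Finset.sum_const, nsmul_eq_mul, ← card_type n p, mul_assoc]
    congr 1
    rw [Z, Finset.prod_div_distrib]
    have hne : ∏ i ∈ p.parts.toFinset, ((p.parts.count i).factorial : ℚ) ≠ 0 := by
      apply Finset.prod_ne_zero_iff.2; intro i _; positivity
    rw [mul_assoc, mul_div_cancel₀ _ hne]
    simp only [div_pow, Finset.prod_div_distrib]
    rw [Finset.prod_multiset_map_count, Finset.prod_multiset_count]
    push_cast
    rw [mul_div_cancel₀]
    apply Finset.prod_ne_zero_iff.2
    intro i hi
    rw [Multiset.mem_toFinset] at hi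
    have := p.parts_pos hi
    positivity
  · intro σ hσ
    rw [(Finset.mem_filter.1 hσ).2]

end PfA

namespace PfB

variable {B : Type*} [Fintype B] [LinearOrder B]

def Q (n : ℕ) (s : B → ℤ) : Finset (Equiv.Perm (Fin n) × (Fin n → B)) :=
  Finset.univ.filter fun p => p.1 ^ 2 = 1 ∧
    StrictMono fun i => toLex (p.2 i, s (p.2 i) * ((p.1 i : ℕ) : ℤ))

def LL (n : ℕ) (s : B → ℤ) : Finset (Sym2 B →₀ ℕ) :=
  (Finset.finsuppAntidiag Finset.univ n).filter fun l => ∀ a b : B, a ≠ b →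
    2 ∣ l s(a, b) ∧ (s a ≠ s b → l s(a, b) ≤ 2)

def cnt {n : ℕ} (p : Equiv.Perm (Fin n) × (Fin n → B)) (a b : B) : ℕ :=
  (Finset.univ.filter fun i => p.2 i = a ∧ p.2 (p.1 i) = b).card

def prof {n : ℕ} (p : Equiv.Perm (Fin n) × (Fin n → B)) : Sym2 B →₀ ℕ :=
  Finsupp.equivFunOnFinite.symm fun e =>
    (Finset.univ.filter fun i => s(p.2 i, p.2 (p.1 i)) = e).card

theorem inv_apply {n : ℕ} {π : Equiv.Perm (Fin n)} (h : π ^ 2 = 1) (i : Fin n) : π (π i) = i := by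
  rw [← Equiv.Perm.mul_apply, ← pow_two, h, Equiv.Perm.one_apply]

theorem cnt_symm {n : ℕ} {p : Equiv.Perm (Fin n) × (Fin n → B)} (h : p.1 ^ 2 = 1) (a b : B) :
    cnt p a b = cnt p b a := by
  unfold cnt
  apply Finset.card_bij (fun i _ => p.1 i)
  · intro i hi
    simp only [Finset.mem_filter, Finset.mem_univ, true_and] at hi ⊢
    rw [inv_apply h]; exact hi.symm
  · intro i _ j _ hij; exact p.1.injective hij
  · intro i hi
    refine ⟨p.1 i, ?_, inv_apply h i⟩
    simp only [Finset.mem_filter, Finset.mem_univ, true_and] at hi ⊢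
    rw [inv_apply h]; exact hi.symm

theorem prof_apply {n : ℕ} {p : Equiv.Perm (Fin n) × (Fin n → B)} (h : p.1 ^ 2 = 1) (a b : B) :
    prof p s(a, b) = if a = b then cnt p a b else 2 * cnt p a b := by
  have e : prof p s(a, b) = (Finset.univ.filter fun i => s(p.2 i, p.2 (p.1 i)) = s(a, b)).card := rfl
  rw [e]
  split_ifs with hab
  · subst hab
    unfold cnt
    congr 1
    ext i
    simp
  · rw [two_mul]
    conv_rhs => rw [cnt_symm h a b]
    conv_rhs => arg 2; rw [cnt_symm h b a]
    unfold cnt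
    rw [← Finset.card_union_of_disjoint]
    · congr 1
      ext i
      simp only [Finset.mem_filter, Finset.mem_univ, true_and, Finset.mem_union, Sym2.eq_iff]
      tauto
    · rw [Finset.disjoint_filter]
      rintro i _ ⟨h1, h2⟩ ⟨h3, h4⟩
      exact hab (h3.symm.trans h1)

theorem block {n : ℕ} {s : B → ℤ} {p : Equiv.Perm (Fin n) × (Fin n → B)} (hp : p ∈ Q n s)
    {i j : Fin n} (hij : i < j) (hF : p.2 i = p.2 j) :
    s (p.2 i) * ((p.1 i : ℕ) : ℤ) < s (p.2 i) * ((p.1 j : ℕ) : ℤ) := by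
  have := ((Finset.mem_filter.1 hp).2.2) hij
  simp only [Prod.Lex.toLex_lt_toLex] at this
  rcases this with h | h
  · exact absurd hF (ne_of_lt h)
  · rw [← hF] at h; exact h.2

theorem monoF {n : ℕ} {s : B → ℤ} {p : Equiv.Perm (Fin n) × (Fin n → B)} (hp : p ∈ Q n s) :
    Monotone p.2 := by
  intro i j hij
  rcases hij.eq_or_lt with h | hij
  · rw [h]
  have := ((Finset.mem_filter.1 hp).2.2) hij
  simp only [Prod.Lex.toLex_lt_toLex] at this
  rcases this with h | h
  · exact h.le
  · exact h.1.le

theorem cross {n : ℕ} {s : B → ℤ} (hs : ∀ b, s b = 1 ∨ s b = -1)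
    {p : Equiv.Perm (Fin n) × (Fin n → B)} (hp : p ∈ Q n s)
    {i j : Fin n} (hij : i < j) (hF : p.2 i = p.2 j) (hF2 : p.2 (p.1 i) = p.2 (p.1 j)) :
    s (p.2 i) = s (p.2 (p.1 i)) := by
  have hinv := (Finset.mem_filter.1 hp).2.1
  have h1 := block hp hij hF
  have hlt : (i : ℕ) < j := hij
  rcases hs (p.2 i) with ha | ha <;> rcases hs (p.2 (p.1 i)) with hb | hb
  · rw [ha, hb]
  · rw [ha] at h1
    have h2 : p.1 i < p.1 j := by rw [Fin.lt_def]; omega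
    have h3 := block hp h2 hF2
    rw [hb, inv_apply hinv, inv_apply hinv] at h3
    omega
  · rw [ha] at h1
    have h2 : p.1 j < p.1 i := by rw [Fin.lt_def]; omega
    have h3 := block hp h2 hF2.symm
    rw [← hF2, hb, inv_apply hinv, inv_apply hinv] at h3
    omega
  · rw [ha, hb]

theorem prof_mem {n : ℕ} {s : B → ℤ} (hs : ∀ b, s b = 1 ∨ s b = -1)
    {p : Equiv.Perm (Fin n) × (Fin n → B)} (hp : p ∈ Q n s) : prof p ∈ LL n s := by
  have hinv := (Finset.mem_filter.1 hp).2.1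
  rw [LL, Finset.mem_filter, Finset.mem_finsuppAntidiag]
  refine ⟨⟨?_, Finset.subset_univ _⟩, ?_⟩
  · have := Finset.card_eq_sum_card_fiberwise (s := Finset.univ) (t := Finset.univ)
      (f := fun i : Fin n => s(p.2 i, p.2 (p.1 i))) (by intro i _; simp)
    rw [Finset.card_univ, Fintype.card_fin] at this
    conv_rhs => rw [this]
    rfl
  · intro a b hab
    rw [prof_apply hinv, if_neg hab]
    refine ⟨dvd_mul_right _ _, fun hne => ?_⟩
    suffices cnt p a b ≤ 1 by omega
    unfold cnt
    rw [Finset.card_le_one]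
    intro i hi j hj
    simp only [Finset.mem_filter, Finset.mem_univ, true_and] at hi hj
    by_contra hij
    rcases lt_or_gt_of_ne hij with h | h
    · have := cross hs hp h (hi.1.trans hj.1.symm) (hi.2.trans hj.2.symm)
      rw [hi.1, hi.2] at this; exact hne this
    · have := cross hs hp h (hj.1.trans hi.1.symm) (hj.2.trans hi.2.symm)
      rw [hj.1, hj.2] at this; exact hne this

theorem exists_perm {n : ℕ} {γ : Type*} [DecidableEq γ] (u v : Fin n → γ)
    (h : ∀ c, (Finset.univ.filter fun i => u i = c).card = (Finset.univ.filter fun i => v i = c).card) :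
    ∃ σ : Equiv.Perm (Fin n), v = u ∘ σ := by
  have h' : ∀ c, Nonempty ({i // v i = c} ≃ {i // u i = c}) := by
    intro c
    apply Fintype.card_eq.1
    rw [Fintype.card_subtype, Fintype.card_subtype, h]
  let E : ∀ c, {i // v i = c} ≃ {i // u i = c} := fun c => (h' c).some
  refine ⟨((Equiv.sigmaFiberEquiv v).symm.trans (Equiv.sigmaCongrRight E)).trans
    (Equiv.sigmaFiberEquiv u), ?_⟩
  funext i
  simp only [Function.comp, Equiv.trans_apply]
  exact ((E (v i)) ⟨i, rfl⟩).2.symm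

theorem prof_inj {n : ℕ} {s : B → ℤ} (hs : ∀ b, s b = 1 ∨ s b = -1) {r : B → ℤ} (hr : StrictMono r)
    {p q : Equiv.Perm (Fin n) × (Fin n → B)} (hp : p ∈ Q n s) (hq : q ∈ Q n s)
    (h : prof p = prof q) : p = q := by
  have ip := (Finset.mem_filter.1 hp).2.1
  have iq := (Finset.mem_filter.1 hq).2.1
  have hc : ∀ a b, cnt p a b = cnt q a b := by
    intro a b
    have := DFunLike.congr_fun h s(a, b)
    rw [prof_apply ip, prof_apply iq] at this
    split_ifs at this <;> omega
  obtain ⟨σ, hσ⟩ := exists_perm (fun i => (p.2 i, p.2 (p.1 i))) (fun i => (q.2 i, q.2 (q.1 i)))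
    (by
      rintro ⟨a, b⟩
      have := hc a b
      simpa [cnt] using this)
  let V : (p : Equiv.Perm (Fin n) × (Fin n → B)) → Fin n → B ×ₗ ℤ :=
    fun p i => toLex (p.2 i, s (p.2 i) * r (p.2 (p.1 i)))
  have hV : ∀ p ∈ Q n s, Monotone (V p) := by
    intro p hp i j hij
    rcases hij.eq_or_lt with h | hij
    · rw [h]
    simp only [V, Prod.Lex.toLex_le_toLex]
    have h1 := monoF hp hij.le
    rcases h1.eq_or_lt with h1 | h1
    · right
      refine ⟨h1, ?_⟩
      rw [← h1]
      have h2 := block hp hij h1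
      rcases hs (p.2 i) with ha | ha <;> rw [ha] at h2 ⊢
      · have h3 : p.1 i ≤ p.1 j := by rw [Fin.le_def]; omega
        have := hr.monotone (monoF hp h3)
        omega
      · have h3 : p.1 j ≤ p.1 i := by rw [Fin.le_def]; omega
        have := hr.monotone (monoF hp h3)
        omega
    · exact Or.inl h1
  have hVV : V q = V p ∘ σ := by
    funext i
    have := congrFun hσ i
    simp only [Function.comp, Prod.mk.injEq] at this
    simp only [V, Function.comp, this.1, this.2]
  have hVeq : V p = V q := by
    have h1 : Monotone (V p ∘ (1 : Equiv.Perm (Fin n))) := hV p hp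
    have h2 : Monotone (V p ∘ σ) := by rw [← hVV]; exact hV q hq
    have := Tuple.unique_monotone h1 h2
    rw [hVV, ← this]; rfl
  have hF : ∀ i, p.2 i = q.2 i ∧ p.2 (p.1 i) = q.2 (q.1 i) := by
    intro i
    have := congrFun hVeq i
    simp only [V, EmbeddingLike.apply_eq_iff_eq, Prod.mk.injEq] at this
    refine ⟨this.1, hr.injective ?_⟩
    have h2 := this.2
    rw [← this.1] at h2
    rcases hs (p.2 i) with ha | ha <;> rw [ha] at h2 <;> omega
  have hFeq : p.2 = q.2 := funext fun i => (hF i).1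
  have hFπ : ∀ i, p.2 (p.1 i) = p.2 (q.1 i) := fun i => by rw [(hF i).2, hFeq]
  have hFF : ∀ i, p.2 (p.1 (q.1 i)) = p.2 i := by
    intro i
    rw [hFπ, inv_apply iq]
  have hVρ : V p ∘ (p.1 * q.1) = V p := by
    funext i
    simp only [Function.comp, V, Equiv.Perm.mul_apply, hFF, inv_apply ip, hFπ]
  have e1 : p.1 * q.1 = Tuple.sort (V p) := by
    rw [Tuple.eq_sort_iff]
    refine ⟨by rw [hVρ]; exact hV p hp, ?_⟩
    intro i j hij hVij
    have hVij' : V p i = V p j := by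
      have := hVij
      rw [show V p ((p.1 * q.1) i) = V p i from congrFun hVρ i,
        show V p ((p.1 * q.1) j) = V p j from congrFun hVρ j] at this
      exact this
    simp only [V, EmbeddingLike.apply_eq_iff_eq, Prod.mk.injEq] at hVij'
    have ha := hVij'.1
    have hb : p.2 (p.1 i) = p.2 (p.1 j) := by
      apply hr.injective
      have h2 := hVij'.2
      rw [← ha] at h2
      rcases hs (p.2 i) with h | h <;> rw [h] at h2 <;> omega
    have hst := cross hs hp hij ha hb
    have h1 := block hq hij (by rw [← hFeq]; exact ha)
    rw [← hFeq] at h1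
    have hqF : p.2 (q.1 i) = p.2 (q.1 j) := by rw [← hFπ, ← hFπ]; exact hb
    rw [Equiv.Perm.mul_apply, Equiv.Perm.mul_apply, Fin.lt_def]
    rw [hFπ] at hst
    rcases hs (p.2 i) with h | h
    · rw [h] at h1 hst
      have h2 : q.1 i < q.1 j := by rw [Fin.lt_def]; omega
      have h3 := block hp h2 hqF
      rw [← hst] at h3; omega
    · rw [h] at h1 hst
      have h2 : q.1 j < q.1 i := by rw [Fin.lt_def]; omega
      have h3 := block hp h2 hqF.symm
      rw [← hqF, ← hst] at h3; omega
  have e2 : 1 = Tuple.sort (V p) := by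
    rw [Tuple.eq_sort_iff]
    exact ⟨hV p hp, fun i j hij _ => hij⟩
  have e3 : p.1 * q.1 = 1 := e1.trans e2.symm
  have e4 : p.1 = q.1 := by
    rw [← mul_left_inj q.1, e3, ← pow_two, iq]
  exact Prod.ext e4 hFeq


theorem prof_surj {n : ℕ} {s : B → ℤ} (hs : ∀ b, s b = 1 ∨ s b = -1) {r : B → ℤ} (hr : StrictMono r)
    {l : Sym2 B →₀ ℕ} (hl : l ∈ LL n s) : ∃ p ∈ Q n s, prof p = l := by
  rw [LL, Finset.mem_filter, Finset.mem_finsuppAntidiag] at hl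
  obtain ⟨⟨hsum, -⟩, hl2⟩ := hl
  obtain ⟨A, hA⟩ : ∃ A : B → B → ℕ, ∀ a b, A a b = if a = b then l s(a, b) else l s(a, b) / 2 :=
    ⟨_, fun _ _ => rfl⟩
  have hAs : ∀ a b, A a b = A b a := by
    intro a b
    rw [hA, hA, Sym2.eq_swap]
    simp only [eq_comm]
  have hAn : ∀ a b, A a b ≤ n := by
    intro a b
    have : l s(a, b) ≤ n := by
      rw [← hsum]; exact Finset.single_le_sum (f := l) (fun _ _ => Nat.zero_le _) (Finset.mem_univ _)
    rw [hA]; split_ifs <;> omega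
  have hAc : ∀ a b, s a ≠ s b → A a b ≤ 1 := by
    intro a b hab
    have hne : a ≠ b := fun h => hab (by rw [h])
    have := (hl2 a b hne).2 hab
    rw [hA, if_neg hne]; omega
  let T : Finset (B × B × ℕ) := (Finset.univ ×ˢ Finset.univ ×ˢ Finset.range (n + 1)).filter
    fun x => x.2.2 < A x.1 x.2.1
  have hT : ∀ x, x ∈ T ↔ x.2.2 < A x.1 x.2.1 := by
    intro x
    simp only [T, Finset.mem_filter, Finset.mem_product, Finset.mem_univ, true_and,
      Finset.mem_range, and_iff_right_iff_imp]
    intro h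
    have := hAn x.1 x.2.1
    omega
  have hTab : ∀ a b, (T.filter fun x => x.1 = a ∧ x.2.1 = b).card = A a b := by
    intro a b
    rw [← Finset.card_range (A a b)]
    symm
    apply Finset.card_bij (fun j _ => (a, b, j))
    · intro j hj
      rw [Finset.mem_filter, hT]
      exact ⟨Finset.mem_range.1 hj, rfl, rfl⟩
    · intro i _ j _ h
      simpa using h
    · rintro ⟨a', b', j⟩ hx
      rw [Finset.mem_filter, hT] at hx
      obtain ⟨h1, rfl, rfl⟩ := hx
      exact ⟨j, Finset.mem_range.2 h1, rfl⟩
  have hTe : ∀ e, (T.filter fun x => s(x.1, x.2.1) = e).card = l e := by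
    intro e
    induction e using Sym2.ind with
    | _ a b =>
    by_cases hab : a = b
    · subst hab
      have := hTab a a
      rw [hA, if_pos rfl] at this
      rw [← this]
      congr 1
      ext x
      simp
    · have h1 := hTab a b
      have h2 := hTab b a
      rw [hAs b a] at h2
      rw [hA, if_neg hab] at h1 h2
      have h3 := (hl2 a b hab).1
      have h4 : l s(a, b) = l s(a, b) / 2 + l s(a, b) / 2 := by omega
      rw [h4]
      conv_rhs => rw [← h1]
      conv_rhs => arg 2; rw [h1, ← h2]
      rw [← Finset.card_union_of_disjoint]
      · congr 1
        ext x
        simp only [Finset.mem_filter, Finset.mem_union, Sym2.eq_iff]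
        tauto
      · rw [Finset.disjoint_filter]
        rintro i _ ⟨h1, h2⟩ ⟨h3, h4⟩
        exact hab (h1.symm.trans h3)
  have hTcard : T.card = n := by
    rw [← hsum, Finset.card_eq_sum_card_fiberwise (t := Finset.univ)
      (f := fun x : B × B × ℕ => s(x.1, x.2.1)) (by intro i _; simp)]
    exact Finset.sum_congr rfl fun e _ => hTe e
  let key : B × B × ℕ → B ×ₗ (ℤ ×ₗ ℕ) := fun x => toLex (x.1, toLex (s x.1 * r x.2.1, x.2.2))
  have hkey : Function.Injective key := by
    rintro ⟨a, b, j⟩ ⟨a', b', j'⟩ h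
    simp only [key, EmbeddingLike.apply_eq_iff_eq, Prod.mk.injEq] at h
    obtain ⟨rfl, h2, rfl⟩ := h
    have : r b = r b' := by
      rcases hs a with h | h <;> rw [h] at h2 <;> omega
    rw [hr.injective this]
  let e0 : Fin n ≃ T := (T.equivFinOfCardEq hTcard).symm
  let e : Fin n ≃ T := (Tuple.sort (fun i => key (e0 i))).trans e0
  have hemono : Monotone fun i => key (e i) := Tuple.monotone_sort (fun i => key (e0 i))
  have hes : StrictMono fun i => key (e i) := hemono.strictMono_of_injective
    (hkey.comp (Subtype.val_injective.comp e.injective))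
  let th : B × B × ℕ → B × B × ℕ := fun x =>
    (x.2.1, x.1, if s x.1 = 1 then x.2.2 else A x.1 x.2.1 - 1 - x.2.2)
  have hth : ∀ x ∈ T, th x ∈ T := by
    rintro ⟨a, b, j⟩ hx
    rw [hT] at hx ⊢
    simp only [th] at hx ⊢
    rw [hAs b a]
    split_ifs <;> omega
  have hthth : ∀ x ∈ T, th (th x) = x := by
    rintro ⟨a, b, j⟩ hx
    rw [hT] at hx
    simp only [th, Prod.mk.injEq, true_and] at hx ⊢
    rw [hAs b a]
    by_cases hab : s a = s b
    · rw [hab]; split_ifs <;> omega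
    · have := hAc a b hab
      split_ifs <;> omega
  let Th : Equiv.Perm T := ⟨fun x => ⟨th x, hth x x.2⟩, fun x => ⟨th x, hth x x.2⟩,
    fun x => Subtype.ext (hthth x x.2), fun x => Subtype.ext (hthth x x.2)⟩
  let π : Equiv.Perm (Fin n) := (e.trans Th).trans e.symm
  have heπ : ∀ i, (e (π i) : B × B × ℕ) = th (e i) := by
    intro i
    simp only [π, Equiv.trans_apply, Equiv.apply_symm_apply]
    rfl
  let F : Fin n → B := fun i => (e i : B × B × ℕ).1
  have hFπ : ∀ i, F (π i) = (e i : B × B × ℕ).2.1 := by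
    intro i
    simp only [F, heπ]; rfl
  refine ⟨(π, F), ?_, ?_⟩
  · rw [Q, Finset.mem_filter]
    refine ⟨Finset.mem_univ _, ?_, ?_⟩
    · ext i
      rw [pow_two, Equiv.Perm.mul_apply, Equiv.Perm.one_apply]
      congr 1
      apply e.injective
      apply Subtype.ext
      rw [heπ, heπ, hthth _ (e i).2]
    · intro i j hij
      have h1 := hes hij
      have himp : ∀ i j, key (th (e i)) < key (th (e j)) → ((π i : ℕ) : ℤ) < ((π j : ℕ) : ℤ) := by
        intro i j h
        rw [← heπ, ← heπ] at h
        have := hes.lt_iff_lt.1 h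
        rw [Fin.lt_def] at this
        omega
      simp only [F]
      simp only [key, Prod.Lex.toLex_lt_toLex] at h1 ⊢
      rcases h1 with h1 | ⟨h1, h2⟩
      · exact Or.inl h1
      · right
        refine ⟨h1, ?_⟩
        have hi := (hT _).1 (e i).2
        have hj := (hT _).1 (e j).2
        have himp1 := himp i j
        have himp2 := himp j i
        revert h1 h2 hi hj himp1 himp2
        generalize ((e i : T) : B × B × ℕ) = x
        generalize ((e j : T) : B × B × ℕ) = y
        obtain ⟨a, b, u⟩ := x
        obtain ⟨a', b', v⟩ := y
        simp only [key, th, Prod.Lex.toLex_lt_toLex]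
        rintro rfl h2 hi hj himp1 himp2
        rcases h2 with h2 | ⟨h2, h3⟩
        · rcases hs a with h | h
          · rw [h] at h2 ⊢
            have : b < b' := hr.lt_iff_lt.1 (by omega)
            have := himp1 (Or.inl this)
            omega
          · rw [h] at h2 ⊢
            have : b' < b := hr.lt_iff_lt.1 (by omega)
            have := himp2 (Or.inl this)
            omega
        · have hbb : b = b' := by
            apply hr.injective
            rcases hs a with h | h <;> rw [h] at h2 <;> omega
          subst hbb
          have hst : s a = s b := by
            by_contra hne
            have := hAc a b hne
            omega
          rcases hs a with h | h
          · rw [← hst] at himp1 himp2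
            rw [h] at himp1 himp2 ⊢
            have := himp1 (Or.inr ⟨rfl, Or.inr ⟨rfl, by simpa using h3⟩⟩)
            omega
          · rw [← hst] at himp1 himp2
            rw [h] at himp1 himp2 ⊢
            have := himp2 (Or.inr ⟨rfl, Or.inr ⟨rfl, by norm_num; omega⟩⟩)
            omega
  · ext ε
    rw [← hTe ε]
    show (Finset.univ.filter fun i => s(F i, F (π i)) = ε).card = _
    apply Finset.card_bij (fun i _ => (e i : B × B × ℕ))
    · intro i hi
      rw [Finset.mem_filter] at hi ⊢
      refine ⟨(e i).2, ?_⟩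
      rw [← hi.2, hFπ]
    · intro i _ j _ h
      exact e.injective (Subtype.ext h)
    · intro x hx
      rw [Finset.mem_filter] at hx
      refine ⟨e.symm ⟨x, hx.1⟩, ?_, by simp⟩
      rw [Finset.mem_filter]
      refine ⟨Finset.mem_univ _, ?_⟩
      rw [hFπ]
      simp only [F, Equiv.apply_symm_apply]
      exact hx.2

theorem card_Q (n : ℕ) {s : B → ℤ} (hs : ∀ b, s b = 1 ∨ s b = -1) {r : B → ℤ} (hr : StrictMono r) :
    (Q n s).card = (LL n s).card :=
  Finset.card_bij (fun p _ => prof p) (fun _ hp => prof_mem hs hp)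
    (fun _ hp _ hq h => prof_inj hs hr hp hq h)
    (fun _ hl => by obtain ⟨p, hp, h⟩ := prof_surj hs hr hl; exact ⟨p, hp, h⟩)

end PfB

namespace PfC
open PowerSeries

theorem log_d : (X : ℚ⟦X⟧) * derivative ℚ (mk fun _ => (1 : ℚ)) =
    (mk fun k => if k = 0 then (0 : ℚ) else 1) * (mk fun _ => (1 : ℚ)) := by
  set f : ℚ⟦X⟧ := mk fun _ => (1 : ℚ) with hf
  set g : ℚ⟦X⟧ := mk fun k => if k = 0 then (0 : ℚ) else 1 with hg
  have h1 : f * (1 - X ^ 1) = 1 := by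
    ext k
    rw [mul_sub, mul_one, map_sub, coeff_mul_X_pow', coeff_one, hf, coeff_mk, coeff_mk]
    by_cases h : k = 0
    · simp [h]
    · simp [h, Nat.one_le_iff_ne_zero]
  have h2 : g * (1 - X ^ 1) = X := by
    ext k
    rw [mul_sub, mul_one, map_sub, coeff_mul_X_pow', coeff_X, hg, coeff_mk, coeff_mk]
    split_ifs <;> first | omega | simp
  have h3 := congrArg (derivative ℚ) h1
  rw [Derivation.leibniz] at h3
  simp at h3
  have h4 : (1 - X : ℚ⟦X⟧) ≠ 0 := by
    intro h; rw [pow_one, h] at h1; simp at h1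
  apply mul_right_cancel₀ h4
  rw [pow_one] at h1 h2
  linear_combination X * h3 - f * h2

theorem log_s : (X : ℚ⟦X⟧) * derivative ℚ (mk fun k => if 2 ∣ k then (1 : ℚ) else 0) =
    2 * (mk fun k => if k = 0 then (0 : ℚ) else if 2 ∣ k then 1 else 0)
      * (mk fun k => if 2 ∣ k then (1 : ℚ) else 0) := by
  set f : ℚ⟦X⟧ := mk fun k => if 2 ∣ k then (1 : ℚ) else 0 with hf
  set g : ℚ⟦X⟧ := mk fun k => if k = 0 then (0 : ℚ) else if 2 ∣ k then 1 else 0 with hg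
  have h1 : f * (1 - X ^ 2) = 1 := by
    ext k
    rw [mul_sub, mul_one, map_sub, coeff_mul_X_pow', coeff_one, hf, coeff_mk, coeff_mk]
    split_ifs <;> first | omega | simp
  have h2 : g * (1 - X ^ 2) = X ^ 2 := by
    ext k
    rw [mul_sub, mul_one, map_sub, coeff_mul_X_pow', coeff_X_pow, hg, coeff_mk, coeff_mk]
    split_ifs <;> first | omega | simp
  have h3 := congrArg (derivative ℚ) h1
  rw [Derivation.leibniz] at h3
  simp [derivative_pow] at h3
  have h4 : (1 - X ^ 2 : ℚ⟦X⟧) ≠ 0 := by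
    intro h; rw [h] at h1; simp at h1
  apply mul_right_cancel₀ h4
  linear_combination X * h3 - 2 * f * h2

theorem log_c : (X : ℚ⟦X⟧) * derivative ℚ (mk fun k => if 2 ∣ k ∧ k ≤ 2 then (1 : ℚ) else 0) =
    2 * (mk fun k => if k = 0 then (0 : ℚ) else if 2 ∣ k then (if 4 ∣ k then -1 else 1) else 0)
      * (mk fun k => if 2 ∣ k ∧ k ≤ 2 then (1 : ℚ) else 0) := by
  set g : ℚ⟦X⟧ := mk fun k => if k = 0 then (0 : ℚ) else
    if 2 ∣ k then (if 4 ∣ k then -1 else 1) else 0 with hg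
  have h1 : (mk fun k => if 2 ∣ k ∧ k ≤ 2 then (1 : ℚ) else 0) = 1 + X ^ 2 := by
    ext k
    rw [map_add, coeff_one, coeff_X_pow, coeff_mk]
    split_ifs <;> first | omega | simp
  have h2 : g * (1 + X ^ 2) = X ^ 2 := by
    ext k
    rw [mul_add, mul_one, map_add, coeff_mul_X_pow', coeff_X_pow, hg, coeff_mk, coeff_mk]
    split_ifs <;> first | omega | simp
  rw [h1, mul_assoc, h2, map_add, derivative_pow]
  simp
  ring

variable {B : Type*} [Fintype B] [LinearOrder B]

def ok (s : B → ℤ) (e : Sym2 B) (k : ℕ) : Prop :=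
  ∀ a b : B, e = s(a, b) → a ≠ b → 2 ∣ k ∧ (s a ≠ s b → k ≤ 2)

def fser (s : B → ℤ) (e : Sym2 B) : ℚ⟦X⟧ := mk fun k => if ok s e k then 1 else 0

def gg (s : B → ℤ) (a b : B) (k : ℕ) : ℚ :=
  if k = 0 then 0 else if 2 ∣ k then (if s a = s b then 1 else if 4 ∣ k then -1 else 1)
    else if a = b then 1 else 0

theorem ok_diag (s : B → ℤ) (a : B) (k : ℕ) : ok s s(a, a) k := by
  intro x y h hne
  rw [Sym2.eq_iff] at h
  rcases h with h | h <;> exact absurd (h.1.symm.trans h.2) (by first | exact hne | exact hne.symm)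

theorem ok_off (s : B → ℤ) (a b : B) (hab : a ≠ b) (k : ℕ) :
    ok s s(a, b) k ↔ 2 ∣ k ∧ (s a ≠ s b → k ≤ 2) := by
  constructor
  · intro h; exact h a b rfl hab
  · intro h x y hxy hne
    rw [Sym2.eq_iff] at hxy
    rcases hxy with ⟨rfl, rfl⟩ | ⟨rfl, rfl⟩
    · exact h
    · exact ⟨h.1, fun hh => h.2 hh.symm⟩

theorem log_e (s : B → ℤ) (e : Sym2 B) : (X : ℚ⟦X⟧) * derivative ℚ (fser s e) =
    (∑ p ∈ Finset.univ.filter (fun p : B × B => s(p.1, p.2) = e), mk (gg s p.1 p.2)) * fser s e := by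
  induction e using Sym2.ind with
  | _ a b =>
  by_cases hab : a = b
  · subst hab
    have h1 : (Finset.univ.filter (fun p : B × B => s(p.1, p.2) = s(a, a))) = {(a, a)} := by
      ext p; simp [Prod.ext_iff]
    have h2 : fser s s(a, a) = mk fun _ => (1 : ℚ) := by
      ext k; simp [fser, ok_diag]
    have h3 : gg s a a = fun k => if k = 0 then (0 : ℚ) else 1 := by
      funext k; simp [gg]
    rw [h1, h2, Finset.sum_singleton, h3, log_d]
  · have h1 : (Finset.univ.filter (fun p : B × B => s(p.1, p.2) = s(a, b))) = {(a, b), (b, a)} := by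
      ext p; simp [Prod.ext_iff]
    have hsym : gg s b a = gg s a b := by
      funext k; simp only [gg, eq_comm]
    rw [h1, Finset.sum_pair (by simp [hab]), hsym, ← two_mul]
    by_cases hs : s a = s b
    · have h2 : fser s s(a, b) = mk fun k => if 2 ∣ k then (1 : ℚ) else 0 := by
        ext k; simp [fser, ok_off s a b hab, hs]
      have h3 : gg s a b = fun k => if k = 0 then (0 : ℚ) else if 2 ∣ k then 1 else 0 := by
        funext k; simp [gg, hs, hab]
      rw [h2, h3, log_s]
    · have h2 : fser s s(a, b) = mk fun k => if 2 ∣ k ∧ k ≤ 2 then (1 : ℚ) else 0 := by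
        ext k; simp [fser, ok_off s a b hab, hs]
      have h3 : gg s a b = fun k => if k = 0 then (0 : ℚ) else
          if 2 ∣ k then (if 4 ∣ k then -1 else 1) else 0 := by
        funext k; simp [gg, hs, hab]
      rw [h2, h3, log_c]

theorem log_prod {ι : Type*} (t : Finset ι) (f W : ι → ℚ⟦X⟧)
    (h : ∀ e, X * derivative ℚ (f e) = W e * f e) :
    X * derivative ℚ (∏ e ∈ t, f e) = (∑ e ∈ t, W e) * ∏ e ∈ t, f e := by
  induction t using Finset.induction_on with
  | empty => simp [derivative_one]
  | insert a t ha ih =>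
    rw [Finset.prod_insert ha, Finset.sum_insert ha, Derivation.leibniz]
    simp only [smul_eq_mul]
    linear_combination (f a) * ih + (∏ e ∈ t, f e) * h a

theorem coeff_LL (s : B → ℤ) (n : ℕ) :
    coeff n (∏ e : Sym2 B, fser s e) = ((PfB.LL n s).card : ℚ) := by
  rw [coeff_prod, PfB.LL, Finset.card_filter]
  push_cast
  apply Finset.sum_congr rfl
  intro l _
  simp only [fser, coeff_mk]
  by_cases h : ∀ a b : B, a ≠ b → 2 ∣ l s(a, b) ∧ (s a ≠ s b → l s(a, b) ≤ 2)
  · rw [if_pos h]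
    apply Finset.prod_eq_one
    intro e _
    rw [if_pos]
    rintro a b rfl hab
    exact h a b hab
  · rw [if_neg h]
    push Not at h
    obtain ⟨a, b, hab, h⟩ := h
    apply Finset.prod_eq_zero (Finset.mem_univ s(a, b))
    rw [if_neg]
    intro hok
    obtain ⟨h1, h2⟩ := hok a b rfl hab
    have := h h1
    have := h2 this.1
    omega

theorem LL_rec (s : B → ℤ) (hs : ∀ b, s b = 1 ∨ s b = -1) (h0 : ∑ b, s b = 0) (n : ℕ) :
    (n : ℚ) * (PfB.LL n s).card =
      ∑ a ∈ Finset.Icc 1 n, PfA.wt (Fintype.card B) a * (PfB.LL (n - a) s).card := by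
  have h := log_prod Finset.univ (fser s) _ (log_e s)
  have hW : ∑ e : Sym2 B, ∑ p ∈ Finset.univ.filter (fun p : B × B => s(p.1, p.2) = e),
      mk (gg s p.1 p.2) = mk fun k => if k = 0 then 0 else PfA.wt (Fintype.card B) k := by
    rw [Finset.sum_fiberwise_of_maps_to (by simp)]
    ext k
    rw [map_sum, coeff_mk]
    simp only [coeff_mk, gg]
    by_cases hk : k = 0
    · simp [hk]
    simp only [hk, if_false, PfA.wt]
    rw [Fintype.sum_prod_type]
    simp only
    by_cases h2 : 2 ∣ k
    · by_cases h4 : 4 ∣ k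
      · simp only [h2, h4, if_true]
        have : ∀ a b, (if s a = s b then (1 : ℚ) else -1) = (s a : ℚ) * s b := by
          intro a b
          rcases hs a with ha | ha <;> rcases hs b with hb | hb <;> rw [ha, hb] <;> norm_num
        simp only [this]
        rw [← Finset.sum_mul_sum]
        have : (∑ b, (s b : ℚ)) = 0 := by exact_mod_cast h0
        rw [this, zero_mul]
      · have : ¬ k % 2 = 1 := by omega
        simp [h2, h4, this, pow_two]
    · have h4 : ¬ 4 ∣ k := by omega
      have : k % 2 = 1 := by omega
      simp [h2, h4, this]
  rw [hW] at h
  have hn := congrArg (coeff (R := ℚ) n) h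
  have hl : coeff n ((X : ℚ⟦X⟧) * derivative ℚ (∏ e : Sym2 B, fser s e)) = (n : ℚ) * (PfB.LL n s).card := by
    cases n with
    | zero => simp
    | succ n => rw [coeff_succ_X_mul, coeff_derivative, coeff_LL, mul_comm]; push_cast; rfl
  rw [hl, coeff_mul, Finset.Nat.sum_antidiagonal_eq_sum_range_succ_mk] at hn
  simp only [coeff_LL, coeff_mk] at hn
  rw [Finset.sum_range_succ', if_pos rfl, zero_mul, add_zero] at hn
  rw [Finset.range_eq_Ico, Finset.sum_Ico_add' (fun k => (if k = 0 then 0 else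
    PfA.wt (Fintype.card B) k) * ((PfB.LL (n - k) s).card : ℚ)) 0 n 1] at hn
  have hset : Finset.Ico (0 + 1) (n + 1) = Finset.Icc 1 n := by
    ext; simp [Nat.lt_succ_iff]
  rw [hset] at hn
  rw [hn]
  apply Finset.sum_congr rfl
  intro k hk
  rw [if_neg]
  rw [Finset.mem_Icc] at hk; omega

theorem LL_zero (s : B → ℤ) : (PfB.LL 0 s).card = 1 := by
  simp [PfB.LL, Finset.filter_singleton]

theorem LL_eq (s : B → ℤ) (hs : ∀ b, s b = 1 ∨ s b = -1) (h0 : ∑ b, s b = 0) (n : ℕ) :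
    ((PfB.LL n s).card : ℚ) = PfA.bb (PfA.wt (Fintype.card B)) n := by
  induction n using Nat.strong_induction_on with
  | _ n ih =>
  rcases Nat.eq_zero_or_pos n with rfl | hn
  · rw [LL_zero, PfA.bb]
    rw [Fintype.sum_unique]
    simp [PfA.Z]
  · have h1 := LL_rec s hs h0 n
    have h2 := PfA.bb_rec (PfA.wt (Fintype.card B)) n
    have : (n : ℚ) ≠ 0 := by positivity
    apply mul_left_cancel₀ this
    rw [h1, h2]
    apply Finset.sum_congr rfl
    intro a ha
    rw [Finset.mem_Icc] at ha
    rw [ih (n - a) (by omega)]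

end PfC

namespace PfD
open PowerSeries

def Cp {n : ℕ} (δ : Fin n → Prop) (f : Fin (n + 1) → ℕ) : Prop :=
  ∀ i : Fin n, f i.castSucc < f i.succ ∨ (¬ δ i ∧ f i.castSucc = f i.succ)

def S {n : ℕ} (m : ℕ) (δ : Fin n → Prop) : Finset (Fin (n + 1) → ℕ) :=
  (Fintype.piFinset fun _ => Finset.range m).filter (Cp δ)

theorem mem_S {n m : ℕ} {δ : Fin n → Prop} {f : Fin (n + 1) → ℕ} :
    f ∈ S m δ ↔ (∀ i, f i < m) ∧ Cp δ f := by
  simp [S, Fintype.mem_piFinset]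

theorem Cp_mono {n : ℕ} {δ : Fin n → Prop} {f : Fin (n + 1) → ℕ} (h : Cp δ f) : Monotone f := by
  rw [Fin.monotone_iff_le_succ]
  intro i
  rcases h i with h | h <;> omega

theorem Cp_snoc {n : ℕ} {δ : Fin (n + 1) → Prop} {g : Fin (n + 1) → ℕ} {v : ℕ} :
    Cp δ (Fin.snoc (α := fun _ => ℕ) g v) ↔ Cp (fun i => δ i.castSucc) g ∧
      (g (Fin.last n) < v ∨ (¬ δ (Fin.last n) ∧ g (Fin.last n) = v)) := by
  unfold Cp
  rw [Fin.forall_fin_succ']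
  simp only [Fin.snoc_castSucc, Fin.succ_castSucc, Fin.succ_last, Fin.snoc_last]

theorem card_S_succ {n : ℕ} (m : ℕ) (δ : Fin (n + 1) → Prop) :
    (S m δ).card = ∑ v ∈ Finset.range m,
      (S (if δ (Fin.last n) then v else v + 1) (fun i : Fin n => δ i.castSucc)).card := by
  rw [Finset.card_eq_sum_card_fiberwise (t := Finset.range m) (f := fun f => f (Fin.last (n + 1)))]
  · apply Finset.sum_congr rfl
    intro v hv
    rw [Finset.mem_range] at hv
    symm
    apply Finset.card_bij (fun g _ => (Fin.snoc (α := fun _ => ℕ) g v : Fin (n + 2) → ℕ))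
    · intro g hg
      rw [mem_S] at hg
      rw [Finset.mem_filter, mem_S, Cp_snoc, Fin.snoc_last]
      have h1 := hg.1 (Fin.last n)
      refine ⟨⟨?_, hg.2, ?_⟩, rfl⟩
      · rw [Fin.forall_fin_succ']
        simp only [Fin.snoc_castSucc, Fin.snoc_last]
        refine ⟨fun i => ?_, hv⟩
        have := hg.1 i
        split_ifs at this <;> omega
      · split_ifs at h1 with hd
        · exact Or.inl h1
        · rcases Nat.lt_or_ge (g (Fin.last n)) v with h | h
          · exact Or.inl h
          · exact Or.inr ⟨hd, by omega⟩
    · intro g _ g' _ h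
      have := congrArg (Fin.init (α := fun _ => ℕ)) h
      simpa using this
    · intro f hf
      rw [Finset.mem_filter] at hf
      refine ⟨Fin.init (α := fun _ => ℕ) f, ?_, ?_⟩
      · have hf1 := mem_S.1 hf.1
        have e : f = Fin.snoc (α := fun _ => ℕ) (Fin.init (α := fun _ => ℕ) f) v := by
          rw [← hf.2, Fin.snoc_init_self]
        have h2 := hf1.2
        rw [e, Cp_snoc] at h2
        rw [mem_S]
        refine ⟨fun i => ?_, h2.1⟩
        have h3 := Cp_mono h2.1 (Fin.le_last i)
        rcases h2.2 with h | h
        · split_ifs <;> omega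
        · rw [if_neg h.1]; omega
      · rw [← hf.2, Fin.snoc_init_self]
  · intro f hf
    have := (mem_S.1 (Finset.mem_coe.1 hf)).1 (Fin.last (n + 1))
    simpa using this

theorem ser_sum (a : ℕ → ℚ) : (1 - X) * (mk fun m => ∑ v ∈ Finset.range m, a v) = X * mk a := by
  ext k
  rw [sub_mul, one_mul, map_sub]
  cases k with
  | zero => simp
  | succ k => rw [coeff_succ_X_mul, coeff_succ_X_mul, coeff_mk, coeff_mk, coeff_mk,
      Finset.sum_range_succ]; ring

theorem ser_S {n : ℕ} (δ : Fin n → Prop) :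
    (1 - X) ^ (n + 2) * (mk fun m => ((S m δ).card : ℚ)) =
      X * ∏ i : Fin n, if δ i then (X : ℚ⟦X⟧) else 1 := by
  induction n with
  | zero =>
    have hc : ∀ m, (S m δ).card = m := by
      intro m
      have : S m δ = Fintype.piFinset fun _ => Finset.range m := by
        ext f; rw [mem_S, Fintype.mem_piFinset]; simp [Cp]
      rw [this]; simp
    simp only [hc]
    have h1 : (mk fun m => (m : ℚ)) = mk fun m => ∑ v ∈ Finset.range m, (1 : ℚ) := by
      ext m; simp
    have h2 := ser_sum (fun _ => 1)
    have h3 : (1 - X) * (mk fun _ => (1 : ℚ)) = 1 := by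
      ext k
      rw [sub_mul, one_mul, map_sub]
      cases k with
      | zero => simp
      | succ k => rw [coeff_succ_X_mul, coeff_mk, coeff_mk]; simp
    rw [h1]
    simp only [Finset.univ_eq_empty, Finset.prod_empty]
    linear_combination (1 - X) * h2 + X * h3
  | succ n ih =>
    have ih := ih (fun i => δ i.castSucc)
    rw [Fin.prod_univ_castSucc]
    simp only [fun m => card_S_succ m δ]
    push_cast
    have h2 := ser_sum (fun v => ((S (if δ (Fin.last n) then v else v + 1)
      (fun i : Fin n => δ i.castSucc)).card : ℚ))
    have h3 : X * (mk fun v => ((S (if δ (Fin.last n) then v else v + 1)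
      (fun i : Fin n => δ i.castSucc)).card : ℚ)) = (if δ (Fin.last n) then X else 1) *
        mk fun v => ((S v (fun i : Fin n => δ i.castSucc)).card : ℚ) := by
      split_ifs
      · rfl
      · ext k
        rw [one_mul]
        cases k with
        | zero =>
          rw [coeff_zero_X_mul, coeff_mk]
          symm
          rw [Nat.cast_eq_zero, Finset.card_eq_zero, Finset.eq_empty_iff_forall_notMem]
          intro f hf
          exact absurd ((mem_S.1 hf).1 0) (by omega)
        | succ k => rw [coeff_succ_X_mul, coeff_mk, coeff_mk]
    rw [h3] at h2
    linear_combination (1 - X) ^ (n + 2) * h2 + (if δ (Fin.last n) then X else 1) * ih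

/-- descents in Fin form -/
def dd {n : ℕ} (π : Equiv.Perm (Fin (n + 1))) (i : Fin n) : Prop := π i.succ < π i.castSucc

theorem Cp_iff_strict {n : ℕ} (π : Equiv.Perm (Fin (n + 1))) (f : Fin (n + 1) → ℕ) :
    Cp (dd π) f ↔ StrictMono fun i => toLex (f i, π i) := by
  rw [Fin.strictMono_iff_lt_succ]
  apply forall_congr'
  intro i
  rw [Prod.Lex.toLex_lt_toLex, dd, not_lt]
  have : π i.castSucc ≠ π i.succ := fun h => by
    have := π.injective h
    exact absurd this (Fin.castSucc_lt_succ).ne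
  constructor
  · rintro (h | h)
    · exact Or.inl h
    · exact Or.inr ⟨h.2, lt_of_le_of_ne h.1 this⟩
  · rintro (h | h)
    · exact Or.inl h
    · exact Or.inr ⟨h.2.le, h.1⟩

theorem sort_of {n : ℕ} {π : Equiv.Perm (Fin (n + 1))} {f : Fin (n + 1) → ℕ} (h : Cp (dd π) f) :
    π = Tuple.sort (f ∘ π.symm) := by
  rw [Tuple.eq_sort_iff]
  have e : (f ∘ π.symm) ∘ π = f := by funext i; simp
  rw [e]
  refine ⟨Cp_mono h, ?_⟩
  intro i j hij hf
  simp only [Function.comp, Equiv.symm_apply_apply] at hf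
  have := (Cp_iff_strict π f).1 h hij
  rw [Prod.Lex.toLex_lt_toLex] at this
  rcases this with h | h
  · exact absurd hf (ne_of_lt h)
  · exact h.2

theorem sum_S_perm (n m : ℕ) :
    ∑ π : Equiv.Perm (Fin (n + 1)), (S m (dd π)).card = m ^ (n + 1) := by
  rw [← Finset.card_sigma]
  have : m ^ (n + 1) = (Fintype.piFinset fun _ : Fin (n + 1) => Finset.range m).card := by simp
  rw [this]
  apply Finset.card_bij (fun p _ => p.2 ∘ p.1.symm)
  · rintro ⟨π, f⟩ h
    rw [Finset.mem_sigma, mem_S] at h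
    rw [Fintype.mem_piFinset]
    intro i
    rw [Finset.mem_range]
    exact h.2.1 _
  · rintro ⟨π, f⟩ h ⟨π', f'⟩ h' he
    rw [Finset.mem_sigma, mem_S] at h h'
    simp only at h h' he
    have h1 := sort_of h.2.2
    have h2 := sort_of h'.2.2
    rw [he] at h1
    have : π = π' := h1.trans h2.symm
    subst this
    congr 1
    funext i
    have := congrFun he (π i)
    simpa using this
  · intro w hw
    refine ⟨⟨Tuple.sort w, w ∘ Tuple.sort w⟩, ?_, ?_⟩
    · rw [Finset.mem_sigma, mem_S]
      refine ⟨Finset.mem_univ _, fun i => ?_, ?_⟩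
      · rw [Fintype.mem_piFinset] at hw
        exact Finset.mem_range.1 (hw _)
      · simp only
        rw [Cp_iff_strict]
        intro i j hij
        rw [Prod.Lex.toLex_lt_toLex]
        rcases (Tuple.monotone_sort w hij.le).eq_or_lt with h | h
        · exact Or.inr ⟨h, ((Tuple.eq_sort_iff (f := w)).1 rfl).2 i j hij h⟩
        · exact Or.inl h
    · funext i; simp

theorem oneLine_fin {n : ℕ} (π : Equiv.Perm (Fin (n + 1))) (i : Fin (n + 1)) :
    oneLine (n + 1) π (i + 1) = (π i : ℕ) + 1 := by
  rw [oneLine, dif_pos ⟨by omega, by omega⟩]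
  congr 2

theorem pow_des {R : Type*} [CommRing R] (x : R) {n : ℕ} (π : Equiv.Perm (Fin (n + 1))) :
    x ^ des (n + 1) π = ∏ i : Fin n, if dd π i then x else 1 := by
  rw [Finset.prod_ite, Finset.prod_const_one, mul_one, Finset.prod_const]
  congr 1
  rw [des]
  symm
  apply Finset.card_bij (fun (i : Fin n) _ => (i : ℕ) + 1)
  · intro i hi
    rw [Finset.mem_filter] at hi ⊢
    refine ⟨by rw [Finset.mem_Icc]; omega, ?_⟩
    have h1 := oneLine_fin π i.succ
    have h2 := oneLine_fin π i.castSucc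
    rw [Fin.val_succ] at h1
    rw [Fin.val_castSucc] at h2
    rw [h1, h2]
    have := hi.2
    rw [dd, Fin.lt_def] at this
    omega
  · intro i _ j _ h
    apply Fin.ext; omega
  · intro k hk
    rw [Finset.mem_filter, Finset.mem_Icc] at hk
    refine ⟨⟨k - 1, by omega⟩, ?_, by simp; omega⟩
    rw [Finset.mem_filter]
    refine ⟨Finset.mem_univ _, ?_⟩
    have h1 := oneLine_fin π (Fin.succ ⟨k - 1, by omega⟩)
    have h2 := oneLine_fin π (Fin.castSucc ⟨k - 1, by omega⟩)
    rw [Fin.val_succ] at h1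
    rw [Fin.val_castSucc] at h2
    simp only at h1 h2
    rw [show k - 1 + 1 = k by omega] at h1 h2
    have := hk.2
    rw [h1, h2] at this
    rw [dd, Fin.lt_def]
    omega

theorem euler_ser (n : ℕ) : ((eulerianA (n + 1) : Polynomial ℚ) : ℚ⟦X⟧) =
    (1 - X) ^ (n + 2) * mk fun m => (m : ℚ) ^ (n + 1) := by
  have h : (mk fun m => (m : ℚ) ^ (n + 1)) = ∑ π : Equiv.Perm (Fin (n + 1)),
      mk fun m => ((S m (dd π)).card : ℚ) := by
    ext m
    rw [map_sum, coeff_mk]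
    simp only [coeff_mk]
    rw [← Nat.cast_pow, ← sum_S_perm]
    push_cast; rfl
  rw [h, Finset.mul_sum, eulerianA, ← Polynomial.coeToPowerSeries.ringHom_apply, map_sum]
  apply Finset.sum_congr rfl
  intro π _
  rw [ser_S, ← pow_des]
  simp [pow_succ, mul_comm]

end PfD

namespace PfE
open PowerSeries PfD

def del {n : ℕ} (d : ℕ → Prop) (ε : Fin (n + 1) → Bool) (i : Fin n) : Prop :=
  (¬ d (i + 1) ∧ ε i.succ = false) ∨ (d (i + 1) ∧ ε i.castSucc = true)

def T {R : Type*} [CommRing R] (x : R) (d : ℕ → Prop) (n : ℕ) (φ : Bool → R) : R :=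
  ∑ ε : Fin (n + 1) → Bool, (∏ i : Fin n, if del d ε i then x else 1) * φ (ε (Fin.last n))

theorem T_succ {R : Type*} [CommRing R] (x : R) (d : ℕ → Prop) (n : ℕ) (φ : Bool → R) :
    T x d (n + 1) φ = T x d n (fun b' => ∑ b : Bool,
      (if (¬ d (n + 1) ∧ b = false) ∨ (d (n + 1) ∧ b' = true) then x else 1) * φ b) := by
  unfold T
  rw [← (Fin.snocEquiv (fun _ : Fin (n + 2) => Bool)).sum_comp, Fintype.sum_prod_type,
    Finset.sum_comm]
  apply Finset.sum_congr rfl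
  intro ε _
  rw [Finset.mul_sum]
  apply Finset.sum_congr rfl
  intro b _
  rw [Fin.prod_univ_castSucc, mul_assoc]
  simp only [Fin.snocEquiv, Equiv.coe_fn_mk, del, Fin.succ_castSucc, Fin.snoc_castSucc,
    Fin.succ_last, Fin.snoc_last, Fin.val_castSucc, Fin.val_last]
  congr 1
  apply Finset.prod_congr rfl
  intro i _
  split_ifs with h
  · exact (if_pos h).symm
  · exact (if_neg h).symm

def pp (d : ℕ → Prop) (n : ℕ) : ℕ :=
  ((Finset.range n).filter fun j => ¬ d j ∧ d (j + 1)).card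

theorem pp_succ (d : ℕ → Prop) (n : ℕ) :
    pp d (n + 1) = pp d n + if ¬ d n ∧ d (n + 1) then 1 else 0 := by
  unfold pp
  rw [Finset.range_add_one, Finset.filter_insert]
  split_ifs with h
  · rw [Finset.card_insert_of_notMem (by simp)]
  · rfl

theorem T_val {R : Type*} [CommRing R] (x : R) (d : ℕ → Prop) (h0 : d 0) (n : ℕ) :
    (d n → ∃ e, n = 2 * pp d n + e ∧ ∀ φ : Bool → R, T x d n φ =
      (4 * x) ^ pp d n * (1 + x) ^ e * (φ false + φ true)) ∧
    (¬ d n → ∃ e, n = 2 * pp d n + e + 1 ∧ ∀ φ : Bool → R, T x d n φ =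
      2 * (4 * x) ^ pp d n * (1 + x) ^ e * (x * φ false + φ true)) := by
  induction n with
  | zero =>
    refine ⟨fun _ => ⟨0, by simp [pp], fun φ => ?_⟩, fun h => absurd h0 h⟩
    unfold T
    rw [← (Equiv.funUnique (Fin 1) Bool).symm.sum_comp]
    simp [pp, add_comm]
  | succ n ih =>
    constructor
    · intro h
      by_cases hn : d n
      · obtain ⟨e, he, hT⟩ := ih.1 hn
        refine ⟨e + 1, by simp [pp_succ, hn]; omega, fun φ => ?_⟩
        rw [T_succ, hT]
        simp [pp_succ, hn, h]
        ring
      · obtain ⟨e, he, hT⟩ := ih.2 hn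
        refine ⟨e, by simp [pp_succ, hn, h]; omega, fun φ => ?_⟩
        rw [T_succ, hT]
        simp [pp_succ, hn, h]
        ring
    · intro h
      by_cases hn : d n
      · obtain ⟨e, he, hT⟩ := ih.1 hn
        refine ⟨e, by simp [pp_succ, hn]; omega, fun φ => ?_⟩
        rw [T_succ, hT]
        simp [pp_succ, hn, h]
        ring
      · obtain ⟨e, he, hT⟩ := ih.2 hn
        refine ⟨e + 1, by simp [pp_succ, hn, h]; omega, fun φ => ?_⟩
        rw [T_succ, hT]
        simp [pp_succ, hn, h]
        ring

theorem T_one {R : Type*} [CommRing R] (x : R) (d : ℕ → Prop) (h0 : d 0) (n : ℕ) :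
    ∑ ε : Fin (n + 1) → Bool, (∏ i : Fin n, if del d ε i then x else 1) =
      2 * (4 * x) ^ pp d n * (1 + x) ^ (n - 2 * pp d n) := by
  have h : ∑ ε : Fin (n + 1) → Bool, (∏ i : Fin n, if del d ε i then x else 1) =
      T x d n (fun _ => 1) := by simp [T]
  rw [h]
  by_cases hn : d n
  · obtain ⟨e, he, hT⟩ := (T_val x d h0 n).1 hn
    rw [hT, show n - 2 * pp d n = e by omega]; ring
  · obtain ⟨e, he, hT⟩ := (T_val x d h0 n).2 hn
    rw [hT, show n - 2 * pp d n = e + 1 by omega]; ring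

def dpi {n : ℕ} (π : Equiv.Perm (Fin (n + 1))) (j : ℕ) : Prop :=
  j = 0 ∨ oneLine (n + 1) π (j + 1) < oneLine (n + 1) π j

theorem oneLine_inj {n : ℕ} (π : Equiv.Perm (Fin n)) {i j : ℕ} (hi : 1 ≤ i ∧ i ≤ n)
    (hj : 1 ≤ j ∧ j ≤ n) (h : oneLine n π i = oneLine n π j) : i = j := by
  rw [oneLine, oneLine, dif_pos hi, dif_pos hj] at h
  have := π.injective (Fin.ext (Nat.succ_injective h))
  rw [Fin.mk.injEq] at this
  omega

theorem pp_pk {n : ℕ} (π : Equiv.Perm (Fin (n + 1))) : pp (dpi π) n = pk (n + 1) π := by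
  unfold pp pk
  apply Finset.card_bij (fun j _ => j + 1)
  · intro j hj
    rw [Finset.mem_filter, Finset.mem_range] at hj
    obtain ⟨hj, h1, h2⟩ := hj
    unfold dpi at h1 h2
    push Not at h1
    rw [Finset.mem_filter, Finset.mem_Icc]
    refine ⟨by omega, ?_, ?_⟩
    · rw [show j + 1 - 1 = j by omega]
      apply lt_of_le_of_ne h1.2
      intro h
      have := oneLine_inj π (by omega) (by omega) h
      omega
    · rcases h2 with h2 | h2
      · omega
      · exact h2
  · intro i _ j _ h
    omega
  · intro k hk
    rw [Finset.mem_filter, Finset.mem_Icc] at hk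
    refine ⟨k - 1, ?_, by omega⟩
    rw [Finset.mem_filter, Finset.mem_range]
    unfold dpi
    rw [show k - 1 + 1 = k by omega]
    refine ⟨by omega, ?_, Or.inr hk.2.2⟩
    push Not
    exact ⟨by omega, hk.2.1.le⟩

theorem dpi_succ {n : ℕ} (π : Equiv.Perm (Fin (n + 1))) (i : Fin n) :
    dpi π (i + 1) ↔ dd π i := by
  have h1 := oneLine_fin π i.succ
  have h2 := oneLine_fin π i.castSucc
  rw [Fin.val_succ] at h1
  rw [Fin.val_castSucc] at h2
  rw [dpi, h1, h2, dd, Fin.lt_def]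
  omega

def sg {m : ℕ} (b : Fin (2 * m)) : ℤ := if (b : ℕ) % 2 = 1 then 1 else -1

theorem sg_cases {m : ℕ} (b : Fin (2 * m)) : sg b = 1 ∨ sg b = -1 := by
  unfold sg; split_ifs <;> simp

theorem sg_sum (m : ℕ) : ∑ b : Fin (2 * m), sg b = 0 := by
  unfold sg
  rw [Fin.sum_univ_eq_sum_range (fun b => if b % 2 = 1 then (1 : ℤ) else -1)]
  induction m with
  | zero => simp
  | succ m ih =>
    rw [show 2 * (m + 1) = 2 * m + 1 + 1 by ring, Finset.sum_range_succ, Finset.sum_range_succ, ih]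
    rw [if_neg (by omega), if_pos (by omega)]; norm_num

theorem card_Q_eq (m n : ℕ) : ((PfB.Q n (sg (m := m))).card : ℚ) =
    PfA.bb (PfA.wt (2 * m)) n := by
  have hr : StrictMono (fun b : Fin (2 * m) => ((b : ℕ) : ℤ)) := by
    intro a b h
    simpa using h
  rw [PfB.card_Q n sg_cases hr, PfC.LL_eq sg sg_cases (sg_sum m) n]
  simp

theorem strict_iff {m n : ℕ} (π : Equiv.Perm (Fin (n + 1))) (F : Fin (n + 1) → Fin (2 * m)) :
    (StrictMono fun i => toLex (F i, sg (F i) * ((π i : ℕ) : ℤ))) ↔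
      Cp (del (dpi π) (fun i => decide ((F i : ℕ) % 2 = 1))) (fun i => (F i : ℕ) / 2) := by
  rw [Fin.strictMono_iff_lt_succ]
  apply forall_congr'
  intro i
  rw [Prod.Lex.toLex_lt_toLex, del, dpi_succ, dd]
  have hne : (π i.castSucc : ℕ) ≠ π i.succ := fun h => by
    have := π.injective (Fin.ext h)
    exact absurd this (Fin.castSucc_lt_succ).ne
  simp only [Fin.lt_def, Fin.ext_iff, sg, decide_eq_true_eq, decide_eq_false_iff_not]
  generalize (π i.castSucc : ℕ) = u at *
  generalize (π i.succ : ℕ) = v at *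
  generalize (F i.castSucc : ℕ) = a at *
  generalize (F i.succ : ℕ) = b at *
  rcases Nat.mod_two_eq_zero_or_one a with ha | ha <;>
  rcases Nat.mod_two_eq_zero_or_one b with hb | hb <;> simp [ha, hb] <;> omega

theorem sum_S_Q (m n : ℕ) :
    ∑ π ∈ invSet (n + 1), ∑ ε : Fin (n + 1) → Bool, (S m (del (dpi π) ε)).card =
      (PfB.Q (n + 1) (sg (m := m))).card := by
  rw [← Finset.sum_product' (f := fun π ε => (S m (del (dpi π) ε)).card), ← Finset.card_sigma]
  symm
  apply Finset.card_bij (fun p _ => (⟨(p.1, fun i => decide ((p.2 i : ℕ) % 2 = 1)),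
    fun i => (p.2 i : ℕ) / 2⟩ : (_ : Equiv.Perm (Fin (n + 1)) × (Fin (n + 1) → Bool)) × (Fin (n + 1) → ℕ)))
  · rintro ⟨π, F⟩ h
    rw [PfB.Q, Finset.mem_filter] at h
    rw [Finset.mem_sigma, Finset.mem_product, mem_S]
    refine ⟨⟨?_, Finset.mem_univ _⟩, ?_, ?_⟩
    · rw [invSet, Finset.mem_filter]; exact ⟨Finset.mem_univ _, h.2.1⟩
    · intro i
      have := (F i).isLt
      simp only
      omega
    · exact (strict_iff π F).1 h.2.2
  · rintro ⟨π, F⟩ _ ⟨π', F'⟩ _ h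
    simp only [Sigma.mk.injEq, Prod.mk.injEq, heq_eq_eq] at h
    obtain ⟨⟨h1, h2⟩, h3⟩ := h
    rw [Prod.mk.injEq]
    refine ⟨h1, ?_⟩
    funext i
    have h2 := congrFun h2 i
    have h3 := congrFun h3 i
    simp only [decide_eq_decide] at h2 h3
    apply Fin.ext
    omega
  · rintro ⟨⟨π, ε⟩, f⟩ h
    rw [Finset.mem_sigma, Finset.mem_product, mem_S, invSet, Finset.mem_filter] at h
    obtain ⟨⟨⟨_, h1⟩, _⟩, h2, h3⟩ := h
    simp only at h1 h2 h3
    have hlt : ∀ i, 2 * f i + (ε i).toNat < 2 * m := by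
      intro i
      have := h2 i
      have := (ε i).toNat_le
      omega
    have he : (fun i => decide ((2 * f i + (ε i).toNat) % 2 = 1)) = ε := by
      funext i
      cases ε i <;> simp <;> omega
    have hf : (fun i => (2 * f i + (ε i).toNat) / 2) = f := by
      funext i
      have := (ε i).toNat_le
      omega
    refine ⟨(π, fun i => ⟨2 * f i + (ε i).toNat, hlt i⟩), ?_, ?_⟩
    · rw [PfB.Q, Finset.mem_filter]
      refine ⟨Finset.mem_univ _, h1, ?_⟩
      have := (strict_iff π (fun i => (⟨2 * f i + (ε i).toNat, hlt i⟩ : Fin (2 * m)))).2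
      simp only at this
      apply this
      rw [he, hf]
      exact h3
    · simp only [he, hf]

theorem lhs_ser (n : ℕ) : ∑ π ∈ invSet (n + 1), (2 : ℚ⟦X⟧) * (X * ((4 * X) ^ pk (n + 1) π *
    (1 + X) ^ (n - 2 * pk (n + 1) π))) = (1 - X) ^ (n + 2) *
      mk fun m => PfA.bb (PfA.wt (2 * m)) (n + 1) := by
  have h : (mk fun m : ℕ => PfA.bb (PfA.wt (2 * m)) (n + 1)) =
      ∑ π ∈ invSet (n + 1), ∑ ε : Fin (n + 1) → Bool,
        mk fun m => ((S m (del (dpi π) ε)).card : ℚ) := by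
    ext m
    rw [map_sum, coeff_mk, ← card_Q_eq, ← sum_S_Q]
    simp only [map_sum, coeff_mk]
    push_cast; rfl
  rw [h, Finset.mul_sum]
  apply Finset.sum_congr rfl
  intro π _
  rw [Finset.mul_sum]
  simp only [ser_S]
  rw [← Finset.mul_sum, T_one X (dpi π) (Or.inl rfl), pp_pk]
  ring

theorem rhs_ser (n : ℕ) : ∑ k ∈ Finset.Icc 1 n, (cnk n k : ℚ⟦X⟧) * 2 ^ k *
      ((eulerianA k : Polynomial ℚ) : ℚ⟦X⟧) * (1 - X) ^ (n - k) =
    (1 - X) ^ (n + 1) * mk fun m => ∑ k ∈ Finset.Icc 1 n, (cnk n k : ℚ) * (2 * m) ^ k := by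
  have h : (mk fun m : ℕ => ∑ k ∈ Finset.Icc 1 n, (cnk n k : ℚ) * (2 * m) ^ k) =
      ∑ k ∈ Finset.Icc 1 n, (cnk n k : ℚ⟦X⟧) * 2 ^ k * mk fun m => (m : ℚ) ^ k := by
    ext m
    rw [map_sum, coeff_mk]
    apply Finset.sum_congr rfl
    intro k _
    have : (cnk n k : ℚ⟦X⟧) * 2 ^ k = C ((cnk n k : ℚ) * 2 ^ k) := by
      rw [map_mul, map_pow, map_natCast, map_ofNat]
    rw [this, coeff_C_mul, coeff_mk]
    ring
  rw [h, Finset.mul_sum]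
  apply Finset.sum_congr rfl
  intro k hk
  rw [Finset.mem_Icc] at hk
  obtain ⟨k, rfl⟩ : ∃ j, k = j + 1 := ⟨k - 1, by omega⟩
  have hp : (1 - X : ℚ⟦X⟧) ^ (n + 1) = (1 - X) ^ (k + 2) * (1 - X) ^ (n - (k + 1)) := by
    rw [← pow_add]; congr 1; omega
  rw [euler_ser, hp]
  ring

theorem main (n : ℕ) :
    ((n + 1).factorial : Polynomial ℚ)
        * ∑ π ∈ invSet (n + 1),
            (4 : Polynomial ℚ) ^ (pk (n + 1) π + 1) * Polynomial.X ^ (pk (n + 1) π + 1)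
              * (1 + Polynomial.X) ^ (n + 1 - 1 - 2 * pk (n + 1) π)
      = 2 * ∑ k ∈ Finset.Icc 1 (n + 1),
          (cnk (n + 1) k : Polynomial ℚ) * 2 ^ k * eulerianA k
            * (1 - Polynomial.X) ^ (n + 1 - k) := by
  apply Polynomial.coe_injective
  have hR := rhs_ser (n + 1)
  have hL := lhs_ser n
  have hc : (mk fun m : ℕ => ∑ k ∈ Finset.Icc 1 (n + 1), (cnk (n + 1) k : ℚ) * (2 * m) ^ k) =
      ((n + 1).factorial : ℚ⟦X⟧) * mk fun m : ℕ => PfA.bb (PfA.wt (2 * m)) (n + 1) := by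
    ext m
    have : ((n + 1).factorial : ℚ⟦X⟧) = C ((n + 1).factorial : ℚ) := by simp
    rw [this, coeff_C_mul, coeff_mk, coeff_mk, PfA.sum_good, if_neg (by omega), PfA.sum_perm]
  rw [← Polynomial.coeToPowerSeries.ringHom_apply, ← Polynomial.coeToPowerSeries.ringHom_apply]
  simp only [map_mul, map_sum, map_pow, map_natCast, map_ofNat, map_add, map_sub, map_one]
  simp only [Polynomial.coeToPowerSeries.ringHom_apply, Polynomial.coe_X]
  rw [hR, hc, mul_left_comm ((1 - X) ^ (n + 1 + 1)), ← hL, mul_left_comm 2]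
  congr 1
  rw [Finset.mul_sum]
  apply Finset.sum_congr rfl
  intro π _
  rw [show n + 1 - 1 = n by omega]
  ring

end PfE

theorem stmt10 (n : ℕ) (hn : 1 ≤ n) :
    (n.factorial : Polynomial ℚ)
        * ∑ π ∈ invSet n,
            (4 : Polynomial ℚ) ^ (pk n π + 1) * Polynomial.X ^ (pk n π + 1)
              * (1 + Polynomial.X) ^ (n - 1 - 2 * pk n π)
      = 2 * ∑ k ∈ Finset.Icc 1 n,
          (cnk n k : Polynomial ℚ) * 2 ^ k * eulerianA k
            * (1 - Polynomial.X) ^ (n - k) := by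
  obtain ⟨m, rfl⟩ : ∃ m, n = m + 1 := ⟨n - 1, by omega⟩
  exact PfE.main m

end
end

section
/- Let n ≥ 1. Then the following identity of polynomials in ℚ[t] holds: n! · Σ_{π ∈ 𝔦_n} t^{des(π)+1} = Σ_{k=1}^{n} b_{n,k} · A_k(t) (1−t)^{n−k}, where b_{n,k} is the number of permutations π of [n] such that π² has exactly k cycles (counting fixed points as cycles of length 1). -/
open scoped Classical

noncomputable section

theorem pa1 {α : Type*} (ρ : Equiv.Perm α) (x : α) : ρ (ρ⁻¹ x) = x := by simp

theorem pa2 {α : Type*} (ρ : Equiv.Perm α) (x : α) : ρ⁻¹ (ρ x) = x := by simp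

theorem auxB {α : Type*} [LinearOrder α] [Finite α] (n : ℕ) (sw : α → α) :
    Nat.card {p : (Fin n → α) × Equiv.Perm (Fin n) // p.1 ∘ p.2 = sw ∘ p.1} =
    n.factorial * Nat.card {g : Fin n → α // Monotone g ∧
      ∃ σ : Equiv.Perm (Fin n), g ∘ σ = sw ∘ g} := by
  let s0 : (Fin n → α) → Equiv.Perm (Fin n) := fun g =>
    if h : ∃ σ : Equiv.Perm (Fin n), g ∘ σ = sw ∘ g then h.choose else 1
  have hs0 : ∀ g, (∃ σ : Equiv.Perm (Fin n), g ∘ σ = sw ∘ g) → g ∘ (s0 g) = sw ∘ g := by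
    intro g h
    simp only [s0, dif_pos h]
    exact h.choose_spec
  have e1 : {p : (Fin n → α) × Equiv.Perm (Fin n) // p.1 ∘ p.2 = sw ∘ p.1} ≃
      {p : (Fin n → α) × Equiv.Perm (Fin n) // Monotone (p.1 ∘ p.2) ∧
        ∃ σ : Equiv.Perm (Fin n), p.1 ∘ σ = sw ∘ p.1} := by
    refine Equiv.subtypeEquiv (Equiv.prodShear (Equiv.refl _)
      (fun g => Equiv.mulRight ((s0 g)⁻¹ * Tuple.sort g))) ?_
    rintro ⟨g, σ⟩
    simp only [Equiv.prodShear_apply, Equiv.refl_apply, Equiv.coe_mulRight]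
    constructor
    · intro h
      have h0 := hs0 g ⟨σ, h⟩
      refine ⟨?_, σ, h⟩
      have h1 : g ∘ (σ * ((s0 g)⁻¹ * Tuple.sort g) : Equiv.Perm (Fin n)) = g ∘ Tuple.sort g := by
        funext i
        have a := congrFun h ((s0 g)⁻¹ (Tuple.sort g i))
        have b := congrFun h0 ((s0 g)⁻¹ (Tuple.sort g i))
        simp only [Function.comp_apply, Equiv.Perm.mul_apply, pa1] at a b ⊢
        rw [a, b]
      rw [h1]
      exact Tuple.monotone_sort g
    · rintro ⟨hm, hex⟩
      have h0 := hs0 g hex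
      have h1 := Tuple.unique_monotone hm (Tuple.monotone_sort g)
      funext i
      have a := congrFun h1 ((Tuple.sort g)⁻¹ (s0 g i))
      have b := congrFun h0 i
      simp only [Function.comp_apply, Equiv.Perm.mul_apply, pa1,
        pa2] at a b ⊢
      rw [a, b]
  have e2 : {p : (Fin n → α) × Equiv.Perm (Fin n) // Monotone (p.1 ∘ p.2) ∧
        ∃ σ : Equiv.Perm (Fin n), p.1 ∘ σ = sw ∘ p.1} ≃
      {g : Fin n → α // Monotone g ∧ ∃ σ : Equiv.Perm (Fin n), g ∘ σ = sw ∘ g} ×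
        Equiv.Perm (Fin n) :=
    { toFun := fun p => (⟨p.1.1 ∘ p.1.2, p.2.1, by
        obtain ⟨σ, h⟩ := p.2.2
        refine ⟨p.1.2⁻¹ * σ * p.1.2, ?_⟩
        funext i
        have a := congrFun h (p.1.2 i)
        simpa using a⟩, p.1.2)
      invFun := fun q => ⟨(q.1.1 ∘ (q.2⁻¹ : Equiv.Perm (Fin n)), q.2), by
        have : (q.1.1 ∘ (q.2⁻¹ : Equiv.Perm (Fin n))) ∘ q.2 = q.1.1 := by
          funext i; simp
        simp only [this]
        refine ⟨q.1.2.1, ?_⟩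
        obtain ⟨σ, h⟩ := q.1.2.2
        refine ⟨q.2 * σ * q.2⁻¹, ?_⟩
        funext i
        have a := congrFun h (q.2⁻¹ i)
        simpa using a⟩
      left_inv := by
        rintro ⟨⟨g, τ⟩, h⟩
        simp only [Subtype.mk.injEq, Prod.mk.injEq, and_true]
        funext i; simp
      right_inv := by
        rintro ⟨⟨g, h⟩, τ⟩
        simp only [Subtype.mk.injEq, Prod.mk.injEq, and_true]
        funext i; simp }
  rw [Nat.card_congr (e1.trans e2), Nat.card_prod, mul_comm]
  simp [Nat.card_eq_fintype_card, Fintype.card_perm]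

def swL (r : ℕ) (x : Fin r ×ₗ Fin r) : Fin r ×ₗ Fin r := toLex ((ofLex x).2, (ofLex x).1)

theorem auxW (n r : ℕ) :
    Nat.card {p : (Fin n → Fin r) × Equiv.Perm (Fin n) // p.1 ∘ (p.2 ^ 2 : Equiv.Perm (Fin n)) = p.1} =
    Nat.card {p : (Fin n → Fin r ×ₗ Fin r) × Equiv.Perm (Fin n) // p.1 ∘ p.2 = swL r ∘ p.1} := by
  refine Nat.card_congr
    { toFun := fun p => ⟨(fun i => toLex (p.1.1 i, p.1.1 (p.1.2 i)), p.1.2), ?_⟩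
      invFun := fun p => ⟨(fun i => (ofLex (p.1.1 i)).1, p.1.2), ?_⟩
      left_inv := ?_
      right_inv := ?_ }
  · obtain ⟨⟨w, σ⟩, h⟩ := p
    funext i
    have := congrFun h i
    simp only [swL, Function.comp_apply, pow_two, Equiv.Perm.mul_apply, ofLex_toLex] at this ⊢
    rw [this]
  · obtain ⟨⟨g, σ⟩, h⟩ := p
    funext i
    have a := congrFun h i
    have b := congrFun h (σ i)
    simp only [swL, Function.comp_apply, pow_two, Equiv.Perm.mul_apply] at a b ⊢
    rw [b, a]
    simp
  · rintro ⟨⟨w, σ⟩, h⟩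
    simp
  · rintro ⟨⟨g, σ⟩, h⟩
    simp only [Subtype.mk.injEq, Prod.mk.injEq, and_true]
    funext i
    have a := congrFun h i
    simp only [Function.comp_apply] at a
    rw [a]
    simp [swL]

theorem lexmono {n r : ℕ} (f h : Fin n → Fin r) :
    Monotone (fun i => toLex (f i, h i)) ↔
      Monotone f ∧ ∀ i j, i < j → f i = f j → h i ≤ h j := by
  constructor
  · intro H
    refine ⟨fun i j hij => ?_, fun i j hij e => ?_⟩
    · have := Prod.Lex.toLex_le_toLex.1 (H hij)
      rcases this with h | h
      · exact h.le
      · exact h.1.le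
    · have := Prod.Lex.toLex_le_toLex.1 (H hij.le)
      rcases this with h | h
      · exact absurd e h.ne
      · exact h.2
  · rintro ⟨hf, hh⟩ i j hij
    rcases hij.eq_or_lt with rfl | hij
    · exact le_rfl
    · apply Prod.Lex.toLex_le_toLex.2
      rcases (hf hij.le).lt_or_eq with h | h
      · exact Or.inl h
      · exact Or.inr ⟨h, hh i j hij h⟩

theorem auxS (n r : ℕ) :
    Nat.card {g : Fin n → Fin r ×ₗ Fin r // Monotone g ∧
      ∃ σ : Equiv.Perm (Fin n), g ∘ σ = swL r ∘ g} =
    Nat.card {h : Fin n → Fin r // (Tuple.sort h) ^ 2 = 1} := by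
  have key : ∀ f h : Fin n → Fin r, Monotone (fun i => toLex (f i, h i)) →
      ∀ σ : Equiv.Perm (Fin n), (∀ i, f (σ i) = h i) → (∀ i, h (σ i) = f i) →
      (∀ i, h (Tuple.sort h i) = f i) ∧ (Tuple.sort h) ^ 2 = 1 := by
    intro f h hm σ h1 h2
    have hm' := (lexmono f h).1 hm
    set ρ := Tuple.sort h with hρ
    have hs := Tuple.eq_sort_iff.1 hρ
    have hf : ∀ i, h (ρ i) = f i := by
      have e : h ∘ σ = f := funext h2
      have := Tuple.unique_monotone hs.1 (τ := σ) (by rw [e]; exact hm'.1)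
      intro i
      rw [← h2]
      exact congrFun this i
    refine ⟨hf, ?_⟩
    have hfr : ∀ i, f (ρ i) = h i := by
      have m2 : Monotone (fun i => toLex (f i, f (ρ i))) := by
        rw [lexmono]
        refine ⟨hm'.1, fun i j hij e => hm'.1 (hs.2 i j hij ?_).le⟩
        rw [hf, hf, e]
      have e : (fun i => toLex (f i, h i)) ∘ (σ * ρ : Equiv.Perm (Fin n)) =
          (fun i => toLex (f i, f (ρ i))) := by
        funext i
        simp [h1, h2, hf]
      have := Tuple.unique_monotone (f := fun i => toLex (f i, h i)) (σ := σ * ρ) (τ := 1)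
        (by rw [e]; exact m2) (by simpa using hm)
      rw [e] at this
      intro i
      have := congrFun this i
      simpa using this
    have : ρ⁻¹ = Tuple.sort h := by
      rw [Tuple.eq_sort_iff]
      have hh : ∀ i, h (ρ⁻¹ i) = f i := by
        intro i
        rw [← hfr]; simp
      refine ⟨?_, ?_⟩
      · have : h ∘ (ρ⁻¹ : Equiv.Perm (Fin n)) = f := funext hh
        rw [this]; exact hm'.1
      · intro i j hij e
        rw [hh, hh] at e
        by_contra hc
        obtain ⟨a, rfl⟩ := ρ.surjective j
        obtain ⟨b, rfl⟩ := ρ.surjective i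
        simp only [pa2, not_lt] at hc
        rcases hc.eq_or_lt with rfl | hc
        · exact lt_irrefl _ hij
        · have q := hm'.2 _ _ hij e
          rw [hf, hf] at q
          have q2 := le_antisymm q (hm'.1 hc.le)
          have := hs.2 a b hc (by rw [hf, hf, q2])
          exact lt_asymm this hij
    rw [← hρ] at this
    rw [pow_two]
    nth_rewrite 1 [← this]
    simp
  refine Nat.card_congr
    { toFun := fun g => ⟨fun i => (ofLex (g.1 i)).2, ?_⟩
      invFun := fun h => ⟨fun i => toLex (h.1 (Tuple.sort h.1 i), h.1 i), ?_⟩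
      left_inv := ?_
      right_inv := ?_ }
  · obtain ⟨g, hg, σ, hσ⟩ := g
    refine (key (fun i => (ofLex (g i)).1) (fun i => (ofLex (g i)).2) hg σ ?_ ?_).2
    · intro i
      have := congrFun hσ i
      simp only [Function.comp_apply] at this
      simp [this, swL]
    · intro i
      have := congrFun hσ i
      simp only [Function.comp_apply] at this
      simp [this, swL]
  · obtain ⟨h, hh⟩ := h
    have hs := Tuple.eq_sort_iff.1 (rfl : Tuple.sort h = Tuple.sort h)
    have hh' : ∀ i, Tuple.sort h (Tuple.sort h i) = i := by
      intro i
      rw [← Equiv.Perm.mul_apply, ← pow_two, hh]; rfl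
    refine ⟨(lexmono _ _).2 ⟨hs.1, ?_⟩, Tuple.sort h, ?_⟩
    · intro i j hij e
      have := hs.1 (hs.2 i j hij e).le
      simpa [hh'] using this
    · funext i
      simp [hh', swL]
  · rintro ⟨g, hg, σ, hσ⟩
    have := (key (fun i => (ofLex (g i)).1) (fun i => (ofLex (g i)).2) hg σ (by
      intro i
      have := congrFun hσ i
      simp only [Function.comp_apply] at this
      simp [this, swL]) (by
      intro i
      have := congrFun hσ i
      simp only [Function.comp_apply] at this
      simp [this, swL])).1
    simp only [Subtype.mk.injEq]
    funext i
    rw [this]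
    rfl
  · rintro ⟨h, hh⟩
    rfl

def VV (n r : ℕ) (π : Equiv.Perm (Fin n)) : Type :=
  {f : Fin n → Fin r // Monotone f ∧ ∀ i j, i < j → f i = f j → π i < π j}

instance (n r : ℕ) (π : Equiv.Perm (Fin n)) : Finite (VV n r π) := by
  unfold VV; infer_instance

theorem auxV (n r : ℕ) (P : Equiv.Perm (Fin n) → Prop) :
    ∑ π ∈ Finset.univ.filter P, Nat.card (VV n r π) =
    Nat.card {h : Fin n → Fin r // P (Tuple.sort h)} := by
  have : ∀ π, Nat.card (VV n r π) = Nat.card {h : Fin n → Fin r // Tuple.sort h = π} := by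
    intro π
    refine Nat.card_congr (Equiv.subtypeEquiv (Equiv.arrowCongr π (Equiv.refl _)) ?_)
    intro f
    rw [eq_comm (b := π), Tuple.eq_sort_iff]
    have : ∀ i, (Equiv.arrowCongr π (Equiv.refl (Fin r))) f (π i) = f i := by
      intro i; simp
    simp only [this]
    have h2 : (Equiv.arrowCongr π (Equiv.refl (Fin r))) f ∘ π = f := by
      funext i; simp
    rw [h2]
  simp only [this, Nat.card_eq_fintype_card, Fintype.card_subtype]
  rw [← Finset.card_biUnion]
  · congr 1
    ext h
    simp
  · intro a _ b _ hab
    rw [Function.onFun, Finset.disjoint_left]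
    intro h h1 h2
    simp at h1 h2
    exact hab (h1 ▸ h2)

theorem auxC (n r : ℕ) (σ : Equiv.Perm (Fin n)) :
    Nat.card {w : Fin n → Fin r // w ∘ σ = w} = r ^ numCycles n σ := by
  have e : {w : Fin n → Fin r // w ∘ σ = w} ≃
      (Quotient (Equiv.Perm.SameCycle.setoid σ) → Fin r) :=
    { toFun := fun w => Quotient.lift w.1 (by
        rintro a b ⟨k, rfl⟩
        have h : ∀ x, w.1 (σ x) = w.1 x := fun x => congrFun w.2 x
        have h2 : ∀ k : ℕ, ∀ x, w.1 ((σ ^ k) x) = w.1 x := by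
          intro k
          induction k with
          | zero => simp
          | succ k ih => intro x; rw [pow_succ', Equiv.Perm.mul_apply, h, ih]
        obtain ⟨m, hm⟩ := (isOfFinOrder_of_finite σ).mem_powers_iff_mem_zpowers.2 ⟨k, rfl⟩
        simp only at hm
        rw [← hm, h2])
      invFun := fun u => ⟨fun i => u (Quotient.mk _ i), by
        funext i
        simp only [Function.comp_apply]
        congr 1
        exact Quotient.sound (Equiv.Perm.sameCycle_apply_left.2 (Equiv.Perm.SameCycle.refl _ _))⟩
      left_inv := fun w => rfl
      right_inv := fun u => by
        funext q
        induction q using Quotient.inductionOn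
        rfl }
  rw [Nat.card_congr e, Nat.card_fun]
  have e2 : Quotient (Equiv.Perm.SameCycle.setoid σ) ≃
      {c // c ∈ σ.cycleFactorsFinset} ⊕ {x // x ∉ σ.support} := by
    refine Equiv.ofBijective (Quotient.lift (fun x => if h : x ∈ σ.support then
      Sum.inl ⟨σ.cycleOf x, Equiv.Perm.cycleOf_mem_cycleFactorsFinset_iff.2 h⟩
      else Sum.inr ⟨x, h⟩) ?_) ⟨?_, ?_⟩
    · intro a b hab
      have hab : σ.SameCycle a b := hab
      by_cases ha : a ∈ σ.support
      · have hb : b ∈ σ.support := by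
          rw [Equiv.Perm.mem_support] at ha ⊢
          intro hb; exact ha (hab.apply_eq_self_iff.2 hb)
        simp only [ha, hb, dif_pos, Sum.inl.injEq, Subtype.mk.injEq]
        exact hab.cycleOf_eq
      · have hb : b ∉ σ.support := by
          rw [Equiv.Perm.notMem_support] at ha ⊢
          exact (hab.apply_eq_self_iff.1 ha)
        simp only [ha, hb, dif_neg, not_false_eq_true, Sum.inr.injEq, Subtype.mk.injEq]
        rw [Equiv.Perm.notMem_support] at ha
        exact hab.eq_of_left ha
    · intro a b
      induction a using Quotient.inductionOn with | _ a => ?_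
      induction b using Quotient.inductionOn with | _ b => ?_
      intro h
      apply Quotient.sound
      show σ.SameCycle a b
      simp only [Quotient.lift_mk] at h
      split_ifs at h with h1 h2 h2
      · simp only [Sum.inl.injEq, Subtype.mk.injEq] at h
        have : b ∈ (σ.cycleOf a).support := by
          rw [h, Equiv.Perm.mem_support_cycleOf_iff]
          exact ⟨Equiv.Perm.SameCycle.refl _ _, h2⟩
        exact (Equiv.Perm.mem_support_cycleOf_iff.1 this).1
      · simp only [Sum.inr.injEq, Subtype.mk.injEq] at h
        rw [h]
    · rintro (⟨c, hc⟩ | ⟨x, hx⟩)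
      · obtain ⟨x, hx⟩ := (Equiv.Perm.mem_cycleFactorsFinset_iff.1 hc).1.nonempty_support
        refine ⟨Quotient.mk _ x, ?_⟩
        have := Equiv.Perm.mem_cycleFactorsFinset_support_le hc hx
        simp only [Quotient.lift_mk, dif_pos this, Sum.inl.injEq, Subtype.mk.injEq]
        exact (Equiv.Perm.cycle_is_cycleOf hx hc).symm
      · exact ⟨Quotient.mk _ x, by simp only [Quotient.lift_mk, dif_neg hx]⟩
  rw [Nat.card_congr e2, Nat.card_sum]
  simp only [numCycles, fullCycleType, Multiset.card_add, Multiset.card_replicate,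
    Equiv.Perm.cycleType_def, Multiset.card_map, Nat.card_eq_fintype_card, Fintype.card_coe,
    Fintype.card_fin]
  congr 2
  have : Fintype.card {x // x ∉ σ.support} = (σ.supportᶜ).card := by
    rw [Fintype.card_subtype]; congr 1; ext; simp
  rw [this, Finset.card_compl, Fintype.card_fin]

def FF (n : ℕ) (d : Fin n → ℕ) (r : ℕ) : Type :=
  {f : Fin (n + 1) → ℕ // f (Fin.last n) < r ∧ ∀ i : Fin n, f i.castSucc + d i ≤ f i.succ}

def FFequiv (n : ℕ) (d : Fin (n + 1) → ℕ) (r : ℕ) :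
    FF (n + 1) d r ≃ Σ v : Fin r, FF n (fun i => d i.castSucc) (v + 1 - d (Fin.last n)) where
  toFun f := ⟨⟨f.1 (Fin.last _), f.2.1⟩, ⟨fun i => f.1 i.castSucc, by
    have : f.1 (Fin.last n).castSucc + d (Fin.last n) ≤ f.1 (Fin.last (n + 1)) :=
      f.2.2 (Fin.last _)
    show f.1 (Fin.last n).castSucc < f.1 (Fin.last _) + 1 - d (Fin.last n)
    omega, fun i => by
      have := f.2.2 i.castSucc
      rwa [Fin.succ_castSucc] at this⟩⟩
  invFun q := ⟨Fin.snoc (α := fun _ => ℕ) q.2.1 q.1.1, by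
    refine ⟨by simp, fun i => ?_⟩
    induction i using Fin.lastCases with
    | last =>
      have := q.2.2.1
      rw [Fin.snoc_castSucc, Fin.succ_last, Fin.snoc_last]
      omega
    | cast i =>
      have := q.2.2.2 i
      rw [Fin.snoc_castSucc, Fin.succ_castSucc, Fin.snoc_castSucc]
      exact this⟩
  left_inv f := by
    apply Subtype.ext
    funext i
    induction i using Fin.lastCases with
    | last => simp
    | cast i => simp
  right_inv q := by
    obtain ⟨v, f, hf⟩ := q
    have h1 : ∀ (v v' : Fin r) (hv : v = v') (f f' : Fin (n + 1) → ℕ) (hff : f = f') h h',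
        (⟨v, ⟨f, h⟩⟩ : Σ v : Fin r, FF n (fun i => d i.castSucc) (v + 1 - d (Fin.last n))) =
          ⟨v', ⟨f', h'⟩⟩ := by
      rintro v _ rfl f _ rfl h h'
      rfl
    apply h1
    · simp
    · funext i; simp

theorem FF_finite (n : ℕ) : ∀ (d : Fin n → ℕ) (r : ℕ), Finite (FF n d r) := by
  induction n with
  | zero =>
    intro d r
    refine Finite.of_injective (β := Fin r) (fun f => ⟨f.1 0, f.2.1⟩) ?_
    intro f g h
    apply Subtype.ext
    funext i
    rw [show i = 0 from Fin.ext (by simp)]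
    simpa using h
  | succ n ih =>
    intro d r
    have := ih
    exact Finite.of_equiv _ (FFequiv n d r).symm

theorem FF_zero (d : Fin 0 → ℕ) (r : ℕ) : Nat.card (FF 0 d r) = r := by
  have : FF 0 d r ≃ Fin r :=
    { toFun := fun f => ⟨f.1 0, f.2.1⟩
      invFun := fun v => ⟨fun _ => v, v.2, fun i => i.elim0⟩
      left_inv := fun f => by
        apply Subtype.ext
        funext i
        rw [show i = 0 from Fin.ext (by simp)]
      right_inv := fun v => rfl }
  rw [Nat.card_congr this]; simp

theorem FF_card0 (n : ℕ) (d : Fin n → ℕ) : Nat.card (FF n d 0) = 0 := by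
  have : IsEmpty (FF n d 0) := ⟨fun f => by have := f.2.1; omega⟩
  simp

theorem FF_succ (n : ℕ) (d : Fin (n + 1) → ℕ) (r : ℕ) :
    Nat.card (FF (n + 1) d r) =
      ∑ v ∈ Finset.range r, Nat.card (FF n (fun i => d i.castSucc) (v + 1 - d (Fin.last n))) := by
  have := FF_finite n
  rw [Nat.card_congr (FFequiv n d r), Nat.card_sigma, Finset.sum_range]

theorem FF_gen (n : ℕ) : ∀ (d : Fin n → ℕ),
    (PowerSeries.mk (fun r => (Nat.card (FF n d r) : ℚ))) * (1 - PowerSeries.X) ^ (n + 2) =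
      PowerSeries.X ^ (∑ i, d i + 1) := by
  induction n with
  | zero =>
    intro d
    have h : (PowerSeries.mk (fun r => (r : ℚ))) * (1 - PowerSeries.X) =
        PowerSeries.mk 1 * PowerSeries.X := by
      ext r
      rw [mul_sub, mul_one, map_sub]
      cases r with
      | zero => simp
      | succ r => simp [PowerSeries.coeff_succ_mul_X]
    simp only [FF_zero]
    rw [zero_add, pow_two, ← mul_assoc, h, mul_right_comm, PowerSeries.mk_one_mul_one_sub_eq_one]
    simp
  | succ n ih =>
    intro d
    have h : (PowerSeries.mk (fun r => (Nat.card (FF (n + 1) d r) : ℚ))) * (1 - PowerSeries.X) =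
        PowerSeries.mk (fun r => (Nat.card (FF n (fun i => d i.castSucc) r) : ℚ)) *
          PowerSeries.X ^ (d (Fin.last n)) := by
      ext r
      rw [mul_sub, mul_one, map_sub, PowerSeries.coeff_mul_X_pow']
      cases r with
      | zero => simp [FF_card0]
      | succ r =>
        rw [PowerSeries.coeff_succ_mul_X]
        simp only [PowerSeries.coeff_mk, FF_succ, Finset.sum_range_succ]
        split_ifs with hd
        · push_cast; ring
        · rw [Nat.sub_eq_zero_of_le (by omega), FF_card0]
          simp
    rw [show n + 1 + 2 = (n + 2) + 1 by ring, pow_succ', ← mul_assoc, h, mul_right_comm, ih,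
      Fin.sum_univ_castSucc, ← pow_add]
    congr 1
    ring

def dd (m : ℕ) (π : Equiv.Perm (Fin (m + 1))) (i : Fin m) : ℕ :=
  if π i.succ < π i.castSucc then 1 else 0

theorem des_eq (m : ℕ) (π : Equiv.Perm (Fin (m + 1))) : des (m + 1) π = ∑ i, dd m π i := by
  unfold des dd
  rw [Finset.card_filter, Nat.add_sub_cancel, ← Finset.Ico_succ_right_eq_Icc,
    Finset.sum_Ico_eq_sum_range, Finset.sum_range]
  show ∑ i : Fin m, _ = _
  refine Finset.sum_congr rfl fun i _ => ?_
  have h1 : oneLine (m + 1) π (1 + i + 1) = (π i.succ).val + 1 := by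
    unfold oneLine
    rw [dif_pos (by omega)]
    congr 3
    apply Fin.ext
    simp; omega
  have h2 : oneLine (m + 1) π (1 + i) = (π i.castSucc).val + 1 := by
    unfold oneLine
    rw [dif_pos (by omega)]
    congr 3
    apply Fin.ext
    simp
  rw [h1, h2]
  congr 1
  simp

theorem VV_FF (m r : ℕ) (π : Equiv.Perm (Fin (m + 1))) :
    Nat.card (VV (m + 1) r π) = Nat.card (FF m (dd m π) r) := by
  have mono : ∀ f : FF m (dd m π) r, Monotone f.1 := fun f =>
    Fin.monotone_iff_le_succ.2 fun i => le_trans (Nat.le_add_right _ _) (f.2.2 i)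
  refine Nat.card_congr
    { toFun := fun f => ⟨fun i => (f.1 i).val, (f.1 _).2, ?_⟩
      invFun := fun f => ⟨fun i => ⟨f.1 i, lt_of_le_of_lt (mono f (Fin.le_last i)) f.2.1⟩, ?_, ?_⟩
      left_inv := fun f => rfl
      right_inv := fun f => rfl }
  · intro i
    have h1 := f.2.1 (Fin.castSucc_lt_succ (i := i)).le
    have h2 := f.2.2 _ _ (Fin.castSucc_lt_succ (i := i))
    unfold dd
    split_ifs with h
    · rcases h1.lt_or_eq with h3 | h3
      · exact h3
      · exact absurd h (lt_asymm (h2 h3))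
    · exact h1
  · intro i j hij
    exact mono f hij
  · have hs : StrictMono (fun i => toLex (f.1 i, π i)) := by
      rw [Fin.strictMono_iff_lt_succ]
      intro i
      rw [Prod.Lex.toLex_lt_toLex]
      have h1 := f.2.2 i
      unfold dd at h1
      split_ifs at h1 with h
      · exact Or.inl h1
      · rcases (show f.1 i.castSucc ≤ f.1 i.succ from h1).lt_or_eq with h3 | h3
        · exact Or.inl h3
        · refine Or.inr ⟨h3, lt_of_le_of_ne (not_lt.1 h) ?_⟩
          intro h4
          exact (Fin.castSucc_lt_succ (i := i)).ne (π.injective h4)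
    intro i j hij e
    have := Prod.Lex.toLex_lt_toLex.1 (hs hij)
    rcases this with h | h
    · simp at e h; omega
    · exact h.2

theorem VV_gen (n : ℕ) (hn : 1 ≤ n) (π : Equiv.Perm (Fin n)) :
    (PowerSeries.mk (fun r => (Nat.card (VV n r π) : ℚ))) * (1 - PowerSeries.X) ^ (n + 1) =
      PowerSeries.X ^ (des n π + 1) := by
  obtain ⟨m, rfl⟩ : ∃ m, n = m + 1 := ⟨n - 1, by omega⟩
  simp only [VV_FF, des_eq]
  exact FF_gen m _

theorem auxMain (n r : ℕ) :
    n.factorial * ∑ π ∈ invSet n, Nat.card (VV n r π) =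
      ∑ σ : Equiv.Perm (Fin n), r ^ numCycles n (σ ^ 2) := by
  have h1 : ∑ π ∈ invSet n, Nat.card (VV n r π) =
      Nat.card {h : Fin n → Fin r // (Tuple.sort h) ^ 2 = 1} := by
    rw [← auxV n r (fun π => π ^ 2 = 1)]
    unfold invSet
    congr!
  rw [h1, ← auxS, ← auxB, ← auxW]
  simp only [← auxC]
  rw [← Nat.card_sigma]
  exact Nat.card_congr
    { toFun := fun p => ⟨p.1.2, ⟨p.1.1, p.2⟩⟩
      invFun := fun q => ⟨(q.2.1, q.1), q.2.2⟩
      left_inv := fun p => rfl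
      right_inv := fun q => rfl }

theorem auxE (n r : ℕ) :
    ∑ π : Equiv.Perm (Fin n), Nat.card (VV n r π) = r ^ n := by
  have := auxV n r (fun _ => True)
  simpa using this

theorem numCycles_bounds (n : ℕ) (hn : 1 ≤ n) (σ : Equiv.Perm (Fin n)) :
    numCycles n σ ∈ Finset.Icc 1 n := by
  rw [Finset.mem_Icc]
  constructor
  · by_contra hc
    have h := auxC n 0 σ
    rw [show numCycles n σ = 0 by omega] at h
    have : IsEmpty {w : Fin n → Fin 0 // w ∘ σ = w} := ⟨fun w => (w.1 ⟨0, hn⟩).elim0⟩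
    simp at h
  · have h := auxC n 2 σ
    have h2 := Nat.card_le_card_of_injective
      (Subtype.val : {w : Fin n → Fin 2 // w ∘ σ = w} → _) Subtype.val_injective
    rw [h] at h2
    simp only [Nat.card_eq_fintype_card, Fintype.card_pi, Fintype.card_fin, Finset.prod_const,
      Finset.card_univ] at h2
    exact (Nat.pow_le_pow_iff_right (by norm_num)).1 h2

theorem eulerian_gen (k : ℕ) (hk : 1 ≤ k) :
    ((eulerianA k : Polynomial ℚ) : PowerSeries ℚ) =
      PowerSeries.mk (fun r => (r : ℚ) ^ k) * (1 - PowerSeries.X) ^ (k + 1) := by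
  have h : PowerSeries.mk (fun r => (r : ℚ) ^ k) =
      ∑ π : Equiv.Perm (Fin k), PowerSeries.mk (fun r => (Nat.card (VV k r π) : ℚ)) := by
    ext r
    rw [map_sum]
    simp only [PowerSeries.coeff_mk]
    exact_mod_cast (auxE k r).symm
  rw [h, Finset.sum_mul]
  simp only [VV_gen k hk]
  unfold eulerianA
  rw [← Polynomial.coeToPowerSeries.ringHom_apply, map_sum]
  simp

theorem sum_bnk (n r : ℕ) (hn : 1 ≤ n) :
    ∑ σ : Equiv.Perm (Fin n), r ^ numCycles n (σ ^ 2) =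
      ∑ k ∈ Finset.Icc 1 n, bnk n k * r ^ k := by
  rw [← Finset.sum_fiberwise_of_maps_to (s := Finset.univ) (t := Finset.Icc 1 n)
    (g := fun σ : Equiv.Perm (Fin n) => numCycles n (σ ^ 2))
    (fun σ _ => numCycles_bounds n hn _)]
  refine Finset.sum_congr rfl fun k _ => ?_
  rw [Finset.sum_congr rfl (g := fun _ => r ^ k)
    (fun σ hσ => by rw [(Finset.mem_filter.1 hσ).2])]
  rw [Finset.sum_const, smul_eq_mul]
  unfold bnk
  congr!

theorem stmt11 (n : ℕ) (hn : 1 ≤ n) :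
    (n.factorial : Polynomial ℚ) * ∑ π ∈ invSet n, Polynomial.X ^ (des n π + 1)
      = ∑ k ∈ Finset.Icc 1 n,
          (bnk n k : Polynomial ℚ) * eulerianA k * (1 - Polynomial.X) ^ (n - k) := by
  apply Polynomial.coe_injective ℚ
  have hcast : ∀ m : ℕ, ((m : Polynomial ℚ) : PowerSeries ℚ) = (m : PowerSeries ℚ) := fun m => by
    rw [← Polynomial.coeToPowerSeries.ringHom_apply, map_natCast]
  have hL : (((n.factorial : Polynomial ℚ) * ∑ π ∈ invSet n, Polynomial.X ^ (des n π + 1) :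
      Polynomial ℚ) : PowerSeries ℚ) =
      (n.factorial : PowerSeries ℚ) * ∑ π ∈ invSet n,
        (PowerSeries.mk (fun r => (Nat.card (VV n r π) : ℚ))) * (1 - PowerSeries.X) ^ (n + 1) := by
    simp only [VV_gen n hn]
    rw [← Polynomial.coeToPowerSeries.ringHom_apply, map_mul, map_sum, map_natCast]
    simp
  have hR : ((∑ k ∈ Finset.Icc 1 n,
          (bnk n k : Polynomial ℚ) * eulerianA k * (1 - Polynomial.X) ^ (n - k) :
      Polynomial ℚ) : PowerSeries ℚ) = (∑ k ∈ Finset.Icc 1 n,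
        (bnk n k : PowerSeries ℚ) * PowerSeries.mk (fun r => (r : ℚ) ^ k)) *
          (1 - PowerSeries.X) ^ (n + 1) := by
    rw [← Polynomial.coeToPowerSeries.ringHom_apply, map_sum, Finset.sum_mul]
    refine Finset.sum_congr rfl fun k hk => ?_
    rw [Finset.mem_Icc] at hk
    rw [map_mul, map_mul, map_natCast, map_pow, map_sub, map_one]
    simp only [Polynomial.coeToPowerSeries.ringHom_apply, Polynomial.coe_X]
    rw [eulerian_gen k hk.1, show n + 1 = (k + 1) + (n - k) by omega, pow_add]
    ring
  rw [hL, hR, ← Finset.sum_mul, ← mul_assoc]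
  congr 1
  ext r
  have hc : ∀ (m : ℕ) (p : PowerSeries ℚ), PowerSeries.coeff r ((m : PowerSeries ℚ) * p) =
      m * PowerSeries.coeff r p := fun m p => by
    rw [← nsmul_eq_mul, map_nsmul, nsmul_eq_mul]
  rw [hc, map_sum, map_sum]
  simp only [hc, PowerSeries.coeff_mk]
  have := (auxMain n r).trans (sum_bnk n r hn)
  exact_mod_cast this

end
end

section
/- Let n ≥ 1. Then the following identity of polynomials in ℚ[t] holds: n! · Σ_{π ∈ 𝔦_n} t^{pk(π)+1} = Σ_{k=1, k ≡ n (mod 2)}^{n} c_{n,k} (1−t)^{(n−k)/2} P_k^{pk}(t), where P_m^{pk}(t) = Σ_{π ∈ S_m} t^{pk(π)+1} and c_{n,k} is the number of permutations π of [n] such that no cycle of π has length divisible by 4 and π² has exactly k cycles (counting fixed points as cycles of length 1). (Moreover c_{n,k} = 0 unless k ≡ n (mod 2), so the exponents (n−k)/2 appearing are nonnegative integers.) -/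
open scoped Classical

noncomputable section

def trA (d : ℕ → Prop) : ℕ → ℕ → ℕ
  | 0, _ => 1
  | (i+1), a => ∑ b ∈ Finset.range a, trA d i b + if (a % 2 = 0 ↔ d i) then trA d i a else 0

def pcount (d : ℕ → Prop) (k : ℕ) : ℕ :=
  ((Finset.range k).filter fun j => 1 ≤ j ∧ ¬ d (j-1) ∧ d j).card

def gS (d : ℕ → Prop) (i : ℕ) : PowerSeries ℚ :=
  PowerSeries.mk fun l => (trA d i (2*l) + trA d i (2*l+1) : ℚ)

def gD (d : ℕ → Prop) (i : ℕ) : PowerSeries ℚ :=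
  PowerSeries.mk fun l => (trA d i (2*l) : ℚ)

def gP (d : ℕ → Prop) (i : ℕ) : PowerSeries ℚ :=
  PowerSeries.mk fun l => ((∑ b ∈ Finset.range (2*l), trA d i b : ℕ) : ℚ)

theorem gP_eq (d : ℕ → Prop) (i : ℕ) : gP d i = PowerSeries.X * (gP d i + gS d i) := by
  ext l
  cases l with
  | zero => simp [gP]
  | succ l =>
    rw [PowerSeries.coeff_succ_X_mul]
    simp only [gP, gS, PowerSeries.coeff_mk, map_add]
    rw [show 2*(l+1) = 2*l+1+1 by ring, Finset.sum_range_succ, Finset.sum_range_succ]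
    push_cast; ring

theorem gD_asc (d : ℕ → Prop) (i : ℕ) (h : ¬ d i) : gD d (i+1) = gP d i := by
  ext l; simp [gD, gP, trA, h]

theorem gS_asc (d : ℕ → Prop) (i : ℕ) (h : ¬ d i) : gS d (i+1) = 2 * gP d i + gS d i := by
  ext l
  rw [two_mul]
  simp only [gS, gP, PowerSeries.coeff_mk, trA, h, map_add]
  rw [Finset.sum_range_succ]
  simp [show (2*l+1)%2 = 1 by omega]
  ring

theorem gD_desc (d : ℕ → Prop) (i : ℕ) (h : d i) : gD d (i+1) = gP d i + gD d i := by
  ext l; simp [gD, gP, trA, h]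

theorem gS_desc (d : ℕ → Prop) (i : ℕ) (h : d i) : gS d (i+1) = 2 * gD d (i+1) := by
  ext l
  rw [two_mul]
  simp only [gS, gD, PowerSeries.coeff_mk, trA, h, map_add]
  rw [Finset.sum_range_succ]
  simp [show (2*l+1)%2 = 1 by omega]

theorem gS_main (d : ℕ → Prop) (v T : PowerSeries ℚ) (hv : (1 - PowerSeries.X) * v = 1 + PowerSeries.X)
    (hT : (1 + PowerSeries.X)^2 * T = 4 * PowerSeries.X) (k : ℕ) :
    gS d k = v ^ k * T ^ pcount d k * gS d 0 := by
  have n1 : (1 - PowerSeries.X : PowerSeries ℚ) ≠ 0 := by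
    intro h
    have := congrArg (PowerSeries.coeff 0) h
    simp at this
  have n2 : (1 + PowerSeries.X : PowerSeries ℚ) ≠ 0 := by
    intro h
    have := congrArg (PowerSeries.coeff 0) h
    simp at this
  have inv : ∀ i, if (i = 0 ∨ d (i-1)) then 2 * gD d i = gS d i
      else (1 + PowerSeries.X) * gD d i = PowerSeries.X * gS d i := by
    intro i
    cases i with
    | zero => simp; ext l; rw [two_mul]; simp [gD, gS, trA]
    | succ i =>
      by_cases h : d i
      · simp [h, gS_desc]
      · simp only [Nat.add_sub_cancel, h, Nat.succ_ne_zero, or_self, if_false]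
        rw [gD_asc d i h, gS_asc d i h]
        have := gP_eq d i
        linear_combination (1) * this
  induction k with
  | zero => simp [pcount]
  | succ k ih =>
    have hP := gP_eq d k
    have hi := inv k
    have hpc : pcount d (k+1) = pcount d k + if (1 ≤ k ∧ ¬ d (k-1) ∧ d k) then 1 else 0 := by
      unfold pcount
      rw [Finset.range_add_one, Finset.filter_insert]
      split_ifs with h
      · rw [Finset.card_insert_of_notMem (by simp)]
      · simp
    have key : gS d (k+1) = v * T ^ (if (1 ≤ k ∧ ¬ d (k-1) ∧ d k) then 1 else 0) * gS d k := by
      by_cases h : d k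
      · by_cases h2 : k = 0 ∨ d (k-1)
        · rw [if_neg (by rcases h2 with h2 | h2 <;> simp [h2])]
          rw [if_pos h2] at hi
          apply mul_left_cancel₀ n1
          rw [gS_desc d k h, gD_desc d k h]
          linear_combination 2 * hP + (1 - PowerSeries.X) * hi - hv * gS d k
        · rw [if_neg h2] at hi
          push Not at h2
          rw [if_pos ⟨by omega, h2.2, h⟩]
          apply mul_left_cancel₀ n1
          apply mul_left_cancel₀ n2
          rw [gS_desc d k h, gD_desc d k h]
          linear_combination 2 * (1 + PowerSeries.X) * hP + 2 * (1 - PowerSeries.X) * hi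
            - hv * gS d k * T * (1 + PowerSeries.X) - gS d k * hT
      · rw [if_neg (by simp [h])]
        apply mul_left_cancel₀ n1
        rw [gS_asc d k h]
        linear_combination 2 * hP - hv * gS d k
    rw [key, ih, hpc, pow_add, pow_succ]; ring

theorem trA_count (L : ℕ) (d : ℕ → Prop) (k : ℕ) (a : Fin L) :
    ∑ f : Fin (k+1) → Fin L, (if f (Fin.last k) = a then
      ∏ i : Fin k, (if (f i.castSucc < f i.succ ∨ (f i.castSucc = f i.succ ∧ ((f i.castSucc : ℕ) % 2 = 0 ↔ d i)))
        then 1 else 0) else 0) = trA d k a := by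
  induction k generalizing a with
  | zero =>
    simp only [trA, Finset.univ_eq_empty, Finset.prod_empty]
    rw [← (Equiv.funUnique (Fin 1) (Fin L)).symm.sum_comp]
    simp
  | succ k ih =>
    rw [← (Fin.snocEquiv (fun _ : Fin (k+2) => Fin L)).sum_comp, Fintype.sum_prod_type]
    simp only [Fin.snocEquiv_apply, Fin.prod_univ_castSucc, Fin.snoc_last, Fin.succ_last, 
      Fin.snoc_castSucc, ← Fin.castSucc_succ]
    rw [Finset.sum_eq_single a (by intro b _ hb; simp [hb]) (by simp)]
    simp only [if_true]
    have h1 : ∀ g : Fin (k+1) → Fin L, 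
      (∏ i : Fin k, (if (g i.castSucc < g i.succ ∨ (g i.castSucc = g i.succ ∧ ((g i.castSucc : ℕ) % 2 = 0 ↔ d i)))
        then 1 else 0)) * (if (g (Fin.last k) < a ∨ (g (Fin.last k) = a ∧ ((g (Fin.last k) : ℕ) % 2 = 0 ↔ d k)))
        then 1 else 0) = ∑ b : Fin L, (if g (Fin.last k) = b then 
      (∏ i : Fin k, (if (g i.castSucc < g i.succ ∨ (g i.castSucc = g i.succ ∧ ((g i.castSucc : ℕ) % 2 = 0 ↔ d i)))
        then 1 else 0)) else 0) * (if (b < a ∨ (b = a ∧ ((b : ℕ) % 2 = 0 ↔ d k)))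
        then 1 else 0) := by
      intro g
      rw [Finset.sum_eq_single (g (Fin.last k)) (by intro b _ hb; simp [hb.symm]) (by simp)]
      simp
    simp only [Fin.val_castSucc, Fin.val_last]
    rw [Finset.sum_congr rfl (fun g _ => h1 g), Finset.sum_comm]
    simp only [← Finset.sum_mul, ih]
    simp only [trA]
    have h2 : ∀ b : Fin L, (trA d k b * if (b < a ∨ (b = a ∧ ((b : ℕ) % 2 = 0 ↔ d k))) then 1 else 0) =
      (if (b:ℕ) < a then trA d k b else 0) + (if b = a then (if ((a:ℕ) % 2 = 0 ↔ d k) then trA d k a else 0) else 0) := by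
      intro b
      by_cases h : b = a
      · subst h; simp
      · simp [h]
    rw [Finset.sum_congr rfl (fun g _ => h2 g), Finset.sum_add_distrib]
    congr 1
    · rw [Fin.sum_univ_eq_sum_range (fun b => if b < (a:ℕ) then trA d k b else 0) L, ← Finset.sum_filter]
      congr 1
      ext x; simp; omega
    · simp

def sgnv (a : ℕ) (x : ℤ) : ℤ := if a % 2 = 0 then -x else x

def Val {n L : ℕ} (π : Equiv.Perm (Fin n)) (f : Fin n → Fin L) : Prop :=
  StrictMono fun i => (toLex ((f i : ℕ), sgnv (f i) ((π i : ℕ) : ℤ)) : ℕ ×ₗ ℤ)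

def NN (n L : ℕ) (π : Equiv.Perm (Fin n)) : ℕ :=
  (Finset.univ.filter fun f : Fin n → Fin L => Val π f).card

def dOf (n : ℕ) (π : Equiv.Perm (Fin n)) (j : ℕ) : Prop := oneLine n π (j+2) < oneLine n π (j+1)

theorem NN_eq (k L : ℕ) (π : Equiv.Perm (Fin (k+1))) :
    NN (k+1) L π = ∑ a ∈ Finset.range L, trA (dOf (k+1) π) k a := by
  rw [← Fin.sum_univ_eq_sum_range]
  simp_rw [← trA_count]
  rw [Finset.sum_comm]
  simp only [Finset.sum_ite_eq, Finset.mem_univ, if_true]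
  unfold NN
  rw [Finset.card_filter]
  apply Finset.sum_congr rfl
  intro f _
  rw [Finset.prod_ite_zero]
  simp only [Finset.prod_const_one]
  congr 1
  simp only [Val, Fin.strictMono_iff_lt_succ, Finset.mem_univ, true_imp_iff, Prod.Lex.toLex_lt_toLex]
  apply propext
  apply forall_congr'
  intro i
  have hne : (π i.castSucc : ℕ) ≠ π i.succ := by
    intro h
    have := π.injective (Fin.ext h)
    simp [Fin.ext_iff] at this
  have hd : dOf (k+1) π i ↔ (π i.succ : ℕ) < π i.castSucc := by
    unfold dOf oneLine
    have := i.2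
    rw [dif_pos (by omega), dif_pos (by omega)]
    have e1 : (⟨(i:ℕ)+2-1, by omega⟩ : Fin (k+1)) = i.succ := by ext; simp
    have e2 : (⟨(i:ℕ)+1-1, by omega⟩ : Fin (k+1)) = i.castSucc := by ext; simp
    rw [e1, e2]; omega
  rw [hd, Fin.lt_def, Fin.ext_iff]
  apply or_congr Iff.rfl
  apply and_congr_right
  intro h
  unfold sgnv
  rw [← h]
  split_ifs with h2
  · simp; omega
  · simp; omega

theorem pk_eq (k : ℕ) (π : Equiv.Perm (Fin (k+1))) : pk (k+1) π = pcount (dOf (k+1) π) k := by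
  unfold pk pcount
  symm
  apply Finset.card_nbij' (fun j => j+1) (fun i => i-1)
  · intro j hj
    simp [dOf] at hj ⊢
    obtain ⟨h1, h2, h3, h4⟩ := hj
    refine ⟨⟨by omega, by omega⟩, ?_, h4⟩
    rw [show j - 1 + 2 = j+1 by omega, show j-1+1 = j by omega] at h3
    apply lt_of_le_of_ne h3
    intro h
    unfold oneLine at h
    rw [dif_pos (by omega), dif_pos (by omega)] at h
    have := π.injective (Fin.ext (Nat.succ.inj h))
    simp at this; omega
  · intro i hi
    simp [dOf] at hi ⊢
    obtain ⟨h1, h2, h3⟩ := hi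
    refine ⟨by omega, by omega, ?_, ?_⟩
    · rw [show i - 1 -1 + 2 = i by omega, show i-1-1+1 = i-1 by omega]; omega
    · rw [show i - 1 + 2 = i+1 by omega, show i-1+1 = i by omega]; exact h3
  · intro j hj; simp
  · intro i hi; simp at hi ⊢; omega

theorem exists_unique_sort {n : ℕ} {α : Type*} [LinearOrder α] (κ : Fin n → α) (h : Function.Injective κ) :
    ∃! π : Equiv.Perm (Fin n), StrictMono (κ ∘ π) := by
  refine ⟨Tuple.sort κ, (Tuple.monotone_sort κ).strictMono_of_injective (h.comp (Equiv.injective _)), ?_⟩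
  intro σ hσ
  have := Tuple.unique_monotone hσ.monotone (Tuple.monotone_sort κ)
  ext i
  exact congrArg _ (h (congrFun this i))

theorem sgnv_inj (a : ℕ) {x y : ℤ} (h : sgnv a x = sgnv a y) : x = y := by
  unfold sgnv at h; split_ifs at h <;> omega

def keyw {n L : ℕ} (w : Fin n → Fin L) (x : Fin n) : ℕ ×ₗ ℤ := toLex ((w x : ℕ), sgnv (w x) ((x : ℕ) : ℤ))

theorem keyw_inj {n L : ℕ} (w : Fin n → Fin L) : Function.Injective (keyw w) := by
  intro x y h
  unfold keyw at h
  have h' := toLex.injective h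
  simp only [Prod.mk.injEq] at h'
  rw [h'.1] at h'
  have := sgnv_inj _ h'.2
  ext; omega

theorem val_iff {n L : ℕ} (π : Equiv.Perm (Fin n)) (w : Fin n → Fin L) :
    Val π (w ∘ π) ↔ StrictMono (keyw w ∘ π) := Iff.rfl

theorem sum_NN (n L : ℕ) : ∑ π : Equiv.Perm (Fin n), NN n L π = L ^ n := by
  have h1 : ∀ π : Equiv.Perm (Fin n), NN n L π = ∑ w : Fin n → Fin L, if StrictMono (keyw w ∘ π) then 1 else 0 := by
    intro π
    unfold NN
    rw [Finset.card_filter, ← (Equiv.arrowCongr π.symm (Equiv.refl (Fin L))).sum_comp]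
    apply Finset.sum_congr rfl
    intro w _
    exact if_congr (val_iff π w) rfl rfl
  simp_rw [h1]
  rw [Finset.sum_comm]
  have h2 : ∀ w : Fin n → Fin L, (∑ π : Equiv.Perm (Fin n), if StrictMono (keyw w ∘ π) then 1 else 0) = 1 := by
    intro w
    obtain ⟨π, hπ, hu⟩ := exists_unique_sort (keyw w) (keyw_inj w)
    rw [Finset.sum_eq_single π]
    · rw [if_pos hπ]
    · intro b _ hb; rw [if_neg (fun h => hb (hu b h))]
    · simp
  simp [h2]

/-- fibre counts of unordered letter pairs -/
def lcount {n L : ℕ} (π : Equiv.Perm (Fin n)) (f : Fin n → Fin L) (s : Sym2 (Fin L)) : ℕ :=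
  (Finset.univ.filter fun i => s(f i, f (π i)) = s).card

def mcount {n L : ℕ} (π : Equiv.Perm (Fin n)) (f : Fin n → Fin L) (a b : Fin L) : ℕ :=
  (Finset.univ.filter fun i => f i = a ∧ f (π i) = b).card

theorem pp_eq {n : ℕ} {π : Equiv.Perm (Fin n)} (h : π ^ 2 = 1) (i : Fin n) : π (π i) = i := by
  have := congrArg (fun σ : Equiv.Perm (Fin n) => σ i) h
  simpa [pow_two] using this

theorem mcount_symm {n L : ℕ} {π : Equiv.Perm (Fin n)} (h : π ^ 2 = 1) (f : Fin n → Fin L) (a b : Fin L) :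
    mcount π f a b = mcount π f b a := by
  unfold mcount
  apply Finset.card_nbij' (fun i => π i) (fun i => π i)
  · intro i hi; simp [pp_eq h] at hi ⊢; exact ⟨hi.2, hi.1⟩
  · intro i hi; simp [pp_eq h] at hi ⊢; exact ⟨hi.2, hi.1⟩
  · intro i _; exact pp_eq h i
  · intro i _; exact pp_eq h i

theorem lcount_diag {n L : ℕ} (π : Equiv.Perm (Fin n)) (f : Fin n → Fin L) (a : Fin L) :
    lcount π f s(a, a) = mcount π f a a := by
  unfold lcount mcount
  congr 1; ext i; simp

theorem lcount_off {n L : ℕ} {π : Equiv.Perm (Fin n)} (h : π ^ 2 = 1) (f : Fin n → Fin L) (a b : Fin L) (hab : a ≠ b) :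
    lcount π f s(a, b) = 2 * mcount π f a b := by
  rw [two_mul]
  nth_rewrite 2 [mcount_symm h]
  unfold lcount mcount
  rw [← Finset.card_union_of_disjoint]
  · congr 1; ext i; simp
  · rw [Finset.disjoint_filter]
    rintro i _ ⟨h1, h2⟩ ⟨h3, h4⟩
    exact hab (h1.symm.trans h3)

theorem mcount_mixed {n L : ℕ} {π : Equiv.Perm (Fin n)} (h : π ^ 2 = 1) (f : Fin n → Fin L) (hv : Val π f)
    (a b : Fin L) (hab : (a:ℕ) % 2 ≠ (b:ℕ) % 2) : mcount π f a b ≤ 1 := by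
  unfold mcount
  rw [Finset.card_le_one]
  have key : ∀ i j, f i = a → f (π i) = b → f j = a → f (π j) = b → ¬ i < j := by
    intro i j h1 h2 h3 h4 hij
    have e1 := hv hij
    simp only [Prod.Lex.toLex_lt_toLex, h1, h3] at e1
    simp only [lt_irrefl, true_and, false_or] at e1
    have e2 := fun q : π i < π j => hv q
    have e3 := fun q : π j < π i => hv q
    simp only [Prod.Lex.toLex_lt_toLex, h2, h4, lt_irrefl, true_and, false_or, pp_eq h] at e2 e3
    unfold sgnv at e1 e2 e3
    rw [Fin.lt_def] at e2 e3 hij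
    by_cases ha : (a:ℕ) % 2 = 0
    · have hb : ¬ (b:ℕ) % 2 = 0 := by omega
      simp only [ha, hb, if_true, if_false] at e1 e2 e3
      omega
    · have hb : (b:ℕ) % 2 = 0 := by omega
      simp only [ha, hb, if_true, if_false] at e1 e2 e3
      omega
  intro i hi j hj
  simp at hi hj
  rcases lt_trichotomy i j with q | q | q
  · exact absurd q (key i j hi.1 hi.2 hj.1 hj.2)
  · exact q
  · exact absurd q (key j i hj.1 hj.2 hi.1 hi.2)

theorem mono_unique {n : ℕ} {α : Type*} [LinearOrder α] (f g : Fin n → α) (hf : Monotone f) (hg : Monotone g)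
    (h : ∀ x, (Finset.univ.filter fun i => f i = x).card = (Finset.univ.filter fun i => g i = x).card) : f = g := by
  have hp : ∃ σ : Equiv.Perm (Fin n), f = g ∘ σ := by
    have e : ∀ x, Nonempty ({i // f i = x} ≃ {i // g i = x}) := by
      intro x
      apply Fintype.card_eq.1
      rw [Fintype.card_subtype, Fintype.card_subtype]
      convert h x
    have e := fun x => (e x).some
    refine ⟨(Equiv.sigmaFiberEquiv f).symm.trans ((Equiv.sigmaCongrRight e).trans (Equiv.sigmaFiberEquiv g)), ?_⟩
    funext i
    simp only [Function.comp, Equiv.trans_apply]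
    have : ∀ y : (Σ x, {i // g i = x}), g (Equiv.sigmaFiberEquiv g y) = y.1 := fun y => y.2.2
    rw [this]
    rfl
  obtain ⟨σ, hσ⟩ := hp
  have := Tuple.unique_monotone (f := g) (σ := σ) (τ := 1) (hσ ▸ hf) (by simpa using hg)
  rw [hσ, this]; rfl

theorem lcount_inj {n L : ℕ} (π π' : Equiv.Perm (Fin n)) (hπ : π ^ 2 = 1) (hπ' : π' ^ 2 = 1)
    (f f' : Fin n → Fin L) (hv : Val π f) (hv' : Val π' f') (hl : ∀ s, lcount π f s = lcount π' f' s) :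
    π = π' ∧ f = f' := by
  have hm : ∀ a b, mcount π f a b = mcount π' f' a b := by
    intro a b
    by_cases hab : a = b
    · subst hab
      rw [← lcount_diag, ← lcount_diag, hl]
    · have := hl s(a,b)
      rw [lcount_off hπ _ _ _ hab, lcount_off hπ' _ _ _ hab] at this
      omega
  have mono : ∀ (π : Equiv.Perm (Fin n)) (hπ : π ^ 2 = 1) (f : Fin n → Fin L) (hv : Val π f),
      Monotone (fun i => (toLex ((f i : ℕ), sgnv (f i) ((f (π i) : ℕ) : ℤ)) : ℕ ×ₗ ℤ)) := by
    intro π hπ f hv i j hij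
    rcases hij.lt_or_eq with hij | hij
    swap
    · rw [hij]
    have e1 := hv hij
    have fm : ∀ x y, x < y → (f x : ℕ) ≤ f y := by
      intro x y hxy
      have := hv hxy
      simp only [Prod.Lex.toLex_lt_toLex] at this
      omega
    simp only [Prod.Lex.toLex_lt_toLex, Prod.Lex.toLex_le_toLex] at e1 ⊢
    rcases e1 with e1 | ⟨e1, e2⟩
    · exact Or.inl e1
    · right
      refine ⟨e1, ?_⟩
      rw [← e1] at e2 ⊢
      have h1 := fm (π i) (π j)
      have h2 := fm (π j) (π i)
      rw [Fin.lt_def] at h1 h2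
      unfold sgnv at e2 ⊢
      split_ifs at e2 ⊢ <;> omega
  have cnt : ∀ (π : Equiv.Perm (Fin n)) (f : Fin n → Fin L) (x : ℕ ×ₗ ℤ),
      (Finset.univ.filter fun i => (toLex ((f i : ℕ), sgnv (f i) ((f (π i) : ℕ) : ℤ)) : ℕ ×ₗ ℤ) = x).card
       = ∑ a : Fin L, ∑ b : Fin L, if (toLex ((a : ℕ), sgnv a ((b : ℕ) : ℤ)) : ℕ ×ₗ ℤ) = x then mcount π f a b else 0 := by
    intro π f x
    rw [← Finset.sum_product', ← Finset.sum_filter]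
    rw [Finset.card_eq_sum_card_fiberwise (f := fun i => (f i, f (π i))) (t := Finset.filter (fun p : Fin L × Fin L => (toLex ((p.1 : ℕ), sgnv p.1 ((p.2 : ℕ) : ℤ)) : ℕ ×ₗ ℤ) = x) (Finset.univ ×ˢ Finset.univ))]
    · apply Finset.sum_congr rfl
      rintro ⟨a, b⟩ hab
      simp at hab
      unfold mcount
      congr 1
      ext i
      simp only [Finset.mem_filter, Finset.mem_univ, true_and, Prod.mk.injEq]
      constructor
      · exact fun h => h.2
      · rintro ⟨rfl, rfl⟩
        exact ⟨hab, rfl, rfl⟩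
    · intro i hi
      simpa using hi
  have E := mono_unique _ _ (mono π hπ f hv) (mono π' hπ' f' hv') (by
    intro x
    rw [cnt, cnt]
    simp_rw [hm])
  have hf : f = f' := by
    funext i
    have := congrArg (fun z => (ofLex z).1) (congrFun E i)
    exact Fin.ext this
  subst hf
  refine ⟨?_, rfl⟩
  have hw : f ∘ π = f ∘ π' := by
    funext i
    have := congrArg (fun z => (ofLex z).2) (congrFun E i)
    have := sgnv_inj _ this
    apply Fin.ext
    simpa using this
  have h1 : StrictMono (keyw (f ∘ π) ∘ π) := by
    rw [← val_iff]
    convert hv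
    funext i; simp [pp_eq hπ]
  have h2 : StrictMono (keyw (f ∘ π) ∘ π') := by
    rw [hw, ← val_iff]
    convert hv'
    funext i; simp [pp_eq hπ']
  exact (exists_unique_sort _ (keyw_inj (f ∘ π))).unique h1 h2

theorem sym2_sum {α R : Type*} [Fintype α] [AddCommMonoid R] (H : Sym2 α → R) (h : α → α → R)
    (h1 : ∀ a, H s(a, a) = h a a) (h2 : ∀ a b, a ≠ b → H s(a, b) = h a b + h b a) :
    ∑ s, H s = ∑ a, ∑ b, h a b := by
  rw [← Finset.sum_product', ← Finset.sum_fiberwise (s := Finset.univ ×ˢ Finset.univ) (g := fun p : α × α => s(p.1, p.2))]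
  apply Finset.sum_congr rfl
  intro s _
  induction s using Sym2.ind with
  | _ a b =>
  by_cases hab : a = b
  · subst hab
    rw [h1]
    rw [Finset.sum_eq_single (a,a)]
    · rintro ⟨x, y⟩ hx hne
      simp at hx hne
      exact absurd hx.2 (hne hx.1)
    · simp
  · rw [h2 a b hab]
    have : (Finset.filter (fun p : α × α => s(p.1, p.2) = s(a, b)) (Finset.univ ×ˢ Finset.univ)) = {(a,b),(b,a)} := by
      ext ⟨x, y⟩; simp
    rw [this, Finset.sum_pair (by simp [hab])]

def LValid {L : ℕ} (l : Sym2 (Fin L) → ℕ) : Prop :=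
  ∀ a b : Fin L, a ≠ b → Even (l s(a, b)) ∧ ((a:ℕ) % 2 ≠ (b:ℕ) % 2 → l s(a, b) ≤ 2)

theorem mat_surj {n L : ℕ} (M : Fin L → Fin L → ℕ) (hs : ∀ a b, M a b = M b a)
    (hm : ∀ a b : Fin L, (a:ℕ) % 2 ≠ (b:ℕ) % 2 → M a b ≤ 1) (hn : ∑ a, ∑ b, M a b = n) :
    ∃ (π : Equiv.Perm (Fin n)) (f : Fin n → Fin L), π ^ 2 = 1 ∧ Val π f ∧ ∀ a b, mcount π f a b = M a b := by
  let E := Σ p : Fin L × Fin L, Fin (M p.1 p.2)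
  have Eext : ∀ x y : E, x.1.1 = y.1.1 → x.1.2 = y.1.2 → (x.2 : ℕ) = y.2 → x = y := by
    rintro ⟨⟨a, b⟩, j⟩ ⟨⟨a', b'⟩, j'⟩ h1 h2 h3
    simp only at h1 h2 h3
    subst h1; subst h2
    congr 1
    exact Fin.ext h3
  let τ : E → E := fun x => ⟨(x.1.2, x.1.1), ⟨if (x.1.1 : ℕ) % 2 = 0 then M x.1.1 x.1.2 - 1 - x.2 else x.2, by
    have h1 := x.2.2
    have h2 := hs x.1.1 x.1.2
    simp only
    split_ifs <;> omega⟩⟩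
  have hτ : Function.Involutive τ := by
    intro x
    apply Eext
    · rfl
    · rfl
    · simp only [τ]
      have h1 := x.2.2
      have h2 := hs x.1.1 x.1.2
      have h3 := hm x.1.1 x.1.2
      split_ifs <;> omega
  let key : E → ℕ ×ₗ (ℤ ×ₗ ℕ) := fun x => toLex ((x.1.1 : ℕ), toLex (sgnv x.1.1 ((x.1.2 : ℕ) : ℤ), (x.2 : ℕ)))
  have hkey : Function.Injective key := by
    intro x y h
    have h' := toLex.injective h
    simp only [Prod.mk.injEq] at h'
    obtain ⟨h1, h2⟩ := h'
    have h2 := toLex.injective h2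
    simp only [Prod.mk.injEq] at h2
    obtain ⟨h2, h3⟩ := h2
    rw [h1] at h2
    have h2 := sgnv_inj _ h2
    exact Eext _ _ (Fin.ext h1) (Fin.ext (by exact_mod_cast h2)) h3
  have hklt : ∀ x y, key x < key y ↔ ((x.1.1 : ℕ) < y.1.1 ∨ (x.1.1 : ℕ) = y.1.1 ∧ 
      (sgnv x.1.1 ((x.1.2 : ℕ) : ℤ) < sgnv y.1.1 ((y.1.2 : ℕ) : ℤ) ∨ sgnv x.1.1 ((x.1.2 : ℕ) : ℤ) = sgnv y.1.1 ((y.1.2 : ℕ) : ℤ)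
        ∧ (x.2 : ℕ) < y.2)) := by
    intro x y
    simp only [key, Prod.Lex.toLex_lt_toLex]
  have hcard : Fintype.card E = n := by
    rw [← hn]
    simp only [E, Fintype.card_sigma, Fintype.card_fin]
    rw [Fintype.sum_prod_type]
  let e0 : Fin n ≃ E := (Fintype.equivFinOfCardEq hcard).symm
  obtain ⟨π0, hπ0, -⟩ := exists_unique_sort (key ∘ e0) (hkey.comp e0.injective)
  let e : Fin n ≃ E := π0.trans e0
  have he : StrictMono (key ∘ e) := hπ0
  let π : Equiv.Perm (Fin n) := (e.trans hτ.toPerm).trans e.symm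
  have hπ : ∀ i, e (π i) = τ (e i) := by intro i; simp [π]
  refine ⟨π, fun i => (e i).1.1, ?_, ?_, ?_⟩
  · ext i
    rw [pow_two, Equiv.Perm.mul_apply]
    congr 1
    apply e.injective
    rw [hπ, hπ, hτ]; rfl
  · intro i j hij
    have h1 : key (e i) < key (e j) := he hij
    have h2 : π i < π j ↔ key (τ (e i)) < key (τ (e j)) := by
      rw [← hπ, ← hπ]; exact he.lt_iff_lt.symm
    have h3 : π j < π i ↔ key (τ (e j)) < key (τ (e i)) := by
      rw [← hπ, ← hπ]; exact he.lt_iff_lt.symm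
    rw [hklt] at h1 h2 h3
    simp only [Prod.Lex.toLex_lt_toLex]
    generalize e i = x at *
    generalize e j = y at *
    generalize π i = p at *
    generalize π j = q at *
    rw [Fin.lt_def] at h2 h3
    simp only [τ] at h2 h3
    obtain ⟨⟨a, b⟩, u⟩ := x
    obtain ⟨⟨c, d⟩, v⟩ := y
    simp only at *
    rcases h1 with h1 | ⟨h1, h4⟩
    · exact Or.inl h1
    · right
      have h1' := Fin.ext h1
      subst h1'
      refine ⟨rfl, ?_⟩
      have hu := u.2
      have hv := v.2
      have hbd : (b : ℕ) = d → M a b = M a d := fun h => by rw [Fin.ext h]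
      have hmm := hm a b
      simp only at hu hv
      unfold sgnv at *
      by_cases ha : (a : ℕ) % 2 = 0
      · simp only [ha, if_true] at *
        by_cases hb : (b : ℕ) = d
        · have := hbd hb
          have := h3.2 (Or.inr ⟨hb.symm, Or.inr ⟨by rw [hb], by omega⟩⟩)
          omega
        · have := h3.2 (Or.inl (by omega))
          omega
      · simp only [ha, if_false] at *
        by_cases hb : (b : ℕ) = d
        · have := hbd hb
          have := h2.2 (Or.inr ⟨hb, Or.inr ⟨by rw [hb], by omega⟩⟩)
          omega
        · have := h2.2 (Or.inl (by omega))
          omega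
  · intro a b
    unfold mcount
    simp only [hπ]
    rw [← Fintype.card_fin (M a b), ← Finset.card_univ]
    symm
    apply Finset.card_bij (fun (j : Fin (M a b)) _ => e.symm (⟨(a, b), j⟩ : E))
    · intro j _; simp [τ]
    · intro j _ j' _ h
      have := e.symm.injective h
      exact eq_of_heq (Sigma.mk.inj this).2
    · intro i hi
      simp [τ] at hi
      generalize hx : e i = x at hi
      obtain ⟨⟨c, d⟩, v⟩ := x
      simp only at hi
      obtain ⟨rfl, rfl⟩ := hi
      refine ⟨v, Finset.mem_univ _, ?_⟩
      rw [← hx]; simp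

theorem inv_count (n L : ℕ) :
    ∑ π ∈ invSet n, NN n L π
      = ((Finset.finsuppAntidiag (Finset.univ : Finset (Sym2 (Fin L))) n).filter fun l : Sym2 (Fin L) →₀ ℕ => LValid ⇑l).card := by
  have : ∑ π ∈ invSet n, NN n L π = ((invSet n).sigma fun π => 
      (Finset.univ.filter fun f : Fin n → Fin L => Val π f)).card := by
    rw [Finset.card_sigma]; rfl
  rw [this]
  apply Finset.card_bij (fun (x : Σ _ : Equiv.Perm (Fin n), Fin n → Fin L) _ => Finsupp.equivFunOnFinite.symm (lcount x.1 x.2))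
  · rintro ⟨π, f⟩ hx
    simp [invSet] at hx ⊢
    refine ⟨?_, ?_⟩
    · unfold lcount
      rw [← Finset.card_eq_sum_card_fiberwise (fun _ _ => Finset.mem_coe.2 (Finset.mem_univ _))]
      simp
    · intro a b hab
      rw [lcount_off hx.1 _ _ _ hab]
      refine ⟨even_two_mul _, fun h => ?_⟩
      have := mcount_mixed hx.1 f hx.2 a b h
      omega
  · rintro ⟨π, f⟩ hx ⟨π', f'⟩ hx' h
    simp [invSet] at hx hx'
    have h := Finsupp.equivFunOnFinite.symm.injective h
    obtain ⟨rfl, rfl⟩ := lcount_inj π π' hx.1 hx'.1 f f' hx.2 hx'.2 (fun s => congrFun h s)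
    rfl
  · intro l hl
    simp at hl
    obtain ⟨hl, hval⟩ := hl
    obtain ⟨π, f, hπ, hv, hmc⟩ := mat_surj (n := n) (fun a b : Fin L => if a = b then l s(a, b) else l s(a, b) / 2)
      (by intro a b; simp only [eq_comm (a := a), Sym2.eq_swap (a := a)])
      (by
        intro a b hab
        have hne : a ≠ b := by rintro rfl; exact hab rfl
        have := (hval a b hne).2 hab
        simp only [hne, if_false]; omega)
      (by
        rw [← hl]
        symm
        apply sym2_sum
        · intro a; simp
        · intro a b hab
          simp only [hab, hab.symm, if_false]
          rw [Sym2.eq_swap (a := b)]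
          have := (hval a b hab).1
          obtain ⟨r, hr⟩ := this
          omega)
    refine ⟨⟨π, f⟩, by simp [invSet, hπ, hv], ?_⟩
    ext s
    simp only [Finsupp.equivFunOnFinite_symm_apply_apply]
    induction s using Sym2.ind with
    | _ a b =>
    by_cases hab : a = b
    · subst hab
      rw [lcount_diag, hmc]; simp
    · rw [lcount_off hπ _ _ _ hab, hmc]
      simp only [hab, if_false]
      obtain ⟨r, hr⟩ := (hval a b hab).1
      omega

def wk (x : ℚ) (k : ℕ) : ℚ := if k % 2 = 1 then x else if k % 4 = 2 then x ^ 2 else 0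

def H1 : PowerSeries ℚ := PowerSeries.mk fun k => if 1 ≤ k then 1 else 0
def H2 : PowerSeries ℚ := PowerSeries.mk fun k => if 1 ≤ k ∧ k % 2 = 0 then 1 else 0
def H3 : PowerSeries ℚ := PowerSeries.mk fun k => if 1 ≤ k ∧ k % 4 = 0 then -1 else if k % 4 = 2 then 1 else 0
def G1 : PowerSeries ℚ := PowerSeries.mk fun _ => 1
def G2 : PowerSeries ℚ := PowerSeries.mk fun k => if k % 2 = 0 then 1 else 0

theorem G1_eq : (1 - PowerSeries.X) * G1 = 1 := by
  ext k
  rcases k with _ | k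
  · simp [sub_mul, G1]
  · simp [sub_mul, G1, PowerSeries.coeff_succ_X_mul, PowerSeries.coeff_one]

theorem H1_eq : H1 = PowerSeries.X * G1 := by
  ext k
  rcases k with _ | k
  · simp [H1]
  · simp [H1, G1, PowerSeries.coeff_succ_X_mul]

theorem G2_eq : (1 - PowerSeries.X ^ 2) * G2 = 1 := by
  ext k
  simp only [sub_mul, one_mul, map_sub, PowerSeries.coeff_X_pow_mul', PowerSeries.coeff_one, G2, PowerSeries.coeff_mk]
  split_ifs <;> first | omega | norm_num

theorem H2_eq : H2 = PowerSeries.X ^ 2 * G2 := by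
  ext k
  simp only [PowerSeries.coeff_X_pow_mul', G2, H2, PowerSeries.coeff_mk]
  split_ifs <;> first | omega | norm_num

theorem H3_eq : (1 + PowerSeries.X ^ 2) * H3 = PowerSeries.X ^ 2 := by
  ext k
  simp only [add_mul, one_mul, map_add, PowerSeries.coeff_X_pow_mul', PowerSeries.coeff_X_pow, H3, PowerSeries.coeff_mk]
  split_ifs <;> first | omega | norm_num

def okc {L : ℕ} (s : Sym2 (Fin L)) (k : ℕ) : Prop :=
  ∀ a b : Fin L, s = s(a, b) → a ≠ b → Even k ∧ ((a:ℕ) % 2 ≠ (b:ℕ) % 2 → k ≤ 2)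

def gser {L : ℕ} (s : Sym2 (Fin L)) : PowerSeries ℚ := PowerSeries.mk fun k => if okc s k then 1 else 0

def hser {L : ℕ} (a b : Fin L) : PowerSeries ℚ :=
  if a = b then H1 else if (a:ℕ) % 2 = (b:ℕ) % 2 then H2 else H3

theorem hser_symm {L : ℕ} (a b : Fin L) : hser a b = hser b a := by
  unfold hser; simp only [eq_comm]

def Wser {L : ℕ} : Sym2 (Fin L) → PowerSeries ℚ :=
  Sym2.lift ⟨fun a b => if a = b then hser a b else hser a b + hser b a, by
    intro a b
    by_cases h : a = b
    · subst h; rfl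
    · simp only [h, Ne.symm h, if_false, add_comm]⟩

theorem gser_diag {L : ℕ} (a : Fin L) : gser s(a, a) = G1 := by
  ext k
  have : okc s(a, a) k := by
    intro c d h hne
    simp at h
    rcases h with h | h
    · exact absurd (h.1.symm.trans h.2) hne
    · exact absurd (h.2.symm.trans h.1) hne
  simp [gser, G1, this]

theorem okc_off {L : ℕ} (a b : Fin L) (h : a ≠ b) (k : ℕ) :
    okc s(a, b) k ↔ Even k ∧ ((a:ℕ) % 2 ≠ (b:ℕ) % 2 → k ≤ 2) := by
  constructor
  · intro hh; exact hh a b rfl h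
  · intro hh c d hcd _
    simp at hcd
    rcases hcd with ⟨rfl, rfl⟩ | ⟨rfl, rfl⟩
    · exact hh
    · exact ⟨hh.1, fun q => hh.2 (Ne.symm q)⟩

theorem gser_ode {L : ℕ} (s : Sym2 (Fin L)) :
    PowerSeries.X * PowerSeries.derivative ℚ (gser s) = Wser s * gser s := by
  induction s using Sym2.ind with
  | _ a b =>
  by_cases hab : a = b
  · subst hab
    rw [gser_diag]
    have : Wser s(a, a) = H1 := by simp [Wser, hser]
    rw [this, H1_eq]
    have h := G1_eq
    have h2 := congrArg (PowerSeries.derivative ℚ) h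
    simp only [Derivation.leibniz, smul_eq_mul, map_sub, PowerSeries.derivative_X, Derivation.map_one_eq_zero] at h2
    linear_combination (PowerSeries.X * G1) * h2 - PowerSeries.X * (PowerSeries.derivative ℚ G1) * h
  · by_cases hm : (a:ℕ) % 2 = (b:ℕ) % 2
    · have hg : gser s(a, b) = G2 := by
        ext k
        simp only [gser, G2, PowerSeries.coeff_mk, okc_off a b hab, hm, Nat.even_iff]
        simp
      have : Wser s(a, b) = 2 * H2 := by simp [Wser, hser, hab, Ne.symm hab, hm, two_mul]
      rw [this, H2_eq, hg]
      have h := G2_eq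
      have h2 := congrArg (PowerSeries.derivative ℚ) h
      simp only [Derivation.leibniz, Derivation.leibniz_pow, smul_eq_mul, map_sub, PowerSeries.derivative_X, Derivation.map_one_eq_zero] at h2
      simp only [nsmul_eq_mul] at h2
      push_cast at h2
      linear_combination (PowerSeries.X * G2) * h2 - PowerSeries.X * (PowerSeries.derivative ℚ G2) * h
    · have hg : gser s(a, b) = 1 + PowerSeries.X ^ 2 := by
        ext k
        simp only [gser, PowerSeries.coeff_mk, okc_off a b hab, Nat.even_iff, map_add, PowerSeries.coeff_one, PowerSeries.coeff_X_pow]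
        simp only [ne_eq, hm, not_false_eq_true, true_imp_iff]
        split_ifs <;> first | omega | norm_num
      have : Wser s(a, b) = 2 * H3 := by simp [Wser, hser, hab, Ne.symm hab, hm, Ne.symm hm, two_mul]
      rw [this, hg]
      have h := H3_eq
      simp only [Derivation.leibniz_pow, smul_eq_mul, map_add, PowerSeries.derivative_X, Derivation.map_one_eq_zero, nsmul_eq_mul]
      push_cast
      linear_combination (-2) * h

theorem prod_ode {ι : Type*} (s : Finset ι) (g W : ι → PowerSeries ℚ)
    (h : ∀ i, PowerSeries.X * PowerSeries.derivative ℚ (g i) = W i * g i) :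
    PowerSeries.X * PowerSeries.derivative ℚ (∏ i ∈ s, g i) = (∑ i ∈ s, W i) * ∏ i ∈ s, g i := by
  induction s using Finset.induction_on with
  | empty => simp
  | insert a s ha ih =>
    rw [Finset.prod_insert ha, Finset.sum_insert ha]
    simp only [Derivation.leibniz, smul_eq_mul]
    linear_combination g a * ih + (∏ i ∈ s, g i) * h a

theorem sum_par (m : ℕ) (a : ℕ) (A B : PowerSeries ℚ) :
    ∑ b ∈ Finset.range (2 * m), (if a % 2 = b % 2 then A else B) = (m : PowerSeries ℚ) * (A + B) := by
  induction m with
  | zero => simp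
  | succ m ih =>
    rw [show 2 * (m+1) = 2*m+1+1 by ring, Finset.sum_range_succ, Finset.sum_range_succ, ih]
    rcases Nat.mod_two_eq_zero_or_one a with h | h
    · rw [h, if_pos (by omega), if_neg (by omega)]; push_cast; ring
    · rw [h, if_neg (by omega), if_pos (by omega)]; push_cast; ring

theorem sumW (m : ℕ) : ∑ s : Sym2 (Fin (2 * m)), Wser s = PowerSeries.mk (wk ((2 * m : ℕ) : ℚ)) := by
  rw [sym2_sum Wser hser (by intro a; simp [Wser]) (by intro a b hab; simp [Wser, hab])]
  have h1 : ∀ a b : Fin (2 * m), hser a b = (if a = b then H1 - H2 else 0) + (if (a:ℕ) % 2 = (b:ℕ) % 2 then H2 else H3) := by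
    intro a b
    unfold hser
    by_cases h : a = b
    · subst h; simp
    · simp [h]
  simp_rw [h1, Finset.sum_add_distrib]
  simp only [Finset.sum_ite_eq, Finset.mem_univ, if_true]
  simp_rw [fun a : Fin (2*m) => Fin.sum_univ_eq_sum_range (fun b => if (a:ℕ) % 2 = b % 2 then H2 else H3) (2*m), sum_par]
  simp only [Finset.sum_const, Finset.card_univ, Fintype.card_fin, nsmul_eq_mul]
  ext k
  have e1 : ((2 * m : ℕ) : PowerSeries ℚ) = PowerSeries.C ((2 * m : ℕ) : ℚ) := (map_natCast (PowerSeries.C (R := ℚ)) _).symm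
  have e2 : ((m : ℕ) : PowerSeries ℚ) = PowerSeries.C ((m : ℕ) : ℚ) := (map_natCast (PowerSeries.C (R := ℚ)) _).symm
  rw [e1, e2]
  simp only [map_add, PowerSeries.coeff_C_mul, map_sub, H1, H2, H3, PowerSeries.coeff_mk, wk]
  split_ifs <;> first | omega | (push_cast; ring)

def Dn (m n : ℕ) : ℚ := PowerSeries.coeff n (∏ s : Sym2 (Fin (2 * m)), gser s)

theorem Dn_eq (m n : ℕ) : Dn m n = ((∑ π ∈ invSet n, NN n (2 * m) π : ℕ) : ℚ) := by
  rw [inv_count]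
  unfold Dn
  rw [PowerSeries.coeff_prod, Finset.card_filter]
  push_cast
  have : ∀ l : Sym2 (Fin (2*m)) →₀ ℕ, LValid ⇑l ↔ ∀ s ∈ (Finset.univ : Finset (Sym2 (Fin (2*m)))), okc s (l s) := by
    intro l
    constructor
    · intro h s _ a b hs hab
      subst hs; exact h a b hab
    · intro h a b hab
      exact h _ (Finset.mem_univ _) a b rfl hab
  simp only [gser, PowerSeries.coeff_mk, Finset.prod_ite_zero, Finset.prod_const_one, ← this]

theorem Dn_zero (m : ℕ) : Dn m 0 = 1 := by
  unfold Dn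
  rw [PowerSeries.coeff_zero_eq_constantCoeff, map_prod]
  apply Finset.prod_eq_one
  intro s _
  rw [← PowerSeries.coeff_zero_eq_constantCoeff]
  have : okc s 0 := by intro a b _ _; simp
  simp [gser, this]

theorem Dn_rec (m n : ℕ) : (n : ℚ) * Dn m n = ∑ p ∈ Finset.HasAntidiagonal.antidiagonal n, wk ((2 * m : ℕ) : ℚ) p.1 * Dn m p.2 := by
  have h := prod_ode Finset.univ (fun s : Sym2 (Fin (2*m)) => gser s) Wser gser_ode
  rw [sumW] at h
  have h := (congrArg (PowerSeries.coeff n) h).trans (PowerSeries.coeff_mul _ _ _)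
  simp only [PowerSeries.coeff_mk] at h
  unfold Dn
  rw [← h]
  cases n with
  | zero => simp
  | succ n =>
    rw [PowerSeries.coeff_succ_X_mul, PowerSeries.coeff_derivative]
    push_cast; ring

open Equiv.Perm in
theorem rk_cycle {n : ℕ} (σ : Equiv.Perm (Fin n)) (h : σ.IsCycle) :
    (((σ ^ 2).cycleType).map (fun p => p - 1)).sum
      = (σ.cycleType.map (fun p => if p % 2 = 1 then p - 1 else p - 2)).sum := by
  have hord := h.orderOf
  have h2 := h.two_le_card_support
  rw [h.cycleType]
  simp only [Multiset.map_singleton, Multiset.sum_singleton]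
  by_cases h1 : σ ^ 2 = 1
  · have := orderOf_dvd_of_pow_eq_one h1
    have := Nat.le_of_dvd (by norm_num) this
    have : σ.support.card = 2 := by omega
    rw [h1, this]; simp
  · have hsupp : (σ ^ 2).support = σ.support := by
      apply Finset.Subset.antisymm (Equiv.Perm.support_pow_le σ 2)
      intro x hx
      rw [Equiv.Perm.mem_support] at hx ⊢
      intro hh
      exact h1 ((h.pow_eq_one_iff' hx).2 hh)
    have hall : ∀ p ∈ (σ ^ 2).cycleType, p = orderOf (σ ^ 2) := by
      intro p hp
      rw [Equiv.Perm.cycleType_def, Multiset.mem_map] at hp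
      obtain ⟨c, hc, rfl⟩ := hp
      have hc' : c ∈ (σ ^ 2).cycleFactorsFinset := hc
      rw [Equiv.Perm.mem_cycleFactorsFinset_iff] at hc'
      obtain ⟨hcyc, hcx⟩ := hc'
      simp only [Function.comp]
      rw [← hcyc.orderOf]
      obtain ⟨x, hx, -⟩ := id hcyc
      have hx' : x ∈ c.support := Equiv.Perm.mem_support.2 hx
      have hpow : ∀ j : ℕ, (c ^ j) x = ((σ ^ 2) ^ j) x := by
        intro j
        induction j with
        | zero => rfl
        | succ j ih =>
          rw [pow_succ', pow_succ', Equiv.Perm.mul_apply, Equiv.Perm.mul_apply, ← ih]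
          exact hcx _ (Equiv.Perm.pow_apply_mem_support.2 hx')
      have hσx : σ x ≠ x := by
        have : x ∈ (σ ^ 2).support := by
          rw [Equiv.Perm.mem_support, ← hcx x hx']; exact hx
        rw [hsupp] at this
        exact Equiv.Perm.mem_support.1 this
      apply Nat.dvd_antisymm
      · apply orderOf_dvd_of_pow_eq_one
        rw [hcyc.pow_eq_one_iff' hx, hpow, pow_orderOf_eq_one]; rfl
      · apply orderOf_dvd_of_pow_eq_one
        rw [← pow_mul, h.pow_eq_one_iff' hσx, pow_mul, ← hpow, pow_orderOf_eq_one]; rfl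
    have hrep := Multiset.eq_replicate_card.2 hall
    have hsum := (σ ^ 2).sum_cycleType
    rw [hsupp] at hsum
    rw [hrep, Multiset.sum_replicate, smul_eq_mul] at hsum
    rw [hrep, Multiset.map_replicate, Multiset.sum_replicate, smul_eq_mul]
    have hr : orderOf (σ ^ 2) = σ.support.card / Nat.gcd σ.support.card 2 := by
      rw [orderOf_pow, hord]
    generalize Multiset.card (σ ^ 2).cycleType = c at *
    generalize σ.support.card = l at *
    rw [hr] at *
    rcases Nat.mod_two_eq_zero_or_one l with hl | hl
    · have : Nat.gcd l 2 = 2 := Nat.gcd_eq_right (by omega)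
      rw [this] at hsum ⊢
      have hl2 : l / 2 * 2 = l := by omega
      have : c = 2 := by
        have : 0 < l / 2 := by omega
        nlinarith
      subst this
      rw [if_neg (by omega)]; omega
    · have : Nat.gcd l 2 = 1 := by
        rw [← Nat.coprime_iff_gcd_eq_one, Nat.coprime_two_right]; exact Nat.odd_iff.2 hl
      rw [this] at hsum ⊢
      rw [Nat.div_one] at *
      have : c = 1 := by nlinarith
      subst this
      rw [if_pos hl]; omega

theorem rk_sq {n : ℕ} (σ : Equiv.Perm (Fin n)) :
    (((σ ^ 2).cycleType).map (fun p => p - 1)).sum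
      = (σ.cycleType.map (fun p => if p % 2 = 1 then p - 1 else p - 2)).sum := by
  induction σ using Equiv.Perm.cycle_induction_on with
  | base_one => simp
  | base_cycles σ h => exact rk_cycle σ h
  | induction_disjoint σ τ hd _ h1 h2 =>
    rw [hd.commute.mul_pow, (hd.pow_disjoint_pow 2 2).cycleType_mul, hd.cycleType_mul]
    simp only [Multiset.map_add, Multiset.sum_add, h1, h2]

def uu (p : ℕ) : ℕ := if p % 2 = 1 then 1 else 2

theorem numCycles_sq {n : ℕ} (σ : Equiv.Perm (Fin n)) :
    numCycles n (σ ^ 2) = ((fullCycleType n σ).map uu).sum := by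
  have key : ∀ (s : Multiset ℕ), (∀ p ∈ s, 2 ≤ p) → 
      (s.map (fun p => p - 1)).sum + Multiset.card s = s.sum ∧
      (s.map (fun p => if p % 2 = 1 then p - 1 else p - 2)).sum + (s.map uu).sum = s.sum := by
    intro s
    induction s using Multiset.induction_on with
    | empty => simp
    | cons a s ih =>
      intro h
      have h1 := ih (fun p hp => h p (Multiset.mem_cons_of_mem hp))
      have h2 := h a (Multiset.mem_cons_self a s)
      simp only [Multiset.map_cons, Multiset.sum_cons, Multiset.card_cons]
      have h3 : uu a = if a % 2 = 1 then 1 else 2 := rfl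
      split_ifs at h3 ⊢ <;> omega
  have h1 := (key (σ ^ 2).cycleType (fun p hp => Equiv.Perm.two_le_of_mem_cycleType hp)).1
  have h2 := (key σ.cycleType (fun p hp => Equiv.Perm.two_le_of_mem_cycleType hp)).2
  rw [rk_sq] at h1
  have h3 := (σ ^ 2).support.card_le_univ
  have h4 := σ.support.card_le_univ
  rw [Equiv.Perm.sum_cycleType] at h1 h2
  simp only [Fintype.card_fin] at h3 h4
  unfold numCycles fullCycleType
  rw [Multiset.map_add, Multiset.sum_add, Multiset.map_replicate, Multiset.sum_replicate, Multiset.card_add, Multiset.card_replicate]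
  have : uu 1 = 1 := rfl
  rw [this, smul_eq_mul, mul_one]
  omega

theorem fct_sum {n : ℕ} (σ : Equiv.Perm (Fin n)) : (fullCycleType n σ).sum = n := by
  unfold fullCycleType
  have h4 := σ.support.card_le_univ
  simp only [Fintype.card_fin] at h4
  rw [Multiset.sum_add, Equiv.Perm.sum_cycleType, Multiset.sum_replicate, smul_eq_mul]
  omega

theorem fct_pos {n : ℕ} (σ : Equiv.Perm (Fin n)) : ∀ p ∈ fullCycleType n σ, 1 ≤ p := by
  intro p hp
  unfold fullCycleType at hp
  rcases Multiset.mem_add.1 hp with h | h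
  · have := Equiv.Perm.two_le_of_mem_cycleType h; omega
  · rw [Multiset.eq_of_mem_replicate h]

theorem uu_props (s : Multiset ℕ) (h : ∀ p ∈ s, 1 ≤ p) :
    (s.map uu).sum ≤ s.sum ∧ (s.map uu).sum % 2 = s.sum % 2 ∧ (s.sum ≠ 0 → (s.map uu).sum ≠ 0) := by
  induction s using Multiset.induction_on with
  | empty => simp
  | cons a s ih =>
    have h1 := ih (fun p hp => h p (Multiset.mem_cons_of_mem hp))
    have h2 := h a (Multiset.mem_cons_self a s)
    simp only [Multiset.map_cons, Multiset.sum_cons]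
    have h3 : uu a = if a % 2 = 1 then 1 else 2 := rfl
    split_ifs at h3 <;> omega

theorem prod_wk (x : ℚ) (s : Multiset ℕ) :
    (s.map (wk x)).prod = if (∀ p ∈ s, ¬ (4 ∣ p)) then x ^ (s.map uu).sum else 0 := by
  induction s using Multiset.induction_on with
  | empty => simp
  | cons a s ih =>
    simp only [Multiset.map_cons, Multiset.prod_cons, Multiset.sum_cons, Multiset.forall_mem_cons, ih, pow_add]
    have hw : wk x a = if 4 ∣ a then 0 else x ^ uu a := by
      unfold wk uu
      by_cases h4 : 4 ∣ a
      · rw [if_pos h4, if_neg (by omega), if_neg (by omega)]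
      · rw [if_neg h4]
        by_cases h2 : a % 2 = 1
        · rw [if_pos h2, if_pos h2, pow_one]
        · rw [if_neg h2, if_neg h2, if_pos (by omega)]
    rw [hw]
    by_cases h4 : 4 ∣ a
    · simp [h4]
    · rw [if_neg h4]
      by_cases hs : ∀ p ∈ s, ¬ (4 ∣ p)
      · rw [if_pos hs, if_pos ⟨h4, hs⟩]
      · rw [if_neg hs, if_neg (fun q => hs q.2), mul_zero]

theorem sum_cnk (n : ℕ) (hn : 1 ≤ n) (x : ℚ) :
    ∑ σ : Equiv.Perm (Fin n), ((fullCycleType n σ).map (wk x)).prod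
      = ∑ k ∈ (Finset.Icc 1 n).filter (fun k => k % 2 = n % 2), (cnk n k : ℚ) * x ^ k := by
  simp_rw [prod_wk, ← numCycles_sq]
  rw [← Finset.sum_filter]
  rw [← Finset.sum_fiberwise_of_maps_to (t := (Finset.Icc 1 n).filter (fun k => k % 2 = n % 2)) (g := fun σ => numCycles n (σ ^ 2))]
  · apply Finset.sum_congr rfl
    intro k _
    unfold cnk
    rw [Finset.filter_filter]
    rw [Finset.sum_congr rfl (g := fun _ => x ^ k)]
    · simp
    · intro σ hσ
      simp only [Finset.mem_filter] at hσ
      rw [hσ.2.2]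
  · intro σ _
    have := uu_props _ (fct_pos σ)
    rw [fct_sum, ← numCycles_sq] at this
    simp only [Finset.mem_filter, Finset.mem_Icc]
    omega

def zz (s : Multiset ℕ) : ℚ := ((s.prod * ∏ i ∈ s.toFinset, (s.count i).factorial : ℕ) : ℚ)

theorem prod_count_ext (s : Multiset ℕ) (T : Finset ℕ) (h : s.toFinset ⊆ T) :
    ∏ i ∈ s.toFinset, (s.count i).factorial = ∏ i ∈ T, (s.count i).factorial := by
  apply Finset.prod_subset h
  intro x _ hx
  rw [Multiset.mem_toFinset] at hx
  rw [Multiset.count_eq_zero_of_notMem hx]; rfl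

theorem zz_cons (a : ℕ) (s : Multiset ℕ) : zz (a ::ₘ s) = a * (s.count a + 1) * zz s := by
  unfold zz
  rw [Multiset.prod_cons]
  rw [prod_count_ext s (a ::ₘ s).toFinset (by intro x; simp; tauto)]
  have ha : a ∈ (a ::ₘ s).toFinset := by simp
  rw [← Finset.mul_prod_erase _ _ ha, ← Finset.mul_prod_erase _ _ ha, Multiset.count_cons_self, Nat.factorial_succ]
  have : ∏ x ∈ (a ::ₘ s).toFinset.erase a, (Multiset.count x (a ::ₘ s)).factorial = 
     ∏ x ∈ (a ::ₘ s).toFinset.erase a, (Multiset.count x s).factorial := by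
    apply Finset.prod_congr rfl
    intro x hx
    rw [Multiset.count_cons_of_ne (Finset.ne_of_mem_erase hx)]
  rw [this]
  push_cast; ring

theorem zz_ne (s : Multiset ℕ) (h : ∀ p ∈ s, 0 < p) : zz s ≠ 0 := by
  unfold zz
  rw [Nat.cast_ne_zero]
  apply mul_ne_zero
  · rw [Ne, Multiset.prod_eq_zero_iff]
    intro h0; exact lt_irrefl _ (h 0 h0)
  · rw [Finset.prod_ne_zero_iff]
    intro i _; exact Nat.factorial_ne_zero _

def wt (x : ℚ) (s : Multiset ℕ) : ℚ := (s.map (wk x)).prod / zz s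

def bn (x : ℚ) (n : ℕ) : ℚ := ∑ l : n.Partition, wt x l.parts

theorem bn_zero (x : ℚ) : bn x 0 = 1 := by
  unfold bn
  rw [Fintype.sum_unique]
  simp [wt, zz]

theorem bn_rec (x : ℚ) (n : ℕ) : (n : ℚ) * bn x n = ∑ i ∈ Finset.Icc 1 n, wk x i * bn x (n - i) := by
  unfold bn
  have h1 : ∀ l : n.Partition, (n : ℚ) * wt x l.parts = ∑ i ∈ Finset.Icc 1 n, (i * l.parts.count i : ℚ) * wt x l.parts := by
    intro l
    rw [← Finset.sum_mul]
    congr 1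
    have hs := l.parts_sum
    rw [Finset.sum_multiset_count] at hs
    rw [Finset.sum_subset (s₂ := Finset.Icc 1 n)] at hs
    · nth_rewrite 1 [← hs]
      push_cast
      apply Finset.sum_congr rfl
      intro i _; simp [mul_comm]
    · intro i hi
      rw [Multiset.mem_toFinset] at hi
      exact Finset.mem_Icc.2 ⟨l.parts_pos hi, Nat.Partition.le_of_mem_parts hi⟩
    · intro i _ hi
      rw [Multiset.mem_toFinset] at hi
      rw [Multiset.count_eq_zero_of_notMem hi]; simp
  rw [Finset.mul_sum, Finset.sum_congr rfl (fun l _ => h1 l), Finset.sum_comm]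
  apply Finset.sum_congr rfl
  intro i hi
  rw [Finset.mem_Icc] at hi
  have h2 : ∑ l : n.Partition, (i * l.parts.count i : ℚ) * wt x l.parts
      = ∑ l : {p : n.Partition // i ∈ p.parts}, (i * l.1.parts.count i : ℚ) * wt x l.1.parts := by
    rw [← Finset.sum_subtype (Finset.univ.filter fun p : n.Partition => i ∈ p.parts) (p := fun p : n.Partition => i ∈ p.parts)
      (by simp) (fun l => (i * l.parts.count i : ℚ) * wt x l.parts)]
    symm
    apply Finset.sum_subset (Finset.subset_univ _)
    intro l _ hl
    have hl' : i ∉ l.parts := by simpa using hl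
    rw [Multiset.count_eq_zero_of_notMem hl']; simp
  rw [h2, ← (Nat.Partition.partitionWithPartEquiv hi.1 hi.2).symm.sum_comp, Finset.mul_sum]
  apply Finset.sum_congr rfl
  intro q _
  rw [Nat.Partition.partitionWithPartEquiv_symm_apply_parts]
  unfold wt
  rw [zz_cons, Multiset.count_cons_self, Multiset.map_cons, Multiset.prod_cons]
  have hz := zz_ne q.parts (fun p hp => q.parts_pos hp)
  have hi0 : (i : ℚ) ≠ 0 := by have := hi.1; positivity
  have hc : ((q.parts.count i : ℕ) : ℚ) + 1 ≠ 0 := by positivity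
  push_cast
  field_simp

def toPart {n : ℕ} (σ : Equiv.Perm (Fin n)) : n.Partition where
  parts := fullCycleType n σ
  parts_pos := fun {p} hp => fct_pos σ p hp
  parts_sum := fct_sum σ

theorem card_type {n : ℕ} (l : n.Partition) :
    ((Finset.univ.filter fun σ : Equiv.Perm (Fin n) => toPart σ = l).card : ℚ) * zz l.parts = n.factorial := by
  set m := l.parts.filter (fun p => 2 ≤ p) with hm
  have hparts : l.parts = m + Multiset.replicate (n - m.sum) 1 := by
    have h1 : l.parts = m + l.parts.filter (fun p => ¬ 2 ≤ p) := (Multiset.filter_add_not _ _).symm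
    have h2 : l.parts.filter (fun p => ¬ 2 ≤ p) = Multiset.replicate (Multiset.card (l.parts.filter (fun p => ¬ 2 ≤ p))) 1 := by
      rw [Multiset.eq_replicate_card]
      intro p hp
      rw [Multiset.mem_filter] at hp
      have := l.parts_pos hp.1
      omega
    have h3 := l.parts_sum
    rw [h1, h2, Multiset.sum_add, Multiset.sum_replicate, smul_eq_mul, mul_one] at h3
    have e : n - m.sum = Multiset.card (l.parts.filter (fun p => ¬ 2 ≤ p)) := by omega
    rw [e, ← h2]
    exact h1
  have hle : m.sum ≤ n := by
    have := l.parts_sum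
    rw [hparts, Multiset.sum_add] at this
    omega
  have h2le : ∀ a ∈ m, 2 ≤ a := by
    intro a ha; exact (Multiset.mem_filter.1 ha).2
  have key := Equiv.Perm.card_of_cycleType_mul_eq (Fin n) m
  rw [if_pos (by simpa using ⟨hle, h2le⟩)] at key
  simp only [Fintype.card_fin] at key
  rw [← key]
  have hfil : (Finset.univ.filter fun σ : Equiv.Perm (Fin n) => toPart σ = l) = 
      (Finset.univ.filter fun σ : Equiv.Perm (Fin n) => σ.cycleType = m) := by
    ext σ
    simp only [Finset.mem_filter, Finset.mem_univ, true_and, Nat.Partition.ext_iff]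
    have hp : (toPart σ).parts = σ.cycleType + Multiset.replicate (n - σ.support.card) 1 := rfl
    constructor
    · intro h
      rw [hm, ← h, hp, Multiset.filter_add, Multiset.filter_eq_self.2 (fun p hp => Equiv.Perm.two_le_of_mem_cycleType hp),
        Multiset.filter_eq_nil.2, add_zero]
      intro a ha
      rw [Multiset.eq_of_mem_replicate ha]; omega
    · intro h
      rw [hp, hparts, ← Equiv.Perm.sum_cycleType, h]
  have hz : zz l.parts = (((n - m.sum).factorial * m.prod * ∏ i ∈ m.toFinset, (m.count i).factorial : ℕ) : ℚ) := by
    unfold zz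
    congr 1
    have hm1 : 1 ∉ m := fun h => by have := h2le 1 h; omega
    have hp : l.parts.prod = m.prod := by rw [hparts]; simp
    rw [hp, prod_count_ext l.parts (insert 1 m.toFinset)]
    · rw [Finset.prod_insert (by simpa using hm1)]
      have c1 : l.parts.count 1 = n - m.sum := by
        rw [hparts, Multiset.count_add, Multiset.count_eq_zero_of_notMem hm1]; simp
      rw [c1]
      have : ∏ x ∈ m.toFinset, (l.parts.count x).factorial = ∏ x ∈ m.toFinset, (m.count x).factorial := by
        apply Finset.prod_congr rfl
        intro x hx
        have hx1 : x ≠ 1 := by rintro rfl; exact hm1 (Multiset.mem_toFinset.1 hx)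
        rw [hparts, Multiset.count_add, Multiset.count_replicate, if_neg (Ne.symm hx1), add_zero]
      rw [this]; ring
    · intro x hx
      rw [hparts] at hx
      simp only [Multiset.mem_toFinset, Multiset.mem_add, Finset.mem_insert] at hx ⊢
      rcases hx with h | h
      · exact Or.inr h
      · exact Or.inl (Multiset.eq_of_mem_replicate h)
  rw [hfil, hz]
  push_cast
  congr!

theorem sum_perm (x : ℚ) (n : ℕ) :
    ∑ σ : Equiv.Perm (Fin n), ((fullCycleType n σ).map (wk x)).prod = n.factorial * bn x n := by
  unfold bn
  rw [← Finset.sum_fiberwise (g := fun σ : Equiv.Perm (Fin n) => toPart σ), Finset.mul_sum]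
  apply Finset.sum_congr rfl
  intro l _
  rw [Finset.sum_congr rfl (g := fun _ => (l.parts.map (wk x)).prod)]
  · rw [Finset.sum_const, nsmul_eq_mul, ← card_type l]
    unfold wt
    have hz := zz_ne l.parts (fun p hp => l.parts_pos hp)
    field_simp
  · intro σ hσ
    rw [← (Finset.mem_filter.1 hσ).2]; rfl

theorem Dn_bn (m n : ℕ) : Dn m n = bn ((2 * m : ℕ) : ℚ) n := by
  induction n using Nat.strong_induction_on with
  | _ n ih =>
  rcases Nat.eq_zero_or_pos n with rfl | hn
  · rw [Dn_zero, bn_zero]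
  · have h0 : (n : ℚ) ≠ 0 := by positivity
    apply mul_left_cancel₀ h0
    rw [Dn_rec, bn_rec, Finset.Nat.sum_antidiagonal_eq_sum_range_succ (fun i j => wk ((2 * m : ℕ) : ℚ) i * Dn m j)]
    rw [Finset.sum_range_succ', show wk ((2 * m : ℕ) : ℚ) 0 = 0 by simp [wk], zero_mul, add_zero]
    refine Finset.sum_bij (fun i _ => i + 1) ?_ ?_ ?_ ?_
    · intro i hi; simp at hi ⊢; omega
    · intro i _ j _ h; simpa using h
    · intro i hi
      rw [Finset.mem_Icc] at hi
      exact ⟨i - 1, by simp; omega, by omega⟩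
    · intro i hi
      rw [ih (n - (i+1)) (by omega)]

theorem main_count (m n : ℕ) (hn : 1 ≤ n) :
    (n.factorial : ℚ) * ∑ π ∈ invSet n, (NN n (2 * m) π : ℚ)
      = ∑ k ∈ (Finset.Icc 1 n).filter (fun k => k % 2 = n % 2), (cnk n k : ℚ) * ∑ π : Equiv.Perm (Fin k), (NN k (2 * m) π : ℚ) := by
  have h1 := Dn_eq m n
  push_cast at h1
  rw [← h1, Dn_bn, ← sum_perm, sum_cnk n hn]
  apply Finset.sum_congr rfl
  intro k _
  have := sum_NN k (2 * m)
  rw [← Nat.cast_sum, this]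
  push_cast; ring

theorem NN_eq' (k L : ℕ) (hk : 1 ≤ k) (π : Equiv.Perm (Fin k)) :
    NN k L π = ∑ a ∈ Finset.range L, trA (dOf k π) (k - 1) a := by
  obtain ⟨k, rfl⟩ : ∃ j, k = j + 1 := ⟨k - 1, by omega⟩
  exact NN_eq k L π

theorem pk_eq' (k : ℕ) (hk : 1 ≤ k) (π : Equiv.Perm (Fin k)) :
    pk k π = pcount (dOf k π) (k - 1) := by
  obtain ⟨k, rfl⟩ : ∃ j, k = j + 1 := ⟨k - 1, by omega⟩
  exact pk_eq k π

theorem NN_diff (k m : ℕ) (hk : 1 ≤ k) (π : Equiv.Perm (Fin k)) :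
    (NN k (2 * (m + 1)) π : ℚ) = NN k (2 * m) π + PowerSeries.coeff m (gS (dOf k π) (k - 1)) := by
  rw [NN_eq' k _ hk, NN_eq' k _ hk, show 2 * (m + 1) = 2 * m + 1 + 1 by ring,
    Finset.sum_range_succ, Finset.sum_range_succ]
  simp only [gS, PowerSeries.coeff_mk]
  push_cast; ring

theorem gS_id (n : ℕ) (hn : 1 ≤ n) :
    (n.factorial : PowerSeries ℚ) * ∑ π ∈ invSet n, gS (dOf n π) (n - 1)
      = ∑ k ∈ (Finset.Icc 1 n).filter (fun k => k % 2 = n % 2), (cnk n k : PowerSeries ℚ) *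
          ∑ π : Equiv.Perm (Fin k), gS (dOf k π) (k - 1) := by
  have nc : ∀ (a : ℕ) (f : PowerSeries ℚ) (m : ℕ),
      PowerSeries.coeff m ((a : PowerSeries ℚ) * f) = (a : ℚ) * PowerSeries.coeff m f := by
    intro a f m
    rw [← nsmul_eq_mul, map_nsmul, nsmul_eq_mul]
  ext m
  have h0 := main_count m n hn
  have h1 := main_count (m + 1) n hn
  simp_rw [NN_diff n m hn] at h1
  have h2 : ∑ k ∈ (Finset.Icc 1 n).filter (fun k => k % 2 = n % 2), (cnk n k : ℚ) *
      ∑ π : Equiv.Perm (Fin k), (NN k (2 * (m + 1)) π : ℚ)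
      = ∑ k ∈ (Finset.Icc 1 n).filter (fun k => k % 2 = n % 2), (cnk n k : ℚ) *
      ∑ π : Equiv.Perm (Fin k), (NN k (2 * m) π : ℚ) +
      ∑ k ∈ (Finset.Icc 1 n).filter (fun k => k % 2 = n % 2), (cnk n k : ℚ) *
      ∑ π : Equiv.Perm (Fin k), PowerSeries.coeff m (gS (dOf k π) (k - 1)) := by
    rw [← Finset.sum_add_distrib]
    apply Finset.sum_congr rfl
    intro k hk
    rw [Finset.mem_filter, Finset.mem_Icc] at hk
    rw [← mul_add, ← Finset.sum_add_distrib]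
    congr 1
    apply Finset.sum_congr rfl
    intro π _
    rw [NN_diff k m hk.1.1]
  rw [h2, Finset.sum_add_distrib, mul_add, h0] at h1
  have h3 := add_left_cancel h1
  rw [nc, map_sum, map_sum, h3]
  apply Finset.sum_congr rfl
  intro k _
  rw [nc, map_sum]

theorem aeval_inj (T : PowerSeries ℚ) (h0 : PowerSeries.constantCoeff T = 0) (hT : T ≠ 0)
    (p : Polynomial ℚ) (hp : Polynomial.aeval T p = 0) : p = 0 := by
  by_contra hne
  obtain ⟨q, hq, hq2⟩ := Polynomial.exists_eq_pow_rootMultiplicity_mul_and_not_dvd p hne 0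
  rw [Polynomial.C_0, sub_zero] at hq hq2
  rw [hq, map_mul, map_pow, Polynomial.aeval_X] at hp
  have h1 : Polynomial.aeval T q = 0 := by
    rcases mul_eq_zero.1 hp with h | h
    · exact absurd h (pow_ne_zero _ hT)
    · exact h
  apply hq2
  rw [Polynomial.X_dvd_iff]
  have h2 := congrArg PowerSeries.constantCoeff h1
  rw [Polynomial.aeval_def, Polynomial.hom_eval₂, h0, Polynomial.eval₂_at_zero] at h2
  simpa using h2

theorem stmt12 (n : ℕ) (hn : 1 ≤ n) :
    (n.factorial : Polynomial ℚ) * ∑ π ∈ invSet n, Polynomial.X ^ (pk n π + 1)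
      = ∑ k ∈ (Finset.Icc 1 n).filter (fun k => k % 2 = n % 2),
          (cnk n k : Polynomial ℚ) * (1 - Polynomial.X) ^ ((n - k) / 2)
            * peakP k := by
  obtain ⟨a, ha⟩ : ∃ a : PowerSeries ℚ, (1 - PowerSeries.X) * a = 1 :=
    ⟨(1 - PowerSeries.X)⁻¹, PowerSeries.mul_inv_cancel _ (by simp)⟩
  obtain ⟨b, hb⟩ : ∃ b : PowerSeries ℚ, (1 + PowerSeries.X) * b = 1 :=
    ⟨(1 + PowerSeries.X)⁻¹, PowerSeries.mul_inv_cancel _ (by simp)⟩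
  obtain ⟨v, hv'⟩ : ∃ v, v = (1 + PowerSeries.X) * a := ⟨_, rfl⟩
  obtain ⟨T, hT'⟩ : ∃ T, T = 4 * PowerSeries.X * b ^ 2 := ⟨_, rfl⟩
  have hv : (1 - PowerSeries.X) * v = 1 + PowerSeries.X := by
    rw [hv']; linear_combination (1 + PowerSeries.X) * ha
  have hb2 : (1 + PowerSeries.X) ^ 2 * b ^ 2 = 1 := by rw [← mul_pow, hb, one_pow]
  have ha2 : (1 - PowerSeries.X) ^ 2 * a ^ 2 = 1 := by rw [← mul_pow, ha, one_pow]
  have hT : (1 + PowerSeries.X) ^ 2 * T = 4 * PowerSeries.X := by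
    rw [hT']; linear_combination (4 * PowerSeries.X) * hb2
  have hvT : v ^ 2 * (1 - T) = 1 := by
    have : v ^ 2 * (1 - T) = a ^ 2 * ((1 + PowerSeries.X) ^ 2 - (1 + PowerSeries.X) ^ 2 * T) := by
      rw [hv']; ring
    rw [this, hT]
    linear_combination ha2
  have hv0 : v ≠ 0 := by
    rintro rfl
    simp at hvT
  have hT0 : T ≠ 0 := by
    rintro rfl
    have h := congrArg (PowerSeries.coeff 1) hT
    rw [mul_zero, show (4 : PowerSeries ℚ) = PowerSeries.C 4 from rfl, PowerSeries.coeff_C_mul] at h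
    simp at h
  have hTc : PowerSeries.constantCoeff T = 0 := by
    rw [hT']; simp
  obtain ⟨g, hg⟩ : ∃ g, g = gS (fun _ => True) 0 := ⟨_, rfl⟩
  have hg0 : g ≠ 0 := by
    intro h
    have h := congrArg (PowerSeries.coeff 0) h
    rw [hg] at h
    simp only [gS, PowerSeries.coeff_mk, trA] at h
    norm_num at h
  have hgS : ∀ (k : ℕ), 1 ≤ k → ∀ π : Equiv.Perm (Fin k),
      gS (dOf k π) (k - 1) = v ^ (k - 1) * T ^ pk k π * g := by
    intro k hk π
    rw [gS_main _ v T hv hT, pk_eq' k hk, hg]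
    rfl
  have key := gS_id n hn
  rw [← sub_eq_zero]
  apply aeval_inj T hTc hT0
  rw [map_sub, sub_eq_zero]
  apply mul_left_cancel₀ (mul_ne_zero (pow_ne_zero (n - 1) hv0) hg0)
  have e1 : v ^ (n - 1) * g * Polynomial.aeval T
      ((n.factorial : Polynomial ℚ) * ∑ π ∈ invSet n, Polynomial.X ^ (pk n π + 1))
      = T * ((n.factorial : PowerSeries ℚ) * ∑ π ∈ invSet n, gS (dOf n π) (n - 1)) := by
    simp only [map_mul, map_natCast, map_sum, map_pow, Polynomial.aeval_X]
    rw [Finset.sum_congr rfl (fun π _ => hgS n hn π)]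
    simp only [Finset.mul_sum]
    apply Finset.sum_congr rfl
    intro π _
    ring
  rw [e1, key, map_sum, Finset.mul_sum, Finset.mul_sum]
  apply Finset.sum_congr rfl
  intro k hk
  rw [Finset.mem_filter, Finset.mem_Icc] at hk
  rw [Finset.sum_congr rfl (fun π _ => hgS k hk.1.1 π)]
  have e2 : v ^ (k - 1) = v ^ (n - 1) * (1 - T) ^ ((n - k) / 2) := by
    rw [show n - 1 = (k - 1) + 2 * ((n - k) / 2) by omega, pow_add, pow_mul, mul_assoc, ← mul_pow, hvT,
      one_pow, mul_one]
  unfold peakP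
  simp only [map_mul, map_natCast, map_sum, map_pow, Polynomial.aeval_X, map_sub, map_one]
  rw [e2]
  simp only [Finset.mul_sum]
  apply Finset.sum_congr rfl
  intro π _
  ring

end
end
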